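/- Let Ω be a bounded C² domain, F satisfy (F1)–(F4), and b, c be continuous on Ω̄. If λ < min{λ̄, λ̲} and g is continuous on Ω̄, then there exists a viscosity solution u of G(x,u,Du,D²u) + λ|u|^α u = g(x) in Ω with the Neumann condition ⟨Du, n(x)⟩ = 0 on ∂Ω. -/

import Mathlib

/-!
The bound on `lam` provides `λ₁ > lam` with a positive supersolution `v` of the eigenvalue problem
and `λ₂ > lam` with a negative subsolution `w` (constants show that both sets of admissible values
are nonempty). By homogeneity large multiples `t v` and `t w` are a super- and a subsolution of the
problem with right-hand side `g`. These functions are only semicontinuous, and no comparison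
principle is used to pass from them to a continuous solution. Instead Perron's method is run inside
a class of functions with a prescribed Hölder modulus.

The modulus is `omg h L x y = L √|x - y| h(x) h(y)`. The weight `h = exp (K ρ)`, with `ρ` a defining
function of `Ω`, grows towards the boundary, so that the gradient of the modulus points strictly
outward at boundary points and the Neumann condition does not interfere with doubling of variables.
The family of subsolutions with this modulus lying between a Hölder subsolution and a supersolution
has a maximal element `U` (`exists_perron_max`). At a point which is not the upper end of a pair
where the modulus is attained, `U` can be bumped up within the class unless it is a supersolution
there (`no_bump`, `perron_superTest`, `perron_superConst`).

For large `L` no pair attains the modulus (`no_saturation`). Such a pair is short since `U` is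
bounded. The modulus satisfies a strict triangle inequality at short range, so the lower end of a
saturated pair is not the upper end of another one, and the supersolution property is available
near it. The theorem on sums (`theorem_on_sums`, deduced from `jensen_alexandrov` by
sup-convolution, which in turn rests on Rademacher's theorem) gives test matrices at the two ends,
and uniform ellipticity against the concavity of the square root is a contradiction
(`doubling_contra`).

The resulting statement `perron_holder` is applied twice. Applied to the equation for `-u` with
right-hand side a constant below `-|g|`, starting from `0` and below `-t w`, it produces after a
change of sign a nonpositive Hölder subsolution. Applied between this subsolution and `t v`, it
produces the solution.
-/

open Filter Set Metric
open scoped RealInnerProductSpace Topology NNReal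

noncomputable section

/-- Euclidean space `ℝ^N`. -/
abbrev EN (N : ℕ) := EuclideanSpace ℝ (Fin N)

/-- The space of `N × N` real matrices. -/
abbrev Mat (N : ℕ) := Matrix (Fin N) (Fin N) ℝ

/-- Operator (spectral) norm of a matrix, viewed as a linear map on Euclidean space. -/
noncomputable def matNorm {N : ℕ} (X : Mat N) : ℝ :=
  ‖LinearMap.toContinuousLinearMap (Matrix.toEuclideanLin X)‖

/-- The Hessian matrix of `φ : ℝ^N → ℝ` at `x`. -/
noncomputable def hess {N : ℕ} (φ : EN N → ℝ) (x : EN N) : Mat N :=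
  Matrix.of fun i j =>
    iteratedFDeriv ℝ 2 φ x ![EuclideanSpace.single i 1, EuclideanSpace.single j 1]

/-- `ρ` is a `C²` defining function for the domain `Ω` with exterior unit normal `nv`. -/
def IsC2DefiningFun {N : ℕ} (Ω : Set (EN N)) (nv : EN N → EN N) (ρ : EN N → ℝ) : Prop :=
  ContDiff ℝ 2 ρ ∧ Ω = {x | ρ x < 0} ∧ frontier Ω = {x | ρ x = 0} ∧
    ∀ x ∈ frontier Ω, gradient ρ x ≠ 0 ∧ nv x = ‖gradient ρ x‖⁻¹ • gradient ρ x

/-- `Ω` is a bounded domain of class `C²` with exterior unit normal `nv` on `∂Ω`. -/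
def IsC2Domain {N : ℕ} (Ω : Set (EN N)) (nv : EN N → EN N) : Prop :=
  IsOpen Ω ∧ IsConnected Ω ∧ Bornology.IsBounded Ω ∧ ∃ ρ : EN N → ℝ, IsC2DefiningFun Ω nv ρ

/-- `Ω` is a bounded domain of class `C¹` with exterior unit normal `nv` on `∂Ω`. -/
def IsC1Domain {N : ℕ} (Ω : Set (EN N)) (nv : EN N → EN N) : Prop :=
  IsOpen Ω ∧ IsConnected Ω ∧ Bornology.IsBounded Ω ∧
    ∃ ρ : EN N → ℝ, ContDiff ℝ 1 ρ ∧ Ω = {x | ρ x < 0} ∧ frontier Ω = {x | ρ x = 0} ∧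
      ∀ x ∈ frontier Ω, gradient ρ x ≠ 0 ∧ nv x = ‖gradient ρ x‖⁻¹ • gradient ρ x

/-- Interior sphere condition (Ω1). -/
def InteriorSphereCond {N : ℕ} (Ω : Set (EN N)) : Prop :=
  ∀ x ∈ frontier Ω, ∃ R > (0 : ℝ), ∃ y ∈ Ω, ‖x - y‖ = R ∧ Metric.ball y R ⊆ Ω

/-- (F1): homogeneity of `F`. -/
def CondF1 {N : ℕ} (Ω : Set (EN N)) (α : ℝ) (F : EN N → EN N → Mat N → ℝ) : Prop :=
  ∀ x ∈ closure Ω, ∀ t : ℝ, t ≠ 0 → ∀ μ : ℝ, 0 ≤ μ → ∀ p : EN N, p ≠ 0 → ∀ X : Mat N,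
    X.IsSymm → F x (t • p) (μ • X) = |t| ^ α * μ * F x p X

/-- (F2): uniform ellipticity of `F` with ellipticity constants `0 < a ≤ A`. -/
def CondF2 {N : ℕ} (Ω : Set (EN N)) (α a A : ℝ) (F : EN N → EN N → Mat N → ℝ) : Prop :=
  0 < a ∧ a ≤ A ∧ ∀ x ∈ closure Ω, ∀ p : EN N, p ≠ 0 → ∀ M P : Mat N, M.IsSymm →
    P.PosSemidef →
      a * ‖p‖ ^ α * P.trace ≤ F x p (M + P) - F x p M ∧
      F x p (M + P) - F x p M ≤ A * ‖p‖ ^ α * P.trace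

/-- (F3): Hölder continuity of `F` in the `x` variable. -/
def CondF3 {N : ℕ} (Ω : Set (EN N)) (α C₁ θ : ℝ) (F : EN N → EN N → Mat N → ℝ) : Prop :=
  0 < C₁ ∧ θ ∈ Set.Ioc (1/2 : ℝ) 1 ∧ ∀ x ∈ closure Ω, ∀ y ∈ closure Ω, ∀ p : EN N, p ≠ 0 →
    ∀ X : Mat N, X.IsSymm → |F x p X - F y p X| ≤ C₁ * ‖x - y‖ ^ θ * ‖p‖ ^ α * matNorm X

/-- (F4): Hölder continuity of `F` in the gradient variable. -/
def CondF4 {N : ℕ} (Ω : Set (EN N)) (α C₂ ν : ℝ) (F : EN N → EN N → Mat N → ℝ) : Prop :=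
  0 < C₂ ∧ ν ∈ Set.Ioc (1/2 : ℝ) 1 ∧ ∀ x ∈ closure Ω, ∀ p : EN N, p ≠ 0 → ∀ q : EN N,
    ‖q‖ ≤ ‖p‖ / 2 → ∀ X : Mat N, X.IsSymm →
      |F x (p + q) X - F x p X| ≤ C₂ * ‖p‖ ^ (α - ν) * ‖q‖ ^ ν * matNorm X

/-- The Neumann boundary operator `B(x,r,p) = ⟨p, n(x)⟩`. -/
def BNeu {N : ℕ} (nv : EN N → EN N) : EN N → ℝ → EN N → ℝ := fun x _ p => ⟪p, nv x⟫

/-- Viscosity subsolution of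
`F(x,Du,D²u) + b(x)·Du |Du|^α + c₀(x, u) = g(x)` in `Ω`, `B(x,u,Du) = 0` on `∂Ω`. -/
def IsSubSol {N : ℕ} (Ω : Set (EN N)) (F : EN N → EN N → Mat N → ℝ) (b : EN N → EN N)
    (α : ℝ) (c₀ : EN N → ℝ → ℝ) (g : EN N → ℝ) (B : EN N → ℝ → EN N → ℝ)
    (u : EN N → ℝ) : Prop :=
  (∀ x₀ ∈ Ω, ∀ φ : EN N → ℝ, ContDiff ℝ 2 φ →
      IsLocalMaxOn (fun x => u x - φ x) (closure Ω) x₀ → gradient φ x₀ ≠ 0 →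
      g x₀ ≤ F x₀ (gradient φ x₀) (hess φ x₀)
        + ⟪b x₀, gradient φ x₀⟫ * ‖gradient φ x₀‖ ^ α + c₀ x₀ (u x₀)) ∧
  (∀ x₀ ∈ Ω, ∀ k : ℝ, (∀ᶠ x in nhdsWithin x₀ (closure Ω), u x = k) → g x₀ ≤ c₀ x₀ k) ∧
  (∀ x₀ ∈ frontier Ω, ∀ φ : EN N → ℝ, ContDiff ℝ 2 φ →
      IsLocalMaxOn (fun x => u x - φ x) (closure Ω) x₀ → gradient φ x₀ ≠ 0 →
      min (g x₀ - (F x₀ (gradient φ x₀) (hess φ x₀)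
          + ⟪b x₀, gradient φ x₀⟫ * ‖gradient φ x₀‖ ^ α + c₀ x₀ (u x₀)))
        (B x₀ (u x₀) (gradient φ x₀)) ≤ 0) ∧
  (∀ x₀ ∈ frontier Ω, ∀ k : ℝ, (∀ᶠ x in nhdsWithin x₀ (closure Ω), u x = k) →
      min (g x₀ - c₀ x₀ k) (B x₀ k 0) ≤ 0)

/-- Viscosity supersolution of
`F(x,Dv,D²v) + b(x)·Dv |Dv|^α + c₀(x, v) = g(x)` in `Ω`, `B(x,v,Dv) = 0` on `∂Ω`. -/
def IsSuperSol {N : ℕ} (Ω : Set (EN N)) (F : EN N → EN N → Mat N → ℝ) (b : EN N → EN N)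
    (α : ℝ) (c₀ : EN N → ℝ → ℝ) (g : EN N → ℝ) (B : EN N → ℝ → EN N → ℝ)
    (v : EN N → ℝ) : Prop :=
  (∀ x₀ ∈ Ω, ∀ φ : EN N → ℝ, ContDiff ℝ 2 φ →
      IsLocalMinOn (fun x => v x - φ x) (closure Ω) x₀ → gradient φ x₀ ≠ 0 →
      F x₀ (gradient φ x₀) (hess φ x₀)
        + ⟪b x₀, gradient φ x₀⟫ * ‖gradient φ x₀‖ ^ α + c₀ x₀ (v x₀) ≤ g x₀) ∧
  (∀ x₀ ∈ Ω, ∀ k : ℝ, (∀ᶠ x in nhdsWithin x₀ (closure Ω), v x = k) → c₀ x₀ k ≤ g x₀) ∧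
  (∀ x₀ ∈ frontier Ω, ∀ φ : EN N → ℝ, ContDiff ℝ 2 φ →
      IsLocalMinOn (fun x => v x - φ x) (closure Ω) x₀ → gradient φ x₀ ≠ 0 →
      0 ≤ max (g x₀ - (F x₀ (gradient φ x₀) (hess φ x₀)
          + ⟪b x₀, gradient φ x₀⟫ * ‖gradient φ x₀‖ ^ α + c₀ x₀ (v x₀)))
        (B x₀ (v x₀) (gradient φ x₀))) ∧
  (∀ x₀ ∈ frontier Ω, ∀ k : ℝ, (∀ᶠ x in nhdsWithin x₀ (closure Ω), v x = k) →
      0 ≤ max (g x₀ - c₀ x₀ k) (B x₀ k 0))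

/-- The admissible set for the principal eigenvalue `λ̄`:
all `λ` such that there is a bounded positive supersolution of
`G(x,v,Dv,D²v) + λ v^{α+1} ≤ 0` in `Ω`, `⟨Dv, n⟩ ≥ 0` on `∂Ω`. -/
def lamBarSet {N : ℕ} (Ω : Set (EN N)) (nv : EN N → EN N) (F : EN N → EN N → Mat N → ℝ)
    (b : EN N → EN N) (c : EN N → ℝ) (α : ℝ) : Set ℝ :=
  {lam | ∃ v : EN N → ℝ, LowerSemicontinuousOn v (closure Ω) ∧
    (∀ x ∈ closure Ω, 0 < v x) ∧ (∃ M, ∀ x ∈ closure Ω, v x ≤ M) ∧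
    IsSuperSol Ω F b α (fun x r => (c x + lam) * |r| ^ α * r) (fun _ => 0) (BNeu nv) v}

/-- The admissible set for the principal eigenvalue `λ̲`:
all `λ` such that there is a bounded negative subsolution of
`G(x,u,Du,D²u) + λ |u|^α u ≥ 0` in `Ω`, `⟨Du, n⟩ ≤ 0` on `∂Ω`. -/
def lamLowSet {N : ℕ} (Ω : Set (EN N)) (nv : EN N → EN N) (F : EN N → EN N → Mat N → ℝ)
    (b : EN N → EN N) (c : EN N → ℝ) (α : ℝ) : Set ℝ :=
  {lam | ∃ u : EN N → ℝ, UpperSemicontinuousOn u (closure Ω) ∧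
    (∀ x ∈ closure Ω, u x < 0) ∧ (∃ M, ∀ x ∈ closure Ω, M ≤ u x) ∧
    IsSubSol Ω F b α (fun x r => (c x + lam) * |r| ^ α * r) (fun _ => 0) (BNeu nv) u}


/-! ### Alexandrov points of semiconvex functions -/

/-- If increments of `θ` are bounded by the square of the step, then `θ` cannot increase: add up
`n` steps of length `1 / n` and let `n → ∞`. -/
lemma le_of_quadratic_increment (θ : ℝ → ℝ) (C : ℝ)
    (h : ∀ a b : ℝ, 0 ≤ a → a ≤ b → b ≤ 1 → θ b - θ a ≤ C * (b - a) ^ 2) : θ 1 ≤ θ 0 := by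
  have key : ∀ n : ℕ, 0 < n → θ 1 - θ 0 ≤ C / n := by
    intro n hn
    have hn' : (0 : ℝ) < n := by exact_mod_cast hn
    have hk : ∀ k : ℕ, k ≤ n → θ (k / n) - θ 0 ≤ k * (C / n ^ 2) := by
      intro k
      induction k with
      | zero => intro _; simp
      | succ k ih =>
        intro hk
        have h1 := ih (by omega)
        have hk1 : ((k + 1 : ℕ) : ℝ) ≤ n := by exact_mod_cast hk
        have h2 := h (k / n) ((k + 1 : ℕ) / n) (by positivity)
          (by push_cast; gcongr; linarith) (by rw [div_le_one hn']; exact hk1)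
        have h3 : C * (((k + 1 : ℕ) : ℝ) / n - k / n) ^ 2 = C / n ^ 2 := by
          push_cast; field_simp; ring
        rw [h3] at h2
        push_cast at h2 ⊢
        linarith
    have := hk n le_rfl
    rw [div_self hn'.ne'] at this
    calc _ ≤ _ := this
      _ = C / n := by field_simp
  have hlim : Tendsto (fun n : ℕ => C / (n : ℝ)) atTop (𝓝 0) := tendsto_const_div_atTop_nhds_zero_nat C
  have := ge_of_tendsto hlim (Filter.eventually_atTop.2 ⟨1, fun n hn => key n hn⟩)
  linarith

section Alexandrov
variable {V : Type*} [NormedAddCommGroup V] [InnerProductSpace ℝ V]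

lemma eq_zero_of_inner_le_sq {w : V} {L : ℝ} (hL : 0 ≤ L) (h : ∀ k : V, ⟪w, k⟫ ≤ L * ‖k‖ ^ 2) :
    w = 0 := by
  by_contra hw
  have hpos : 0 < ‖w‖ ^ 2 := by positivity
  have := h ((1 / (L + 1)) • w)
  rw [inner_smul_right, real_inner_self_eq_norm_sq, norm_smul, mul_pow, Real.norm_eq_abs,
    sq_abs] at this
  have h1 : 0 < L + 1 := by linarith
  have h2 : 1 / (L + 1) * ‖w‖ ^ 2 * (L + 1) ^ 2 ≤ L * ((1 / (L + 1)) ^ 2 * ‖w‖ ^ 2) * (L + 1) ^ 2 := by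
    gcongr
  field_simp at h2
  nlinarith

lemma norm_le_of_inner_le_sq {w : V} {L t : ℝ} (ht : 0 < t)
    (h : ∀ k : V, ⟪w, k⟫ ≤ L * (t ^ 2 + ‖k‖ ^ 2)) : ‖w‖ ≤ 2 * L * t := by
  have hL : 0 ≤ L := by
    have := h 0
    simp at this
    by_contra hc
    nlinarith [sq_pos_of_pos ht]
  by_cases hw : w = 0
  · subst hw; simp; positivity
  have hpos : 0 < ‖w‖ := by positivity
  have := h ((t / ‖w‖) • w)
  rw [inner_smul_right, real_inner_self_eq_norm_sq, norm_smul, Real.norm_eq_abs,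
    abs_of_pos (by positivity)] at this
  have e1 : t / ‖w‖ * ‖w‖ = t := by field_simp
  have e2 : t / ‖w‖ * ‖w‖ ^ 2 = t * ‖w‖ := by field_simp
  rw [e1, e2] at this
  have : t * ‖w‖ ≤ t * (2 * L * t) := by nlinarith
  exact le_of_mul_le_mul_left this ht

/-- If the subgradient selection `s` of a semiconvex function `f` has a first-order expansion at
`z` with value `p` and derivative `B`, then `f` has a second-order expansion at `z` with gradient
`p` and Hessian `B`. -/
lemma second_order_of_subgradient {f : V → ℝ} {s : V → V} {Λ : ℝ}
    (hs : ∀ ζ ζ', f ζ + ⟪s ζ, ζ' - ζ⟫ - Λ * ‖ζ' - ζ‖ ^ 2 ≤ f ζ') {z p : V} {B : V →L[ℝ] V}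
    (hB : (fun h => s (z + h) - p - B h) =o[𝓝 0] (fun h : V => h)) :
    (fun h => f (z + h) - f z - ⟪p, h⟫ - 1 / 2 * ⟪B h, h⟫) =o[𝓝 0] (fun h : V => ‖h‖ ^ 2) := by
  rw [Asymptotics.isLittleO_iff] at hB ⊢
  intro ε hε
  obtain ⟨r, hr, hball⟩ := Metric.eventually_nhds_iff.1 (hB hε)
  refine Metric.eventually_nhds_iff.2 ⟨r, hr, fun {h} hh => ?_⟩
  rw [dist_zero_right] at hh
  have hnn : 0 ≤ ‖h‖ := norm_nonneg h
  -- the subgradient along the segment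
  have hseg : ∀ t : ℝ, 0 ≤ t → t ≤ 1 →
      |⟪s (z + t • h), h⟫ - ⟪p, h⟫ - t * ⟪B h, h⟫| ≤ ε * t * ‖h‖ ^ 2 := by
    intro t ht0 ht1
    have h1 : ‖t • h‖ < r := by
      rw [norm_smul, Real.norm_eq_abs, abs_of_nonneg ht0]; nlinarith
    have h2 := hball (y := t • h) (by rwa [dist_zero_right])
    have h3 : ⟪s (z + t • h), h⟫ - ⟪p, h⟫ - t * ⟪B h, h⟫ = ⟪s (z + t • h) - p - B (t • h), h⟫ := by
      rw [inner_sub_left, inner_sub_left, map_smul, inner_smul_left]; simp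
    rw [h3]
    calc _ ≤ ‖s (z + t • h) - p - B (t • h)‖ * ‖h‖ := abs_real_inner_le_norm _ _
      _ ≤ (ε * ‖t • h‖) * ‖h‖ := by gcongr
      _ = _ := by rw [norm_smul, Real.norm_eq_abs, abs_of_nonneg ht0]; ring
  have hinc : ∀ a b : ℝ, f (z + a • h) + (b - a) * ⟪s (z + a • h), h⟫ - Λ * (b - a) ^ 2 * ‖h‖ ^ 2
      ≤ f (z + b • h) := by
    intro a b
    have := hs (z + a • h) (z + b • h)
    have e : z + b • h - (z + a • h) = (b - a) • h := by rw [sub_smul]; abel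
    rw [e, inner_smul_right, norm_smul, mul_pow, Real.norm_eq_abs, sq_abs] at this
    linarith
  have hlow := le_of_quadratic_increment
    (fun t => -(f (z + t • h) - t * ⟪p, h⟫ - t ^ 2 / 2 * ⟪B h, h⟫ + ε * t * ‖h‖ ^ 2))
    (1 / 2 * |⟪B h, h⟫| + Λ * ‖h‖ ^ 2) (by
      intro a b ha hab hb
      have h1 := hinc a b
      have h2 := (abs_le.1 (hseg a ha (by linarith))).1
      have h3 := mul_le_mul_of_nonneg_left h2 (sub_nonneg.2 hab)
      have h4 : (b - a) ^ 2 * ⟪B h, h⟫ ≤ (b - a) ^ 2 * |⟪B h, h⟫| :=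
        mul_le_mul_of_nonneg_left (le_abs_self _) (sq_nonneg _)
      have h5 : 0 ≤ (b - a) * (1 - a) * (ε * ‖h‖ ^ 2) := by
        have : 0 ≤ b - a := by linarith
        have : 0 ≤ 1 - a := by linarith
        positivity
      nlinarith)
  have hup := le_of_quadratic_increment
    (fun t => f (z + t • h) - t * ⟪p, h⟫ - t ^ 2 / 2 * ⟪B h, h⟫ - ε * t * ‖h‖ ^ 2)
    (1 / 2 * |⟪B h, h⟫| + Λ * ‖h‖ ^ 2) (by
      intro a b ha hab hb
      have h1 := hinc b a
      have h2 := (abs_le.1 (hseg b (by linarith) hb)).2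
      have h3 := mul_le_mul_of_nonneg_left h2 (sub_nonneg.2 hab)
      have h4 : (b - a) ^ 2 * ⟪B h, h⟫ ≤ (b - a) ^ 2 * |⟪B h, h⟫| :=
        mul_le_mul_of_nonneg_left (le_abs_self _) (sq_nonneg _)
      have h5 : 0 ≤ (b - a) * (1 - b) * (ε * ‖h‖ ^ 2) := by
        have : 0 ≤ b - a := by linarith
        have : 0 ≤ 1 - b := by linarith
        positivity
      nlinarith)
  simp only [one_smul, zero_smul, add_zero] at hlow hup
  rw [Real.norm_eq_abs, Real.norm_eq_abs, abs_of_nonneg (sq_nonneg ‖h‖), abs_le]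
  constructor <;> nlinarith

end Alexandrov

section Alexandrov
variable {V : Type*} [NormedAddCommGroup V] [InnerProductSpace ℝ V]

open MeasureTheory Measure in
/-- If the image of `Y ⊆ D` under a Lipschitz map covers a ball, then `Y` is not a null set; by
Rademacher's theorem the Lipschitz map `J` on `D` is then differentiable within `D` at some point
of `Y`. -/
lemma exists_differentiableWithinAt_of_surj [FiniteDimensional ℝ V] {J : V → V} {D Y : Set V} {K : ℝ≥0} {δ : ℝ} (hδ : 0 < δ)
    (hJ : LipschitzOnWith 1 J D) (hY : Y ⊆ D) {Ψ : V → V} (hΨ : LipschitzOnWith K Ψ D)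
    (hsurj : ball (0 : V) δ ⊆ Ψ '' Y) :
    ∃ y ∈ Y, DifferentiableWithinAt ℝ J D y := by
  borelize V
  let μ : Measure V := μH[Module.finrank ℝ V]
  have hae := hJ.ae_differentiableWithinAt_of_mem (μ := μ)
  by_contra hcon
  push Not at hcon
  have hY0 : μ Y = 0 := by
    refine measure_mono_null (fun y hy => ?_) (mem_ae_iff.1 hae)
    intro hmem
    exact hcon y hy (hmem (hY hy))
  have h1 := (hΨ.mono hY).hausdorffMeasure_image_le (d := Module.finrank ℝ V) (by positivity)
  have h2 : μ (Ψ '' Y) = 0 := by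
    refine le_antisymm (h1.trans ?_) zero_le
    change _ * μ Y ≤ 0
    rw [hY0, mul_zero]
  have h3 : μ (ball (0 : V) δ) = 0 := measure_mono_null hsurj h2
  exact (measure_ball_pos μ 0 hδ).ne' h3

/-- Where an affine function touches the semiconvex function `f` from above, the subgradient is
the slope of the affine function. -/
lemma contact_slope {f : V → ℝ} {s : V → V} {Λ : ℝ} (hΛ : 0 ≤ Λ)
    (hs : ∀ ζ ζ', f ζ + ⟪s ζ, ζ' - ζ⟫ - Λ * ‖ζ' - ζ‖ ^ 2 ≤ f ζ') {z p : V}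
    (hp : ∀ ζ, f ζ ≤ f z + ⟪p, ζ - z⟫) : s z = p := by
  refine sub_eq_zero.1 (eq_zero_of_inner_le_sq hΛ fun k => ?_)
  have h1 := hs z (z + k)
  have h2 := hp (z + k)
  rw [add_sub_cancel_left] at h1 h2
  rw [inner_sub_left]
  linarith

/-- At a contact point the subgradient selection is Lipschitz relative to that point. -/
lemma contact_slope_lip {f : V → ℝ} {s : V → V} {Λ : ℝ} (hΛ : 0 ≤ Λ)
    (hs : ∀ ζ ζ', f ζ + ⟪s ζ, ζ' - ζ⟫ - Λ * ‖ζ' - ζ‖ ^ 2 ≤ f ζ') {z p : V}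
    (hp : ∀ ζ, f ζ ≤ f z + ⟪p, ζ - z⟫) (h : V) : ‖s (z + h) - s z‖ ≤ 2 * Λ * ‖h‖ := by
  have hsz := contact_slope hΛ hs hp
  by_cases hh : h = 0
  · subst hh; simp
  refine norm_le_of_inner_le_sq (norm_pos_iff.2 hh) fun k => ?_
  have h1 := hs (z + h) (z + h + k)
  have h2 := hs z (z + h)
  have h3 := hp (z + h + k)
  rw [add_sub_cancel_left] at h1 h2
  have e : z + h + k - z = h + k := by abel
  rw [e, inner_add_right] at h3
  rw [hsz] at h2 ⊢
  rw [inner_sub_left]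
  linarith

/-- Every slope `p` is realised by a contact point, at distance `O(‖p‖)` from the strict maximum:
maximise `f - ⟪p, ·⟫`. -/
lemma exists_contact [FiniteDimensional ℝ V] {f : V → ℝ} (hf : Continuous f) {η : ℝ} (hη : 0 < η)
    (hmax : ∀ ζ, f ζ ≤ f 0 - η * ‖ζ‖ ^ 2) (p : V) :
    ∃ z, ‖z‖ ≤ ‖p‖ / η ∧ ∀ ζ, f ζ ≤ f z + ⟪p, ζ - z⟫ := by
  obtain ⟨z, hz, hzm⟩ := (isCompact_closedBall (0 : V) (‖p‖ / η)).exists_isMaxOn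
    ⟨0, by simp; positivity⟩ (f := fun ζ => f ζ - ⟪p, ζ⟫) (by fun_prop)
  refine ⟨z, by simpa using hz, fun ζ => ?_⟩
  rw [inner_sub_right]
  by_cases hζ : ζ ∈ closedBall (0 : V) (‖p‖ / η)
  · have := hzm hζ
    simp only [mem_ofPred_eq] at this
    linarith
  · have h0 := hzm (show (0 : V) ∈ closedBall (0 : V) (‖p‖ / η) by simp; positivity)
    simp only [mem_ofPred_eq, inner_zero_right] at h0
    have h1 := hmax ζ
    have h2 : ‖p‖ / η < ‖ζ‖ := by simpa using hζ
    rw [div_lt_iff₀ hη] at h2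
    have h3 : -(‖p‖ * ‖ζ‖) ≤ ⟪p, ζ⟫ := (abs_le.1 (abs_real_inner_le_norm p ζ)).1
    nlinarith [norm_nonneg ζ]

/-- Jensen's lemma combined with Alexandrov's theorem: near a strict (quadratic) maximum of a
semiconvex function `f` there is a point where `f` has a second-order expansion and is touched from
above by an affine function of small slope. The map `E = (1 + 2Λ) id + s`, with `s` a subgradient
selection, is expanding, so its inverse is 1-Lipschitz; by Rademacher's theorem the inverse is
differentiable at the image of some contact point, and inverting this derivative differentiates
`s` there. -/
theorem jensen_alexandrov [FiniteDimensional ℝ V] {f : V → ℝ} (hf : Continuous f) {s : V → V} {Λ η : ℝ} (hΛ : 0 ≤ Λ)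
    (hη : 0 < η) (hs : ∀ ζ ζ', f ζ + ⟪s ζ, ζ' - ζ⟫ - Λ * ‖ζ' - ζ‖ ^ 2 ≤ f ζ')
    (hmax : ∀ ζ, f ζ ≤ f 0 - η * ‖ζ‖ ^ 2) {δ : ℝ} (hδ : 0 < δ) :
    ∃ (z p : V) (B : V →L[ℝ] V), ‖z‖ < δ ∧ ‖p‖ < δ ∧ (∀ ζ, f ζ ≤ f z + ⟪p, ζ - z⟫) ∧ s z = p ∧
      (fun h => f (z + h) - f z - ⟪p, h⟫ - 1 / 2 * ⟪B h, h⟫) =o[𝓝 0] (fun h : V => ‖h‖ ^ 2) := by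
  set E : V → V := fun ζ => (1 + 2 * Λ) • ζ + s ζ with hE
  have hmono : ∀ ζ ζ' : V, 0 ≤ ⟪s ζ + (2 * Λ) • ζ - (s ζ' + (2 * Λ) • ζ'), ζ - ζ'⟫ := by
    intro ζ ζ'
    have h1 := hs ζ ζ'
    have h2 := hs ζ' ζ
    have e0 : s ζ + (2 * Λ) • ζ - (s ζ' + (2 * Λ) • ζ') = (s ζ - s ζ') + (2 * Λ) • (ζ - ζ') := by
      rw [smul_sub]; abel
    have e1 : ⟪s ζ, ζ' - ζ⟫ = - ⟪s ζ, ζ - ζ'⟫ := by rw [← inner_neg_right, neg_sub]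
    have e2 : ‖ζ' - ζ‖ = ‖ζ - ζ'‖ := norm_sub_rev _ _
    rw [e0, inner_add_left, inner_sub_left, real_inner_smul_left, real_inner_self_eq_norm_sq]
    rw [e1, e2] at h1
    linarith
  have hexp : ∀ ζ ζ' : V, ‖ζ - ζ'‖ ≤ ‖E ζ - E ζ'‖ := by
    intro ζ ζ'
    have h1 := hmono ζ ζ'
    have e0 : E ζ - E ζ' = (ζ - ζ') + (s ζ + (2 * Λ) • ζ - (s ζ' + (2 * Λ) • ζ')) := by
      simp only [hE, add_smul, one_smul]; abel
    have h2 : ‖ζ - ζ'‖ ^ 2 ≤ ⟪E ζ - E ζ', ζ - ζ'⟫ := by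
      rw [e0, inner_add_left, real_inner_self_eq_norm_sq]; linarith
    have h3 := h2.trans (real_inner_le_norm _ _)
    by_cases h0 : ‖ζ - ζ'‖ = 0
    · rw [h0]; exact norm_nonneg _
    · have : 0 < ‖ζ - ζ'‖ := lt_of_le_of_ne (norm_nonneg _) (Ne.symm h0)
      nlinarith
  have hinj : Function.Injective E := by
    intro ζ ζ' h
    have := hexp ζ ζ'
    rw [h, sub_self, norm_zero] at this
    exact sub_eq_zero.1 (norm_le_zero_iff.1 this)
  set J := Function.invFun E with hJdef
  have hJE : ∀ ζ, J (E ζ) = ζ := Function.leftInverse_invFun hinj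
  have hJlip : LipschitzOnWith 1 J (range E) := by
    refine LipschitzOnWith.of_dist_le_mul ?_
    rintro _ ⟨ζ, rfl⟩ _ ⟨ζ', rfl⟩
    rw [hJE, hJE, dist_eq_norm, dist_eq_norm]
    simpa using hexp ζ ζ'
  choose Z hZn hZc using fun p => exists_contact hf hη hmax p
  have hZs : ∀ p, s (Z p) = p := fun p => contact_slope hΛ hs (hZc p)
  set δ' := min δ (δ * η) / 2 with hδ'
  have hδ'pos : 0 < δ' := by positivity
  have hΛ1 : 0 ≤ 1 + 2 * Λ := by positivity
  obtain ⟨y, ⟨p, hp, rfl⟩, hdiff⟩ := exists_differentiableWithinAt_of_surj (D := range E)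
    (Y := (fun p => E (Z p)) '' ball (0 : V) δ') (K := 1 + Real.toNNReal (1 + 2 * Λ) * 1)
    (Ψ := fun y => y - (1 + 2 * Λ) • J y) hδ'pos hJlip
    (by rintro _ ⟨p, _, rfl⟩; exact ⟨_, rfl⟩)
    (by
      refine LipschitzOnWith.of_dist_le_mul ?_
      intro x hx y hy
      have := hJlip.dist_le_mul x hx y hy
      rw [dist_eq_norm] at this ⊢
      rw [dist_eq_norm] at this ⊢
      have e : x - (1 + 2 * Λ) • J x - (y - (1 + 2 * Λ) • J y)
          = (x - y) - (1 + 2 * Λ) • (J x - J y) := by rw [smul_sub]; abel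
      rw [e]
      calc _ ≤ ‖x - y‖ + ‖(1 + 2 * Λ) • (J x - J y)‖ := norm_sub_le _ _
        _ ≤ ‖x - y‖ + (1 + 2 * Λ) * (1 * ‖x - y‖) := by
          rw [norm_smul, Real.norm_eq_abs, abs_of_nonneg hΛ1]
          gcongr; simpa using this
        _ = _ := by push_cast; rw [Real.coe_toNNReal _ hΛ1]; ring)
    (by
      intro p hp
      refine ⟨E (Z p), ⟨p, hp, rfl⟩, ?_⟩
      simp only [hJE]
      simp only [hE, hZs]; abel)
  set z := Z p with hz
  have hp' : ‖p‖ < δ' := by simpa using hp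
  have hsz : s z = p := hZs p
  have hcon := hZc p
  rw [← hz] at hcon
  set T := fderivWithin ℝ J (range E) (E z) with hT
  have hTd : HasFDerivWithinAt J T (range E) (E z) := hdiff.hasFDerivWithinAt
  have hElip : ∀ h : V, ‖E (z + h) - E z‖ ≤ (1 + 4 * Λ) * ‖h‖ := by
    intro h
    have h1 := contact_slope_lip hΛ hs hcon h
    have e : E (z + h) - E z = (1 + 2 * Λ) • h + (s (z + h) - s z) := by
      simp only [hE, smul_add]; abel
    rw [e]
    calc _ ≤ ‖(1 + 2 * Λ) • h‖ + ‖s (z + h) - s z‖ := norm_add_le _ _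
      _ ≤ (1 + 2 * Λ) * ‖h‖ + 2 * Λ * ‖h‖ := by
        rw [norm_smul, Real.norm_eq_abs, abs_of_nonneg hΛ1]; gcongr
      _ = _ := by ring
  have hEtend : Tendsto (fun h => E (z + h)) (𝓝 0) (𝓝[range E] (E z)) := by
    refine tendsto_nhdsWithin_iff.2 ⟨?_, Eventually.of_forall fun h => ⟨_, rfl⟩⟩
    rw [tendsto_iff_norm_sub_tendsto_zero]
    refine squeeze_zero (fun _ => norm_nonneg _) hElip ?_
    have : Tendsto (fun h : V => (1 + 4 * Λ) * ‖h‖) (𝓝 0) (𝓝 ((1 + 4 * Λ) * ‖(0 : V)‖)) :=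
      Continuous.tendsto (by fun_prop) 0
    simpa using this
  have hEO : (fun h => E (z + h) - E z) =O[𝓝 0] (fun h : V => h) :=
    Asymptotics.IsBigO.of_bound _ (Eventually.of_forall hElip)
  have ho : (fun h => h - T (E (z + h) - E z)) =o[𝓝 0] (fun h : V => h) := by
    have h1 := (hTd.isLittleO).comp_tendsto hEtend
    have h2 := h1.trans_isBigO hEO
    refine h2.congr_left fun h => ?_
    simp only [Function.comp, hJE, add_sub_cancel_left]
  -- surjectivity of `T`
  have hTs : Function.Surjective T := by
    have hcl : IsClosed ((T : V →ₗ[ℝ] V).range : Set V) := Submodule.closed_of_finiteDimensional _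
    intro h
    have htend : Tendsto (fun t : ℝ => T (t⁻¹ • (E (z + t • h) - E z))) (𝓝[≠] 0) (𝓝 h) := by
      have h1 : Tendsto (fun t : ℝ => t • h) (𝓝[≠] 0) (𝓝 0) := by
        have : Tendsto (fun t : ℝ => t • h) (𝓝 0) (𝓝 ((0 : ℝ) • h)) :=
          Continuous.tendsto (by fun_prop) 0
        rw [zero_smul] at this
        exact this.mono_left nhdsWithin_le_nhds
      have h2 := ho.comp_tendsto h1
      have h3 : (fun t : ℝ => t • h - T (E (z + t • h) - E z)) =o[𝓝[≠] 0] (fun t : ℝ => t) := by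
        refine h2.trans_isBigO (Asymptotics.IsBigO.of_bound ‖h‖ (Eventually.of_forall fun t => ?_))
        simp only [Function.comp, norm_smul]; rw [mul_comm]
      have h4 := (Asymptotics.isLittleO_iff.1 h3)
      rw [tendsto_iff_norm_sub_tendsto_zero, Metric.tendsto_nhds]
      intro ε hε
      have h5 := h4 (half_pos hε)
      filter_upwards [h5, self_mem_nhdsWithin] with t ht ht0
      have ht0' : t ≠ 0 := ht0
      have e : T (t⁻¹ • (E (z + t • h) - E z)) - h = -(t⁻¹ • (t • h - T (E (z + t • h) - E z))) := by
        rw [map_smul, smul_sub, smul_smul, inv_mul_cancel₀ ht0', one_smul]; abel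
      rw [e, dist_zero_right, norm_norm, norm_neg, norm_smul, norm_inv]
      have : 0 < ‖t‖ := norm_pos_iff.2 ht0'
      calc _ ≤ ‖t‖⁻¹ * (ε / 2 * ‖t‖) := by gcongr
        _ = ε / 2 := by field_simp
        _ < ε := by linarith
    have := hcl.mem_of_tendsto htend (Eventually.of_forall fun t => ⟨_, rfl⟩)
    exact this
  have hTi : Function.Injective T :=
    (LinearMap.injective_iff_surjective (f := (T : V →ₗ[ℝ] V))).2 hTs
  let Te : V ≃L[ℝ] V := (LinearEquiv.ofBijective (T : V →ₗ[ℝ] V) ⟨hTi, hTs⟩).toContinuousLinearEquiv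
  have hTe : ∀ v, Te v = T v := fun v => rfl
  refine ⟨z, p, (Te.symm : V →L[ℝ] V) - (1 + 2 * Λ) • ContinuousLinearMap.id ℝ V, ?_, ?_, hcon, hsz, ?_⟩
  · calc ‖z‖ ≤ ‖p‖ / η := hZn p
      _ < δ := by
        rw [div_lt_iff₀ hη]
        have := min_le_right δ (δ * η)
        have : 0 < δ * η := by positivity
        linarith
  · have := min_le_left δ (δ * η)
    linarith
  · refine second_order_of_subgradient hs ?_
    have h1 : (fun h => Te.symm (h - T (E (z + h) - E z))) =o[𝓝 0] (fun h : V => h) :=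
      ((Te.symm : V →L[ℝ] V).isBigO_comp _ _).trans_isLittleO ho
    refine h1.neg_left.congr_left fun h => ?_
    have e : Te.symm (T (E (z + h) - E z)) = E (z + h) - E z := by
      rw [← hTe, ContinuousLinearEquiv.symm_apply_apply]
    rw [map_sub, e]
    simp only [hE, sub_apply, smul_apply,
      ContinuousLinearMap.id_apply, hsz, smul_add]
    simp only [ContinuousLinearEquiv.coe_coe]
    abel

end Alexandrov

/-! ### Sup-convolutions and the theorem on sums -/

set_option linter.unusedSectionVars false

section Sums
variable {E : Type*} [NormedAddCommGroup E] [InnerProductSpace ℝ E]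

/-- A selection `m` of maximisers in the sup-convolution `ζ ↦ max_{x ∈ K} (u x - Λ ‖ζ - x‖²)`.
The sup-convolution itself is then `ζ ↦ u (m ζ) - Λ ‖ζ - m ζ‖²`. -/
lemma exists_supConv {K : Set E} (hK : IsCompact K) (hne : K.Nonempty) {u : E → ℝ}
    (hu : ContinuousOn u K) (Λ : ℝ) :
    ∃ m : E → E, (∀ ζ, m ζ ∈ K) ∧
      ∀ ζ, ∀ x ∈ K, u x - Λ * ‖ζ - x‖ ^ 2 ≤ u (m ζ) - Λ * ‖ζ - m ζ‖ ^ 2 := by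
  have : ∀ ζ : E, ∃ y ∈ K, ∀ x ∈ K, u x - Λ * ‖ζ - x‖ ^ 2 ≤ u y - Λ * ‖ζ - y‖ ^ 2 := by
    intro ζ
    obtain ⟨y, hy, hm⟩ := hK.exists_isMaxOn hne (f := fun x => u x - Λ * ‖ζ - x‖ ^ 2)
      (hu.sub (by fun_prop))
    exact ⟨y, hy, fun x hx => hm hx⟩
  choose m h1 h2 using this
  exact ⟨m, h1, h2⟩

lemma supConv_semiconvex {K : Set E} {u : E → ℝ} {Λ : ℝ} {m : E → E} (hm : ∀ ζ, m ζ ∈ K)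
    (hmax : ∀ ζ, ∀ x ∈ K, u x - Λ * ‖ζ - x‖ ^ 2 ≤ u (m ζ) - Λ * ‖ζ - m ζ‖ ^ 2) (ζ ζ' : E) :
    (u (m ζ) - Λ * ‖ζ - m ζ‖ ^ 2) + ⟪(2 * Λ) • (m ζ - ζ), ζ' - ζ⟫ - Λ * ‖ζ' - ζ‖ ^ 2
      ≤ u (m ζ') - Λ * ‖ζ' - m ζ'‖ ^ 2 := by
  refine le_trans (le_of_eq ?_) (hmax ζ' (m ζ) (hm ζ))
  have e : ζ' - m ζ = (ζ' - ζ) + (ζ - m ζ) := by abel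
  rw [e, norm_add_sq_real, real_inner_smul_left, ← neg_sub ζ (m ζ), inner_neg_left,
    real_inner_comm]
  ring

lemma supConv_continuous {K : Set E} (hK : IsCompact K) {u : E → ℝ} {Λ : ℝ} (hΛ : 0 ≤ Λ)
    {m : E → E} (hm : ∀ ζ, m ζ ∈ K)
    (hmax : ∀ ζ, ∀ x ∈ K, u x - Λ * ‖ζ - x‖ ^ 2 ≤ u (m ζ) - Λ * ‖ζ - m ζ‖ ^ 2) :
    Continuous fun ζ => u (m ζ) - Λ * ‖ζ - m ζ‖ ^ 2 := by
  obtain ⟨R, hR⟩ := hK.isBounded.exists_norm_le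
  set U : E → ℝ := fun ζ => u (m ζ) - Λ * ‖ζ - m ζ‖ ^ 2 with hU
  have hb : ∀ ζ ζ', U ζ - U ζ' ≤ 2 * Λ * (R + ‖ζ‖) * ‖ζ' - ζ‖ + Λ * ‖ζ' - ζ‖ ^ 2 := by
    intro ζ ζ'
    have h1 := supConv_semiconvex hm hmax ζ ζ'
    have h2 : -(‖(2 * Λ) • (m ζ - ζ)‖ * ‖ζ' - ζ‖) ≤ ⟪(2 * Λ) • (m ζ - ζ), ζ' - ζ⟫ :=
      (abs_le.1 (abs_real_inner_le_norm _ _)).1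
    have h3 : ‖(2 * Λ) • (m ζ - ζ)‖ ≤ 2 * Λ * (R + ‖ζ‖) := by
      rw [norm_smul, Real.norm_eq_abs, abs_of_nonneg (by positivity)]
      gcongr
      exact (norm_sub_le _ _).trans (by gcongr; exact hR _ (hm ζ))
    have h4 := mul_le_mul_of_nonneg_right h3 (norm_nonneg (ζ' - ζ))
    simp only [hU]
    linarith
  rw [continuous_iff_continuousAt]
  intro ζ0
  have hR0 : 0 ≤ R := (norm_nonneg _).trans (hR _ (hm ζ0))
  rw [ContinuousAt, tendsto_iff_norm_sub_tendsto_zero]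
  refine squeeze_zero (g := fun ζ => 2 * Λ * (R + ‖ζ‖ + ‖ζ0‖) * ‖ζ - ζ0‖ + Λ * ‖ζ - ζ0‖ ^ 2)
    (fun _ => norm_nonneg _) (fun ζ => ?_) ?_
  · have h1 := hb ζ ζ0
    have h2 := hb ζ0 ζ
    rw [norm_sub_rev ζ0 ζ] at h1
    have h3 : 0 ≤ 2 * Λ * ‖ζ‖ * ‖ζ - ζ0‖ := by positivity
    have h4 : 0 ≤ 2 * Λ * ‖ζ0‖ * ‖ζ - ζ0‖ := by positivity
    rw [Real.norm_eq_abs, abs_le]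
    constructor <;> nlinarith
  · have : Tendsto (fun ζ => 2 * Λ * (R + ‖ζ‖ + ‖ζ0‖) * ‖ζ - ζ0‖ + Λ * ‖ζ - ζ0‖ ^ 2) (𝓝 ζ0)
      (𝓝 (2 * Λ * (R + ‖ζ0‖ + ‖ζ0‖) * ‖ζ0 - ζ0‖ + Λ * ‖ζ0 - ζ0‖ ^ 2)) :=
      Continuous.tendsto (by fun_prop) ζ0
    simpa using this

/-- An increment of `u` starting at `m z` is at most the same increment of the sup-convolution
starting at `z`. Hence second-order upper expansions of the sup-convolution at `z` pass to `u` at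
`m z`. -/
lemma supConv_touch {K : Set E} {u : E → ℝ} {Λ : ℝ} {m : E → E}
    (hmax : ∀ ζ, ∀ x ∈ K, u x - Λ * ‖ζ - x‖ ^ 2 ≤ u (m ζ) - Λ * ‖ζ - m ζ‖ ^ 2) (z : E) {x' : E}
    (hx' : x' ∈ K) :
    u x' - u (m z) ≤ (u (m (z + (x' - m z))) - Λ * ‖z + (x' - m z) - m (z + (x' - m z))‖ ^ 2)
      - (u (m z) - Λ * ‖z - m z‖ ^ 2) := by
  have h := hmax (z + (x' - m z)) x' hx'
  have e : z + (x' - m z) - x' = z - m z := by abel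
  rw [e] at h
  linarith

/-- A point selected by the sup-convolution carries a global upper paraboloid of opening `Λ`. -/
lemma supConv_global {K : Set E} {u : E → ℝ} {Λ : ℝ} {m : E → E}
    (hmax : ∀ ζ, ∀ x ∈ K, u x - Λ * ‖ζ - x‖ ^ 2 ≤ u (m ζ) - Λ * ‖ζ - m ζ‖ ^ 2) (z : E) {x' : E}
    (hx' : x' ∈ K) :
    u x' ≤ u (m z) + ⟪(2 * Λ) • (m z - z), x' - m z⟫ + Λ * ‖x' - m z‖ ^ 2 := by
  have h := hmax z x' hx'
  have e : z - x' = (z - m z) - (x' - m z) := by abel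
  rw [e, norm_sub_sq_real, ← neg_sub (m z) z, inner_neg_left, norm_neg] at h
  rw [real_inner_smul_left]
  linarith

open WithLp in
/-- Theorem on sums at the origin. The hypothesis `hyp` says that `u1 x + u2 y` lies below the
quadratic form `Q`, in the regularised form that passes to sup-convolutions. The conclusion gives
points near `0` where `u1` and `u2` have second-order upper expansions, with small gradients and
with Hessians whose direct sum is at most that of `Q` up to a small error; moreover `u2` has a
global upper paraboloid of opening `Λ` there. -/
theorem theorem_on_sums [FiniteDimensional ℝ E] {K1 K2 : Set E} (hK1 : IsCompact K1) (hK2 : IsCompact K2)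
    (h01 : (0 : E) ∈ K1) (h02 : (0 : E) ∈ K2) {u1 u2 : E → ℝ} (hu1 : ContinuousOn u1 K1)
    (hu2 : ContinuousOn u2 K2) (hu10 : u1 0 = 0) (hu20 : u2 0 = 0)
    (Q : E → E → ℝ) (C : ℝ) (hC : 0 ≤ C) {Λ : ℝ} (hΛ : 0 < Λ)
    (hQ : ∀ ζ1 ζ2 : E, ∃ d1 d2 : E, ‖d1‖ ≤ C * (‖ζ1‖ + ‖ζ2‖) ∧ ‖d2‖ ≤ C * (‖ζ1‖ + ‖ζ2‖) ∧
      ∀ h1 h2, Q (ζ1 + h1) (ζ2 + h2) = Q ζ1 ζ2 + ⟪d1, h1⟫ + ⟪d2, h2⟫ + Q h1 h2)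
    (hQ2 : ∀ (t : ℝ) h1 h2, Q (t • h1) (t • h2) = t ^ 2 * Q h1 h2)
    (hQC : ∀ h1 h2, |Q h1 h2| ≤ C * (‖h1‖ ^ 2 + ‖h2‖ ^ 2))
    (R1 R2 : E →L[ℝ] E) (hR1 : ∀ h, Q h 0 = ⟪R1 h, h⟫) (hR2 : ∀ h, Q 0 h = ⟪R2 h, h⟫)
    (hyp : ∀ x ∈ K1, ∀ y ∈ K2, ∀ ζ1 ζ2 : E,
      u1 x + u2 y ≤ Q ζ1 ζ2 + Λ * (‖ζ1 - x‖ ^ 2 + ‖ζ2 - y‖ ^ 2)) {δ : ℝ} (hδ : 0 < δ) :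
    ∃ x ∈ K1, ∃ y ∈ K2, ∃ (p1 p2 : E) (S1 S2 : E →L[ℝ] E),
      ‖x‖ < δ ∧ ‖y‖ < δ ∧ ‖p1‖ < δ ∧ ‖p2‖ < δ ∧
      (∀ᶠ x' in 𝓝[K1] x, u1 x' ≤ u1 x + ⟪p1, x' - x⟫ + 1 / 2 * ⟪S1 (x' - x), x' - x⟫) ∧
      (∀ᶠ y' in 𝓝[K2] y, u2 y' ≤ u2 y + ⟪p2, y' - y⟫ + 1 / 2 * ⟪S2 (y' - y), y' - y⟫) ∧
      (∀ y' ∈ K2, u2 y' ≤ u2 y + ⟪p2, y' - y⟫ + Λ * ‖y' - y‖ ^ 2) ∧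
      (∀ h k, 1 / 2 * ⟪S1 h, h⟫ + 1 / 2 * ⟪S2 k, k⟫ ≤ Q h k + δ * (‖h‖ ^ 2 + ‖k‖ ^ 2)) := by
  obtain ⟨m1, hm1, hmax1⟩ := exists_supConv hK1 ⟨0, h01⟩ hu1 Λ
  obtain ⟨m2, hm2, hmax2⟩ := exists_supConv hK2 ⟨0, h02⟩ hu2 Λ
  set U1 : E → ℝ := fun ζ => u1 (m1 ζ) - Λ * ‖ζ - m1 ζ‖ ^ 2 with hU1
  set U2 : E → ℝ := fun ζ => u2 (m2 ζ) - Λ * ‖ζ - m2 ζ‖ ^ 2 with hU2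
  have hc1 : Continuous U1 := supConv_continuous hK1 hΛ.le hm1 hmax1
  have hc2 : Continuous U2 := supConv_continuous hK2 hΛ.le hm2 hmax2
  choose d1 d2 hd1 hd2 hd using hQ
  set η := δ / 4 with hη
  have hηpos : 0 < η := by positivity
  have hQ00 : Q 0 0 = 0 := by
    have := hQ2 0 0 0
    simpa using this
  have hQc : Continuous fun ζ : WithLp 2 (E × E) => Q ζ.fst ζ.snd := by
    rw [continuous_iff_continuousAt]
    intro z
    have e : ∀ ζ : WithLp 2 (E × E), Q ζ.fst ζ.snd = Q z.fst z.snd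
        + ⟪d1 z.fst z.snd, ζ.fst - z.fst⟫ + ⟪d2 z.fst z.snd, ζ.snd - z.snd⟫
        + Q (ζ.fst - z.fst) (ζ.snd - z.snd) := by
      intro ζ
      rw [← hd, add_sub_cancel, add_sub_cancel]
    rw [ContinuousAt, tendsto_iff_norm_sub_tendsto_zero]
    have hlim : Tendsto (fun ζ : WithLp 2 (E × E) => ‖d1 z.fst z.snd‖ * ‖ζ.fst - z.fst‖
        + ‖d2 z.fst z.snd‖ * ‖ζ.snd - z.snd‖
        + C * (‖ζ.fst - z.fst‖ ^ 2 + ‖ζ.snd - z.snd‖ ^ 2)) (𝓝 z)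
        (𝓝 (‖d1 z.fst z.snd‖ * ‖z.fst - z.fst‖ + ‖d2 z.fst z.snd‖ * ‖z.snd - z.snd‖
        + C * (‖z.fst - z.fst‖ ^ 2 + ‖z.snd - z.snd‖ ^ 2))) :=
      Continuous.tendsto (by fun_prop) z
    refine squeeze_zero (fun _ => norm_nonneg _) (fun ζ => ?_) (by simpa using hlim)
    rw [e ζ, Real.norm_eq_abs]
    have h1 := abs_le.1 (abs_real_inner_le_norm (d1 z.fst z.snd) (ζ.fst - z.fst))
    have h2 := abs_le.1 (abs_real_inner_le_norm (d2 z.fst z.snd) (ζ.snd - z.snd))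
    have h3 := abs_le.1 (hQC (ζ.fst - z.fst) (ζ.snd - z.snd))
    rw [abs_le]
    constructor <;> linarith
  have hns : ∀ ζ : WithLp 2 (E × E), ‖ζ‖ ^ 2 = ‖ζ.fst‖ ^ 2 + ‖ζ.snd‖ ^ 2 :=
    fun ζ => WithLp.prod_norm_sq_eq_of_L2 ζ
  have hin : ∀ ζ ζ' : WithLp 2 (E × E), ⟪ζ, ζ'⟫ = ⟪ζ.fst, ζ'.fst⟫ + ⟪ζ.snd, ζ'.snd⟫ :=
    fun ζ₁ ζ₂ => WithLp.prod_inner_apply ζ₁ ζ₂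
  -- the function with a strict maximum at `0` to which the Jensen–Alexandrov lemma is applied
  set f : WithLp 2 (E × E) → ℝ := fun ζ => U1 ζ.fst + U2 ζ.snd - Q ζ.fst ζ.snd - η * ‖ζ‖ ^ 2 with hf
  have hfc : Continuous f := by
    simp only [hf]
    exact ((((hc1.comp (by fun_prop)).add (hc2.comp (by fun_prop))).sub hQc).sub (by fun_prop))
  have hU0 : 0 ≤ f 0 := by
    have h1 := hmax1 0 0 h01
    have h2 := hmax2 0 0 h02
    simp only [hu10, hu20, sub_zero, norm_zero] at h1 h2
    simp only [hf, hU1, hU2, WithLp.zero_fst, WithLp.zero_snd, hQ00, norm_zero]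
    simp only [zero_sub, norm_neg] at h1 h2 ⊢
    simp only [ne_eq, OfNat.ofNat_ne_zero, not_false_eq_true, zero_pow, mul_zero, sub_zero] at h1 h2 ⊢
    linarith
  have hfm : ∀ ζ, f ζ ≤ f 0 - η * ‖ζ‖ ^ 2 := by
    intro ζ
    have h1 := hyp (m1 ζ.fst) (hm1 _) (m2 ζ.snd) (hm2 _) ζ.fst ζ.snd
    have : f ζ ≤ - (η * ‖ζ‖ ^ 2) := by
      simp only [hf, hU1, hU2]
      linarith
    linarith
  set s : WithLp 2 (E × E) → WithLp 2 (E × E) := fun ζ => toLp 2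
    ((2 * Λ) • (m1 ζ.fst - ζ.fst) - d1 ζ.fst ζ.snd - (2 * η) • ζ.fst,
      (2 * Λ) • (m2 ζ.snd - ζ.snd) - d2 ζ.fst ζ.snd - (2 * η) • ζ.snd) with hs
  have hsc : ∀ ζ ζ', f ζ + ⟪s ζ, ζ' - ζ⟫ - (Λ + C + η) * ‖ζ' - ζ‖ ^ 2 ≤ f ζ' := by
    intro ζ ζ'
    have h1 := supConv_semiconvex hm1 hmax1 ζ.fst ζ'.fst
    have h2 := supConv_semiconvex hm2 hmax2 ζ.snd ζ'.snd
    have h3 := hd ζ.fst ζ.snd (ζ'.fst - ζ.fst) (ζ'.snd - ζ.snd)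
    rw [add_sub_cancel, add_sub_cancel] at h3
    have h4 := (abs_le.1 (hQC (ζ'.fst - ζ.fst) (ζ'.snd - ζ.snd))).2
    have h5 : ‖ζ'‖ ^ 2 = ‖ζ‖ ^ 2 + 2 * ⟪ζ, ζ' - ζ⟫ + ‖ζ' - ζ‖ ^ 2 := by
      rw [← norm_add_sq_real, add_sub_cancel]
    rw [hin] at h5 ⊢
    rw [hns (ζ' - ζ)] at h5 ⊢
    have e1 : (s ζ).fst = (2 * Λ) • (m1 ζ.fst - ζ.fst) - d1 ζ.fst ζ.snd - (2 * η) • ζ.fst := rfl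
    have e2 : (s ζ).snd = (2 * Λ) • (m2 ζ.snd - ζ.snd) - d2 ζ.fst ζ.snd - (2 * η) • ζ.snd := rfl
    rw [e1, e2]
    simp only [hf, hU1, hU2]
    rw [h5, h3]
    simp only [WithLp.sub_fst, WithLp.sub_snd, inner_sub_left, real_inner_smul_left] at h1 h2 h4 ⊢
    linarith
  set ε := δ / ((1 + 2 * C + 2 * η) * (1 + (2 * Λ)⁻¹)) with hε
  have hεpos : 0 < ε := by positivity
  obtain ⟨z, p, B, hzn, hpn, hcon, hsz, hexp⟩ :=
    jensen_alexandrov hfc (by positivity) hηpos hsc hfm hεpos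
  have hp1 : (2 * Λ) • (m1 z.fst - z.fst) = p.fst + d1 z.fst z.snd + (2 * η) • z.fst := by
    have e : p.fst = (2 * Λ) • (m1 z.fst - z.fst) - d1 z.fst z.snd - (2 * η) • z.fst := by rw [← hsz]; rfl
    rw [e]; abel
  have hp2 : (2 * Λ) • (m2 z.snd - z.snd) = p.snd + d2 z.fst z.snd + (2 * η) • z.snd := by
    have e : p.snd = (2 * Λ) • (m2 z.snd - z.snd) - d2 z.fst z.snd - (2 * η) • z.snd := by rw [← hsz]; rfl
    rw [e]; abel
  have hfst : ∀ ζ : WithLp 2 (E × E), ‖ζ.fst‖ ≤ ‖ζ‖ := by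
    intro ζ
    refine le_of_sq_le_sq ?_ (norm_nonneg _)
    rw [hns]; nlinarith [sq_nonneg ‖ζ.snd‖]
  have hsnd : ∀ ζ : WithLp 2 (E × E), ‖ζ.snd‖ ≤ ‖ζ‖ := by
    intro ζ
    refine le_of_sq_le_sq ?_ (norm_nonneg _)
    rw [hns]; nlinarith [sq_nonneg ‖ζ.fst‖]
  have hεδ : (1 + 2 * C + 2 * η) * (1 + (2 * Λ)⁻¹) * ε = δ := by
    rw [hε]; field_simp
  have hbound : ∀ q w d : E, ‖q‖ < ε → ‖w‖ < ε → ‖d‖ ≤ C * (‖z.fst‖ + ‖z.snd‖) →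
      ‖q + d + (2 * η) • w‖ < (1 + 2 * C + 2 * η) * ε := by
    intro q w d hq hw hdd
    have h1 : C * (‖z.fst‖ + ‖z.snd‖) ≤ C * (ε + ε) := by
      gcongr
      · exact (hfst z).trans hzn.le
      · exact (hsnd z).trans hzn.le
    have h2 : ‖(2 * η) • w‖ ≤ 2 * η * ε := by
      rw [norm_smul, Real.norm_eq_abs, abs_of_pos (by positivity)]; gcongr
    have h3 := norm_add_le (q + d) ((2 * η) • w)
    have h4 := norm_add_le q d
    nlinarith
  have hbp1 : ‖(2 * Λ) • (m1 z.fst - z.fst)‖ < (1 + 2 * C + 2 * η) * ε := by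
    rw [hp1]; exact hbound _ _ _ ((hfst p).trans_lt hpn) ((hfst z).trans_lt hzn) (hd1 _ _)
  have hbp2 : ‖(2 * Λ) • (m2 z.snd - z.snd)‖ < (1 + 2 * C + 2 * η) * ε := by
    rw [hp2]; exact hbound _ _ _ ((hsnd p).trans_lt hpn) ((hsnd z).trans_lt hzn) (hd2 _ _)
  have hle : (1 + 2 * C + 2 * η) * ε ≤ δ := by
    rw [← hεδ]
    have : 0 ≤ (1 + 2 * C + 2 * η) * (2 * Λ)⁻¹ * ε := by positivity
    nlinarith
  have hxb : ∀ w w' : E, ‖w‖ < ε → ‖(2 * Λ) • (w' - w)‖ < (1 + 2 * C + 2 * η) * ε → ‖w'‖ < δ := by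
    intro w w' hw hw'
    rw [norm_smul, Real.norm_eq_abs, abs_of_pos (by positivity)] at hw'
    have h1 : ‖w'‖ ≤ ‖w‖ + ‖w' - w‖ := by
      calc ‖w'‖ = ‖w + (w' - w)‖ := by rw [add_sub_cancel]
        _ ≤ _ := norm_add_le _ _
    have h2 : ‖w' - w‖ < (1 + 2 * C + 2 * η) * ε * (2 * Λ)⁻¹ := by
      rw [← div_eq_mul_inv, lt_div_iff₀ (by positivity)]; linarith
    have h3 : 0 ≤ (2 * C + 2 * η) * ε := by positivity
    nlinarith
  -- the Hessians of `U1` and `U2` are the diagonal blocks of `B`, corrected by `Q` and the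
  -- penalisation
  let i1 : E →L[ℝ] WithLp 2 (E × E) :=
    ((WithLp.prodContinuousLinearEquiv 2 ℝ E E).symm : E × E →L[ℝ] WithLp 2 (E × E)).comp
      (ContinuousLinearMap.inl ℝ E E)
  let i2 : E →L[ℝ] WithLp 2 (E × E) :=
    ((WithLp.prodContinuousLinearEquiv 2 ℝ E E).symm : E × E →L[ℝ] WithLp 2 (E × E)).comp
      (ContinuousLinearMap.inr ℝ E E)
  have hi11 : ∀ h, (i1 h).fst = h := fun h => rfl
  have hi12 : ∀ h, (i1 h).snd = 0 := fun h => rfl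
  have hi21 : ∀ h, (i2 h).fst = 0 := fun h => rfl
  have hi22 : ∀ h, (i2 h).snd = h := fun h => rfl
  let T1 : E →L[ℝ] E := (WithLp.fstL 2 ℝ E E).comp (B.comp i1) + (2 : ℝ) • R1
    + (2 * η) • ContinuousLinearMap.id ℝ E
  let T2 : E →L[ℝ] E := (WithLp.sndL 2 ℝ E E).comp (B.comp i2) + (2 : ℝ) • R2
    + (2 * η) • ContinuousLinearMap.id ℝ E
  have hT1 : ∀ h, ⟪T1 h, h⟫ = ⟪(B (i1 h)).fst, h⟫ + 2 * Q h 0 + 2 * η * ‖h‖ ^ 2 := by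
    intro h
    have : T1 h = (B (i1 h)).fst + (2 : ℝ) • R1 h + (2 * η) • h := rfl
    rw [this, inner_add_left, inner_add_left, real_inner_smul_left, real_inner_smul_left, ← hR1,
      real_inner_self_eq_norm_sq]
  have hT2 : ∀ h, ⟪T2 h, h⟫ = ⟪(B (i2 h)).snd, h⟫ + 2 * Q 0 h + 2 * η * ‖h‖ ^ 2 := by
    intro h
    have : T2 h = (B (i2 h)).snd + (2 : ℝ) • R2 h + (2 * η) • h := rfl
    rw [this, inner_add_left, inner_add_left, real_inner_smul_left, real_inner_smul_left, ← hR2,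
      real_inner_self_eq_norm_sq]
  have hfz : ∀ h k : E, f (z + (i1 h + i2 k)) - f z = (U1 (z.fst + h) - U1 z.fst)
      + (U2 (z.snd + k) - U2 z.snd) - ⟪d1 z.fst z.snd, h⟫ - ⟪d2 z.fst z.snd, k⟫ - Q h k
      - 2 * η * (⟪z.fst, h⟫ + ⟪z.snd, k⟫) - η * (‖h‖ ^ 2 + ‖k‖ ^ 2) := by
    intro h k
    have e1 : (z + (i1 h + i2 k)).fst = z.fst + h := by
      simp only [WithLp.add_fst, hi11, hi21, add_zero]
    have e2 : (z + (i1 h + i2 k)).snd = z.snd + k := by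
      simp only [WithLp.add_snd, hi12, hi22, zero_add]
    simp only [hf]
    rw [hns, e1, e2, hd, norm_add_sq_real, norm_add_sq_real, hns z]
    ring
  have hlo := (Asymptotics.isLittleO_iff.1 hexp) hηpos
  have hX1 : ∀ᶠ h in 𝓝 (0 : E), |U1 (z.fst + h) - U1 z.fst
      - ⟪(2 * Λ) • (m1 z.fst - z.fst), h⟫ - 1 / 2 * ⟪T1 h, h⟫| ≤ η * ‖h‖ ^ 2 := by
    have ht : Tendsto i1 (𝓝 0) (𝓝 0) := by simpa using i1.continuous.tendsto 0
    filter_upwards [ht.eventually hlo] with h hh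
    have e := hfz h 0
    rw [map_zero, add_zero, add_zero, sub_self] at e
    have e3 : ‖i1 h‖ ^ 2 = ‖h‖ ^ 2 := by rw [hns, hi11, hi12]; simp
    rw [hin p, hin (B (i1 h)), hi11, hi12, e, Real.norm_eq_abs, norm_pow, norm_norm, e3] at hh
    rw [hp1, hT1, inner_add_left, inner_add_left, real_inner_smul_left]
    simp only [inner_zero_right, norm_zero] at hh
    refine (le_of_eq ?_).trans hh
    congr 1; ring
  have hX2 : ∀ᶠ h in 𝓝 (0 : E), |U2 (z.snd + h) - U2 z.snd
      - ⟪(2 * Λ) • (m2 z.snd - z.snd), h⟫ - 1 / 2 * ⟪T2 h, h⟫| ≤ η * ‖h‖ ^ 2 := by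
    have ht : Tendsto i2 (𝓝 0) (𝓝 0) := by simpa using i2.continuous.tendsto 0
    filter_upwards [ht.eventually hlo] with h hh
    have e := hfz 0 h
    rw [map_zero, zero_add, add_zero, sub_self] at e
    have e3 : ‖i2 h‖ ^ 2 = ‖h‖ ^ 2 := by rw [hns, hi21, hi22]; simp
    rw [hin p, hin (B (i2 h)), hi21, hi22, e, Real.norm_eq_abs, norm_pow, norm_norm, e3] at hh
    rw [hp2, hT2, inner_add_left, inner_add_left, real_inner_smul_left]
    simp only [inner_zero_right, norm_zero] at hh
    refine (le_of_eq ?_).trans hh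
    congr 1; ring
  have htouch : ∀ (K : Set E) (u : E → ℝ) (m : E → E) (w p' : E) (T : E →L[ℝ] E),
      (∀ ζ, ∀ x ∈ K, u x - Λ * ‖ζ - x‖ ^ 2 ≤ u (m ζ) - Λ * ‖ζ - m ζ‖ ^ 2) →
      (∀ᶠ h in 𝓝 (0 : E), |(u (m (w + h)) - Λ * ‖w + h - m (w + h)‖ ^ 2)
        - (u (m w) - Λ * ‖w - m w‖ ^ 2) - ⟪p', h⟫ - 1 / 2 * ⟪T h, h⟫| ≤ η * ‖h‖ ^ 2) →
      ∀ᶠ x' in 𝓝[K] (m w), u x' ≤ u (m w) + ⟪p', x' - m w⟫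
        + 1 / 2 * ⟪(T + (2 * η) • ContinuousLinearMap.id ℝ E) (x' - m w), x' - m w⟫ := by
    intro K u m w p' T hmax hX
    have ht : Tendsto (fun x' => x' - m w) (𝓝[K] (m w)) (𝓝 0) := by
      have : Tendsto (fun x' => x' - m w) (𝓝 (m w)) (𝓝 (m w - m w)) :=
        Continuous.tendsto (by fun_prop) _
      rw [sub_self] at this
      exact this.mono_left nhdsWithin_le_nhds
    filter_upwards [ht.eventually hX, self_mem_nhdsWithin] with x' hx' hxK
    have h1 := supConv_touch hmax w hxK
    have h2 := (abs_le.1 hx').2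
    have e : (T + (2 * η) • ContinuousLinearMap.id ℝ E) (x' - m w)
      = T (x' - m w) + (2 * η) • (x' - m w) := rfl
    rw [e, inner_add_left, real_inner_smul_left, real_inner_self_eq_norm_sq]
    linarith
  refine ⟨m1 z.fst, hm1 _, m2 z.snd, hm2 _, (2 * Λ) • (m1 z.fst - z.fst),
    (2 * Λ) • (m2 z.snd - z.snd), T1 + (2 * η) • ContinuousLinearMap.id ℝ E,
    T2 + (2 * η) • ContinuousLinearMap.id ℝ E, hxb _ _ ((hfst z).trans_lt hzn) hbp1,
    hxb _ _ ((hsnd z).trans_lt hzn) hbp2, hbp1.trans_le hle, hbp2.trans_le hle,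
    htouch _ _ _ _ _ _ hmax1 hX1, htouch _ _ _ _ _ _ hmax2 hX2,
    fun y' hy' => supConv_global hmax2 _ hy', ?_⟩
  -- the contact inequality along `t (h, k)`, divided by `t ^ 2`
  intro h k
  have ht : ∀ w : E, Tendsto (fun t : ℝ => t • w) (𝓝[>] 0) (𝓝 0) := by
    intro w
    have : Tendsto (fun t : ℝ => t • w) (𝓝 0) (𝓝 ((0 : ℝ) • w)) :=
      Continuous.tendsto (by fun_prop) 0
    rw [zero_smul] at this
    exact this.mono_left nhdsWithin_le_nhds
  obtain ⟨t, ⟨ht1, ht2⟩, ht0⟩ := (((ht h).eventually hX1).and ((ht k).eventually hX2)).and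
    (self_mem_nhdsWithin) |>.exists
  have ht0 : 0 < t := ht0
  have h1 := (abs_le.1 ht1).1
  have h2 := (abs_le.1 ht2).1
  have h3 := hcon (z + (i1 (t • h) + i2 (t • k)))
  have h4 := hfz (t • h) (t • k)
  rw [add_sub_cancel_left, hin] at h3
  simp only [WithLp.add_fst, WithLp.add_snd, hi11, hi12, hi21, hi22, add_zero, zero_add] at h3
  rw [hp1] at h1
  rw [hp2] at h2
  rw [hQ2] at h4
  simp only [map_smul, inner_smul_right, real_inner_smul_left, inner_add_left, norm_smul,
    Real.norm_eq_abs, abs_of_pos ht0, mul_pow] at h1 h2 h3 h4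
  have e1 : (T1 + (2 * η) • ContinuousLinearMap.id ℝ E) h = T1 h + (2 * η) • h := rfl
  have e2 : (T2 + (2 * η) • ContinuousLinearMap.id ℝ E) k = T2 k + (2 * η) • k := rfl
  rw [e1, e2, inner_add_left, inner_add_left, real_inner_smul_left, real_inner_smul_left,
    real_inner_self_eq_norm_sq, real_inner_self_eq_norm_sq]
  have hδη : δ = 4 * η := by rw [hη]; ring
  rw [hδη]
  refine le_of_mul_le_mul_left ?_ (show 0 < t ^ 2 by positivity)
  have h6 : 0 ≤ t ^ 2 * (η * (‖h‖ ^ 2 + ‖k‖ ^ 2)) := by positivity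
  linarith
end Sums

/-! ### Quadratic forms of matrices -/

section MatrixForms
variable {N : ℕ}

/-- The quadratic form of a matrix on Euclidean space. -/
def qf (X : Mat N) (h : EN N) : ℝ := ⟪Matrix.toEuclideanLin X h, h⟫

lemma qf_add (X Y : Mat N) (h : EN N) : qf (X + Y) h = qf X h + qf Y h := by
  simp [qf, inner_add_left]

lemma qf_sub (X Y : Mat N) (h : EN N) : qf (X - Y) h = qf X h - qf Y h := by
  simp [qf, inner_sub_left]

lemma qf_neg (X : Mat N) (h : EN N) : qf (-X) h = -qf X h := by
  simp [qf]

lemma qf_smul (t : ℝ) (X : Mat N) (h : EN N) : qf (t • X) h = t * qf X h := by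
  simp [qf, real_inner_smul_left]

lemma qf_one (h : EN N) : qf (1 : Mat N) h = ‖h‖ ^ 2 := by
  have : Matrix.toEuclideanLin (1 : Mat N) h = h := by
    rw [Matrix.toLpLin_apply, Matrix.one_mulVec]
  rw [qf, this, real_inner_self_eq_norm_sq]

lemma qf_zero (h : EN N) : qf (0 : Mat N) h = 0 := by simp [qf]

lemma qf_smul_vec (X : Mat N) (t : ℝ) (h : EN N) : qf X (t • h) = t ^ 2 * qf X h := by
  simp only [qf, map_smul, real_inner_smul_left, inner_smul_right]; ring

lemma isSymm_of_qf {X : Mat N} (hX : X.IsSymm) :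
    (Matrix.toEuclideanLin X).IsSymmetric :=
  Matrix.isSymmetric_toEuclideanLin_iff.2 (by
    rw [Matrix.IsHermitian, Matrix.conjTranspose_eq_transpose_of_trivial]; exact hX)

lemma posSemidef_of_qf {X : Mat N} (hX : X.IsSymm) (h : ∀ v, 0 ≤ qf X v) : X.PosSemidef := by
  rw [← Matrix.isPositive_toEuclideanLin_iff]
  exact ⟨isSymm_of_qf hX, fun v => by simpa [qf] using h v⟩

lemma qf_nonneg {X : Mat N} (hX : X.PosSemidef) (v : EN N) : 0 ≤ qf X v := by
  have := (Matrix.isPositive_toEuclideanLin_iff.2 hX).2 v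
  simpa [qf] using this

lemma qf_single (X : Mat N) (i : Fin N) : qf X (EuclideanSpace.single i 1) = X i i := by
  rw [qf, EuclideanSpace.inner_single_right]
  simp [Matrix.toLpLin_apply, EuclideanSpace.single]

lemma trace_eq_sum_qf (X : Mat N) :
    X.trace = ∑ i, qf X (EuclideanSpace.single i 1) := by
  simp only [qf_single, Matrix.trace, Matrix.diag]

lemma trace_le_of_qf_le {X : Mat N} {t : ℝ} (h : ∀ v, qf X v ≤ t * ‖v‖ ^ 2) :
    X.trace ≤ N * t := by
  rw [trace_eq_sum_qf]
  calc _ ≤ ∑ i : Fin N, t := Finset.sum_le_sum fun i _ => by simpa using h (EuclideanSpace.single i 1)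
    _ = _ := by simp

lemma qf_eq_sum (X : Mat N) (v : EN N) : qf X v = ∑ i, ∑ j, v i * v j * X i j := by
  rw [qf, Matrix.toLpLin_apply, PiLp.inner_apply]
  simp only [Matrix.mulVec, dotProduct, RCLike.inner_apply, conj_trivial, Finset.mul_sum]
  refine Finset.sum_congr rfl fun i _ => Finset.sum_congr rfl fun j _ => ?_
  ring

lemma qf_le_trace {P : Mat N} (hP : P.PosSemidef) (v : EN N) : qf P v ≤ P.trace * ‖v‖ ^ 2 := by
  have hsymm : ∀ i j, P i j = P j i := fun i j => by
    have := hP.1.apply i j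
    simpa using this.symm
  have key : ∀ i j, 2 * (v i * v j * P i j) ≤ v j ^ 2 * P i i + v i ^ 2 * P j j := by
    intro i j
    have h := qf_nonneg hP (v j • EuclideanSpace.single i 1 - v i • EuclideanSpace.single j 1)
    have e : ∀ a b : Fin N, ⟪Matrix.toEuclideanLin P (EuclideanSpace.single a (1 : ℝ)),
        EuclideanSpace.single b (1 : ℝ)⟫ = P b a := by
      intro a b
      rw [EuclideanSpace.inner_single_right]
      simp [Matrix.toLpLin_apply, EuclideanSpace.single]
    simp only [qf, map_sub, map_smul, inner_sub_left, inner_sub_right, real_inner_smul_left,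
      inner_smul_right, e] at h
    rw [hsymm j i] at h
    nlinarith
  have h2 : 2 * qf P v ≤ 2 * (P.trace * ‖v‖ ^ 2) := by
    rw [qf_eq_sum, Finset.mul_sum]
    simp only [Finset.mul_sum]
    calc _ ≤ ∑ i, ∑ j, (v j ^ 2 * P i i + v i ^ 2 * P j j) :=
          Finset.sum_le_sum fun i _ => Finset.sum_le_sum fun j _ => key i j
      _ = _ := by
        simp only [Finset.sum_add_distrib, ← Finset.sum_mul, ← Finset.mul_sum]
        rw [EuclideanSpace.norm_sq_eq]
        simp only [Matrix.trace, Matrix.diag, Real.norm_eq_abs, sq_abs]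
        ring
  linarith

lemma matNorm_nonneg (X : Mat N) : 0 ≤ matNorm X := norm_nonneg _

lemma norm_toEuclideanLin_le (X : Mat N) (v : EN N) :
    ‖Matrix.toEuclideanLin X v‖ ≤ matNorm X * ‖v‖ :=
  (LinearMap.toContinuousLinearMap (Matrix.toEuclideanLin X)).le_opNorm v

lemma abs_qf_le (X : Mat N) (v : EN N) : |qf X v| ≤ matNorm X * ‖v‖ ^ 2 := by
  calc |qf X v| ≤ ‖Matrix.toEuclideanLin X v‖ * ‖v‖ := abs_real_inner_le_norm _ _
    _ ≤ matNorm X * ‖v‖ * ‖v‖ := by gcongr; exact norm_toEuclideanLin_le X v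
    _ = _ := by ring

lemma matNorm_le_of_qf {X : Mat N} (hX : X.IsSymm) {t : ℝ} (ht : 0 ≤ t)
    (h : ∀ v, |qf X v| ≤ t * ‖v‖ ^ 2) : matNorm X ≤ t := by
  refine ContinuousLinearMap.opNorm_le_bound _ ht fun v => ?_
  change ‖Matrix.toEuclideanLin X v‖ ≤ t * ‖v‖
  set L := Matrix.toEuclideanLin X with hL
  have hs := isSymm_of_qf hX
  by_cases h0 : L v = 0
  · rw [h0, norm_zero]; positivity
  have hv : v ≠ 0 := by rintro rfl; simp at h0
  have hvp : 0 < ‖v‖ := norm_pos_iff.2 hv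
  have hwp : 0 < ‖L v‖ := norm_pos_iff.2 h0
  -- polarization with `w` a multiple of `L v` of the same length as `v`
  set w := (‖v‖ / ‖L v‖) • L v with hw
  have hwn : ‖w‖ = ‖v‖ := by
    rw [hw, norm_smul, Real.norm_eq_abs, abs_of_pos (by positivity)]; field_simp
  have hpol : qf X (v + w) - qf X (v - w) = 4 * ⟪L v, w⟫ := by
    have e : ⟪L w, v⟫ = ⟪L v, w⟫ := by rw [real_inner_comm, ← hs v w]
    simp only [qf, map_add, map_sub, inner_add_left, inner_add_right, inner_sub_left,
      inner_sub_right, ← hL, e]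
    ring
  have h1 := (abs_le.1 (h (v + w))).2
  have h2 := (abs_le.1 (h (v - w))).1
  have h3 : ‖v + w‖ ^ 2 + ‖v - w‖ ^ 2 = 4 * ‖v‖ ^ 2 := by
    rw [norm_add_sq_real, norm_sub_sq_real, hwn]; ring
  have h4 : ⟪L v, w⟫ = ‖v‖ * ‖L v‖ := by
    rw [hw, inner_smul_right, real_inner_self_eq_norm_sq]; field_simp
  rw [h4] at hpol
  have h5 : t * (‖v + w‖ ^ 2 + ‖v - w‖ ^ 2) = t * (4 * ‖v‖ ^ 2) := by rw [h3]
  have h6 : ‖v‖ * ‖L v‖ ≤ ‖v‖ * (t * ‖v‖) := by nlinarith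
  exact le_of_mul_le_mul_left h6 hvp

/-- The symmetric matrix representing the quadratic form of an operator. -/
def symMat (S : EN N →L[ℝ] EN N) : Mat N := Matrix.of fun i j =>
  (⟪S (EuclideanSpace.single i 1), EuclideanSpace.single j 1⟫
    + ⟪S (EuclideanSpace.single j 1), EuclideanSpace.single i 1⟫) / 2

lemma symMat_isSymm (S : EN N →L[ℝ] EN N) : (symMat S).IsSymm := by
  ext i j
  simp only [symMat, Matrix.transpose_apply, Matrix.of_apply]
  ring

lemma clm_inner_eq_sum (S : EN N →L[ℝ] EN N) (v : EN N) : ⟪S v, v⟫ = ∑ i, ∑ j, v i * v j *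
    ⟪S (EuclideanSpace.single i 1), EuclideanSpace.single j 1⟫ := by
  have hv : v = ∑ i, v i • EuclideanSpace.single i (1 : ℝ) := by
    ext j
    simp [Finset.sum_apply, EuclideanSpace.single, Pi.single_apply]
  conv_lhs => rw [hv]
  rw [map_sum, sum_inner]
  refine Finset.sum_congr rfl fun i _ => ?_
  rw [inner_sum]
  refine Finset.sum_congr rfl fun j _ => ?_
  rw [map_smul, real_inner_smul_left, inner_smul_right]; ring

lemma qf_symMat (S : EN N →L[ℝ] EN N) (v : EN N) : qf (symMat S) v = ⟪S v, v⟫ := by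
  rw [qf_eq_sum, clm_inner_eq_sum]
  have h1 : ∑ i, ∑ j, v i * v j * ⟪S (EuclideanSpace.single i 1), EuclideanSpace.single j (1 : ℝ)⟫
      = ∑ i, ∑ j, v i * v j * ⟪S (EuclideanSpace.single j 1), EuclideanSpace.single i (1 : ℝ)⟫ := by
    rw [Finset.sum_comm]
    refine Finset.sum_congr rfl fun i _ => Finset.sum_congr rfl fun j _ => ?_
    ring
  have h2 : ∑ i, ∑ j, v i * v j * symMat S i j = (∑ i, ∑ j, v i * v j * ⟪S (EuclideanSpace.single i 1), EuclideanSpace.single j (1 : ℝ)⟫ + ∑ i, ∑ j, v i * v j * ⟪S (EuclideanSpace.single j 1), EuclideanSpace.single i (1 : ℝ)⟫) / 2 := by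
    rw [← Finset.sum_add_distrib, Finset.sum_div]
    refine Finset.sum_congr rfl fun i _ => ?_
    rw [← Finset.sum_add_distrib, Finset.sum_div]
    refine Finset.sum_congr rfl fun j _ => ?_
    simp only [symMat, Matrix.of_apply]
    ring
  rw [h2, ← h1]
  ring

lemma isSymm_smul_one (t : ℝ) : (t • (1 : Mat N)).IsSymm := by
  rw [Matrix.IsSymm, Matrix.transpose_smul, Matrix.transpose_one]

end MatrixForms

/-! ### Admissible operators and the symmetry `u ↦ -u` -/

section Operators
variable {N : ℕ}

/-- The properties of a degenerate elliptic operator `H(x,p,X)` used in the Perron construction: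
monotonicity in `X`, continuity away from `p = 0`, and the growth `|p|^α |X| + |p|^(α+1)`.
Closeness of symmetric matrices is measured through their quadratic forms. -/
structure Oper (Ω : Set (EN N)) (α : ℝ) (H : EN N → EN N → Mat N → ℝ) : Prop where
  mono : ∀ x ∈ closure Ω, ∀ p, p ≠ 0 → ∀ X Y : Mat N, X.IsSymm → Y.IsSymm →
    (∀ h, qf X h ≤ qf Y h) → H x p X ≤ H x p Y
  cont : ∀ x0 ∈ closure Ω, ∀ p0, p0 ≠ 0 → ∀ X0 : Mat N, X0.IsSymm → ∀ ε > 0, ∃ δ > 0,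
    ∀ x ∈ closure Ω, ∀ p, p ≠ 0 → ∀ X : Mat N, X.IsSymm → ‖x - x0‖ ≤ δ → ‖p - p0‖ ≤ δ →
    (∀ h, |qf X h - qf X0 h| ≤ δ * ‖h‖ ^ 2) → |H x p X - H x0 p0 X0| ≤ ε
  growth : ∃ K, 0 ≤ K ∧ ∀ x ∈ closure Ω, ∀ p, p ≠ 0 → ∀ X : Mat N, ∀ t, X.IsSymm → 0 ≤ t →
    (∀ h, |qf X h| ≤ t * ‖h‖ ^ 2) → |H x p X| ≤ K * (‖p‖ ^ α * t + ‖p‖ ^ (α + 1))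

/-- The operator satisfied by `-u` when `u` satisfies the equation for `H`. -/
def flipOp (H : EN N → EN N → Mat N → ℝ) : EN N → EN N → Mat N → ℝ :=
  fun x p X => - H x (-p) (-X)

/-- The zeroth order term satisfied by `-u`. -/
def flipC (c : EN N → ℝ → ℝ) : EN N → ℝ → ℝ := fun x r => - c x (-r)

/-- `F` together with the transport term. -/
def Hop (F : EN N → EN N → Mat N → ℝ) (b : EN N → EN N) (α : ℝ) : EN N → EN N → Mat N → ℝ :=
  fun x p X => F x p X + ⟪b x, p⟫ * ‖p‖ ^ α

lemma flipOp_Hop (F : EN N → EN N → Mat N → ℝ) (b : EN N → EN N) (α : ℝ) :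
    flipOp (Hop F b α) = Hop (flipOp F) b α := by
  funext x p X
  simp only [flipOp, Hop, inner_neg_right, norm_neg]; ring

lemma isSymm_neg' {X : Mat N} (h : X.IsSymm) : (-X).IsSymm := by
  rw [Matrix.IsSymm, Matrix.transpose_neg, h]

lemma isSymm_add' {X Y : Mat N} (h : X.IsSymm) (h' : Y.IsSymm) : (X + Y).IsSymm := by
  rw [Matrix.IsSymm, Matrix.transpose_add, h, h']

lemma isSymm_sub' {X Y : Mat N} (h : X.IsSymm) (h' : Y.IsSymm) : (X - Y).IsSymm := by
  rw [Matrix.IsSymm, Matrix.transpose_sub, h, h']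

lemma Oper.flip {Ω : Set (EN N)} {α : ℝ} {H : EN N → EN N → Mat N → ℝ} (h : Oper Ω α H) :
    Oper Ω α (flipOp H) where
  mono x hx p hp X Y hX hY hXY := by
    have := h.mono x hx (-p) (neg_ne_zero.2 hp) (-Y) (-X) (isSymm_neg' hY) (isSymm_neg' hX)
      (fun v => by rw [qf_neg, qf_neg]; linarith [hXY v])
    simp only [flipOp]; linarith
  cont x0 hx0 p0 hp0 X0 hX0 ε hε := by
    obtain ⟨δ, hδ, hh⟩ := h.cont x0 hx0 (-p0) (neg_ne_zero.2 hp0) (-X0) (isSymm_neg' hX0) ε hε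
    refine ⟨δ, hδ, fun x hx p hp X hX h1 h2 h3 => ?_⟩
    have := hh x hx (-p) (neg_ne_zero.2 hp) (-X) (isSymm_neg' hX) h1
      (by rw [← neg_add', norm_neg, ← sub_eq_add_neg] ; exact h2)
      (fun v => by rw [qf_neg, qf_neg, ← neg_add', abs_neg, ← sub_eq_add_neg]; exact h3 v)
    simp only [flipOp]
    rw [abs_sub_comm] at this
    convert this using 2; ring
  growth := by
    obtain ⟨K, hK, hh⟩ := h.growth
    refine ⟨K, hK, fun x hx p hp X t hX ht hq => ?_⟩
    have := hh x hx (-p) (neg_ne_zero.2 hp) (-X) t (isSymm_neg' hX) ht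
      (fun v => by rw [qf_neg, abs_neg]; exact hq v)
    simpa only [flipOp, abs_neg, norm_neg] using this

variable {Ω : Set (EN N)} {α a A C₁ θ C₂ ν : ℝ} {F : EN N → EN N → Mat N → ℝ}

lemma CondF2.mono (h : CondF2 Ω α a A F) {x : EN N} (hx : x ∈ closure Ω) {p : EN N} (hp : p ≠ 0)
    {X Y : Mat N} (hX : X.IsSymm) (hY : Y.IsSymm) (hXY : ∀ v, qf X v ≤ qf Y v) :
    F x p X + a * ‖p‖ ^ α * (Y - X).trace ≤ F x p Y := by
  obtain ⟨ha, haA, hh⟩ := h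
  have hP : (Y - X).PosSemidef := posSemidef_of_qf (isSymm_sub' hY hX) fun v => by
    rw [qf_sub]; linarith [hXY v]
  have := (hh x hx p hp X (Y - X) hX hP).1
  rw [add_sub_cancel] at this
  linarith

lemma CondF2.lip (h : CondF2 Ω α a A F) {x : EN N} (hx : x ∈ closure Ω) {p : EN N} (hp : p ≠ 0)
    {X Y : Mat N} (hX : X.IsSymm) (hY : Y.IsSymm) {t : ℝ} (ht : 0 ≤ t)
    (hXY : ∀ v, qf X v ≤ qf Y v + t * ‖v‖ ^ 2) :
    F x p X ≤ F x p Y + A * ‖p‖ ^ α * (N * t) := by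
  have ha := h.1
  have h2 := h.2.2
  have hS := isSymm_smul_one (N := N) t
  have h1 := h.mono hx hp hX (isSymm_add' hY hS)
    (fun v => by rw [qf_add, qf_smul, qf_one]; exact hXY v)
  have hP : (t • (1 : Mat N)).PosSemidef := posSemidef_of_qf hS fun v => by
    rw [qf_smul, qf_one]; positivity
  have h3 := (h2 x hx p hp Y _ hY hP).2
  have h4 : 0 ≤ (Y + t • (1 : Mat N) - X).trace := by
    rw [trace_eq_sum_qf]
    refine Finset.sum_nonneg fun i _ => ?_
    rw [qf_sub, qf_add, qf_smul, qf_one]; linarith [hXY (EuclideanSpace.single i 1)]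
  have h5 : (t • (1 : Mat N)).trace = N * t := by
    rw [Matrix.trace_smul, Matrix.trace_one]; simp [mul_comm]
  rw [h5] at h3
  have h6 : 0 ≤ a * ‖p‖ ^ α * (Y + t • (1 : Mat N) - X).trace := by positivity
  linarith

/-- Uniform ellipticity and Hölder continuity of `F` give an admissible operator. -/
lemma oper_Hop (hΩb : Bornology.IsBounded Ω) (hF0 : ∀ x ∈ closure Ω, ∀ p, p ≠ 0 → F x p 0 = 0)
    (hF2 : CondF2 Ω α a A F)
    (hF3 : CondF3 Ω α C₁ θ F) (hF4 : CondF4 Ω α C₂ ν F) {b : EN N → EN N}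
    (hb : ContinuousOn b (closure Ω)) : Oper Ω α (Hop F b α) where
  mono x hx p hp X Y hX hY hXY := by
    have h1 := hF2.mono hx hp hX hY hXY
    have h4 : 0 ≤ (Y - X).trace := by
      rw [trace_eq_sum_qf]
      refine Finset.sum_nonneg fun i _ => ?_
      rw [qf_sub]; linarith [hXY (EuclideanSpace.single i 1)]
    have ha := hF2.1
    have h6 : 0 ≤ a * ‖p‖ ^ α * (Y - X).trace := by positivity
    simp only [Hop]; linarith
  cont x0 hx0 p0 hp0 X0 hX0 ε hε := by
    have hA : 0 < A := hF2.1.trans_le hF2.2.1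
    have hp0' : 0 < ‖p0‖ := norm_pos_iff.2 hp0
    obtain ⟨hC1, hθ, hF3⟩ := hF3
    obtain ⟨hC2, hν, hF4⟩ := hF4
    have hθ0 : 0 < θ := by linarith [hθ.1]
    have hν0 : 0 < ν := by linarith [hν.1]
    have c1 : ContinuousAt (fun p : EN N => ‖p‖ ^ α) p0 :=
      continuous_norm.continuousAt.rpow_const (Or.inl hp0'.ne')
    have c2 : ContinuousWithinAt (fun z : EN N × EN N => ⟪b z.1, z.2⟫ * ‖z.2‖ ^ α)
        (closure Ω ×ˢ univ) (x0, p0) := by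
      refine ContinuousWithinAt.mul (ContinuousWithinAt.inner (𝕜 := ℝ) ?_ ?_) ?_
      · exact (hb x0 hx0).comp continuousWithinAt_fst (fun z hz => hz.1)
      · exact continuousWithinAt_snd
      · exact (ContinuousAt.comp (x := (x0, p0)) (f := Prod.snd) c1
          continuousAt_snd).continuousWithinAt
    obtain ⟨δ1, hδ1, h1⟩ := Metric.continuousAt_iff.1 c1 1 one_pos
    obtain ⟨δ2, hδ2, h2⟩ := Metric.continuousWithinAt_iff.1 c2 (ε / 2) (half_pos hε)
    have c3 : ContinuousAt (fun d : ℝ => A * (‖p0‖ ^ α + 1) * (N * d)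
        + C₂ * ‖p0‖ ^ (α - ν) * d ^ ν * matNorm X0 + C₁ * d ^ θ * ‖p0‖ ^ α * matNorm X0) 0 := by
      have e1 : ContinuousAt (fun d : ℝ => d ^ ν) 0 :=
        Real.continuousAt_rpow_const _ _ (Or.inr hν0.le)
      have e2 : ContinuousAt (fun d : ℝ => d ^ θ) 0 :=
        Real.continuousAt_rpow_const _ _ (Or.inr hθ0.le)
      fun_prop
    have c4 := c3.eventually (gt_mem_nhds (a := ε / 2)
      (by simp [Real.zero_rpow hν0.ne', Real.zero_rpow hθ0.ne']; exact hε))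
    obtain ⟨δ3, hδ3, h3⟩ := Metric.eventually_nhds_iff.1 c4
    set δ := min (min (δ1 / 2) (δ2 / 2)) (min (δ3 / 2) (‖p0‖ / 2)) with hδ
    have d1 : δ ≤ δ1 / 2 := (min_le_left _ _).trans (min_le_left _ _)
    have d2 : δ ≤ δ2 / 2 := (min_le_left _ _).trans (min_le_right _ _)
    have d3 : δ ≤ δ3 / 2 := (min_le_right _ _).trans (min_le_left _ _)
    have d4 : δ ≤ ‖p0‖ / 2 := (min_le_right _ _).trans (min_le_right _ _)
    have dp : 0 < δ := by positivity
    refine ⟨δ, dp, fun x hx p hp X hX hxx hpp hq => ?_⟩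
    have k1 := h1 (x := p) (by rw [dist_eq_norm]; linarith)
    have k2 := h2 (x := (x, p)) ⟨hx, trivial⟩ (by
      rw [Prod.dist_eq, dist_eq_norm, dist_eq_norm]; exact max_lt (by simp; linarith) (by simp; linarith))
    have k3 := h3 (y := δ) (by rw [Real.dist_eq, sub_zero, abs_of_pos dp]; linarith)
    rw [Real.dist_eq] at k1 k2
    have l1 : |F x p X - F x p X0| ≤ A * ‖p‖ ^ α * (N * δ) := by
      rw [abs_le]
      have q1 := hF2.lip hx hp hX hX0 dp.le (fun v => by linarith [(abs_le.1 (hq v)).2])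
      have q2 := hF2.lip hx hp hX0 hX dp.le (fun v => by linarith [(abs_le.1 (hq v)).1])
      constructor <;> linarith
    have l2 : |F x p X0 - F x p0 X0| ≤ C₂ * ‖p0‖ ^ (α - ν) * δ ^ ν * matNorm X0 := by
      have := hF4 x hx p0 hp0 (p - p0) (hpp.trans d4) X0 hX0
      rw [add_sub_cancel] at this
      refine this.trans ?_
      gcongr
      · exact matNorm_nonneg _
    have l3 : |F x p0 X0 - F x0 p0 X0| ≤ C₁ * δ ^ θ * ‖p0‖ ^ α * matNorm X0 := by
      refine (hF3 x hx x0 hx0 p0 hp0 X0 hX0).trans ?_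
      gcongr
      · exact matNorm_nonneg _
    have l4 : A * ‖p‖ ^ α * (N * δ) ≤ A * (‖p0‖ ^ α + 1) * (N * δ) := by
      gcongr
      linarith [(abs_lt.1 k1).2]
    simp only [Hop]
    rw [abs_le] at *
    rw [abs_lt] at k2
    simp only at k2
    constructor <;> linarith [k2.1, k2.2, l1.1, l1.2, l2.1, l2.2, l3.1, l3.2]
  growth := by
    have hA : 0 < A := hF2.1.trans_le hF2.2.1
    have hcomp : IsCompact (closure Ω) := hΩb.isCompact_closure
    obtain ⟨B, hB⟩ := hcomp.exists_bound_of_continuousOn hb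
    refine ⟨A * N + |B|, by positivity, fun x hx p hp X t hX ht hq => ?_⟩
    have hp' : 0 < ‖p‖ := norm_pos_iff.2 hp
    have h0 : (0 : Mat N).IsSymm := Matrix.transpose_zero
    have q1 := hF2.lip hx hp hX h0 ht (fun v => by rw [qf_zero]; linarith [(abs_le.1 (hq v)).2])
    have q2 := hF2.lip hx hp h0 hX ht (fun v => by rw [qf_zero]; linarith [(abs_le.1 (hq v)).1])
    rw [hF0 x hx p hp] at q1 q2
    have q3 : |⟪b x, p⟫ * ‖p‖ ^ α| ≤ |B| * ‖p‖ ^ (α + 1) := by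
      rw [abs_mul, abs_of_nonneg (a := ‖p‖ ^ α) (by positivity), Real.rpow_add_one hp'.ne']
      calc |⟪b x, p⟫| * ‖p‖ ^ α ≤ (|B| * ‖p‖) * ‖p‖ ^ α := by
            gcongr
            refine (abs_real_inner_le_norm _ _).trans ?_
            gcongr
            exact (hB x hx).trans (le_abs_self _)
        _ = _ := by ring
    have q4 : 0 ≤ |B| * (‖p‖ ^ α * t) := by positivity
    have q5 : 0 ≤ A * N * ‖p‖ ^ (α + 1) := by positivity
    simp only [Hop]
    rw [abs_le] at *
    constructor <;> nlinarith [q3.1, q3.2]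

end Operators

/-! ### Gradients and Hessians of test functions -/

section Calculus
variable {N : ℕ}

lemma hess_apply (φ : EN N → ℝ) (x : EN N) (i j : Fin N) :
    hess φ x i j = fderiv ℝ (fderiv ℝ φ) x (EuclideanSpace.single i 1)
      (EuclideanSpace.single j 1) := by
  simp [hess, iteratedFDeriv_two_apply]

lemma qf_hess (φ : EN N → ℝ) (x h : EN N) :
    qf (hess φ x) h = fderiv ℝ (fderiv ℝ φ) x h h := by
  have hv : h = ∑ i, h i • EuclideanSpace.single i (1 : ℝ) := by
    ext j
    simp [Finset.sum_apply, EuclideanSpace.single, Pi.single_apply]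
  rw [qf_eq_sum]
  conv_rhs => rw [hv]
  simp only [map_sum, map_smul, _root_.sum_apply, smul_apply, smul_eq_mul,
    hess_apply]
  rw [Finset.sum_comm]
  simp only [Finset.mul_sum]
  refine Finset.sum_congr rfl fun i _ => Finset.sum_congr rfl fun j _ => ?_
  ring

lemma hess_isSymm {φ : EN N → ℝ} (hφ : ContDiff ℝ 2 φ) (x : EN N) : (hess φ x).IsSymm := by
  ext i j
  rw [Matrix.transpose_apply, hess_apply, hess_apply]
  exact (hφ.contDiffAt.isSymmSndFDerivAt (by simp)).eq _ _

lemma fderiv_eq_inner_gradient (φ : EN N → ℝ) (x h : EN N) :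
    fderiv ℝ φ x h = ⟪gradient φ x, h⟫ := by
  rw [← toDual_gradient, InnerProductSpace.toDual_apply_apply]

lemma differentiable_fderiv {φ : EN N → ℝ} (hφ : ContDiff ℝ 2 φ) :
    Differentiable ℝ (fderiv ℝ φ) :=
  (hφ.fderiv_right (m := 1) (by norm_num)).differentiable (by norm_num)

lemma ContDiff.diff2 {φ : EN N → ℝ} (hφ : ContDiff ℝ 2 φ) : Differentiable ℝ φ :=
  hφ.differentiable (by norm_num)

lemma gradient_sub' {φ ψ : EN N → ℝ} (hφ : ContDiff ℝ 2 φ) (hψ : ContDiff ℝ 2 ψ) (x : EN N) :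
    gradient (fun z => φ z - ψ z) x = gradient φ x - gradient ψ x := by
  refine ext_inner_right ℝ fun h => ?_
  rw [inner_sub_left, ← fderiv_eq_inner_gradient, ← fderiv_eq_inner_gradient,
    ← fderiv_eq_inner_gradient, fderiv_fun_sub (hφ.diff2 x) (hψ.diff2 x)]
  rfl

lemma gradient_add' {φ ψ : EN N → ℝ} (hφ : ContDiff ℝ 2 φ) (hψ : ContDiff ℝ 2 ψ) (x : EN N) :
    gradient (fun z => φ z + ψ z) x = gradient φ x + gradient ψ x := by
  refine ext_inner_right ℝ fun h => ?_
  rw [inner_add_left, ← fderiv_eq_inner_gradient, ← fderiv_eq_inner_gradient,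
    ← fderiv_eq_inner_gradient, fderiv_fun_add (hφ.diff2 x) (hψ.diff2 x)]
  rfl

lemma gradient_neg' (φ : EN N → ℝ) (x : EN N) :
    gradient (fun z => - φ z) x = - gradient φ x := by
  refine ext_inner_right ℝ fun h => ?_
  rw [inner_neg_left, ← fderiv_eq_inner_gradient, ← fderiv_eq_inner_gradient, fderiv_fun_neg]
  rfl

lemma gradient_const_add' (φ : EN N → ℝ) (k : ℝ) (x : EN N) :
    gradient (fun z => φ z + k) x = gradient φ x := by
  refine ext_inner_right ℝ fun h => ?_
  rw [← fderiv_eq_inner_gradient, ← fderiv_eq_inner_gradient, fderiv_add_const]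

lemma gradient_const_mul' {φ : EN N → ℝ} (hφ : ContDiff ℝ 2 φ) (k : ℝ) (x : EN N) :
    gradient (fun z => k * φ z) x = k • gradient φ x := by
  refine ext_inner_right ℝ fun h => ?_
  rw [real_inner_smul_left, ← fderiv_eq_inner_gradient, ← fderiv_eq_inner_gradient,
    fderiv_const_mul (hφ.diff2 x)]
  rfl

lemma hess_sub' {φ ψ : EN N → ℝ} (hφ : ContDiff ℝ 2 φ) (hψ : ContDiff ℝ 2 ψ) (x : EN N) :
    hess (fun z => φ z - ψ z) x = hess φ x - hess ψ x := by
  have e : fderiv ℝ (fun z => φ z - ψ z) = fun z => fderiv ℝ φ z - fderiv ℝ ψ z := by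
    funext z; exact fderiv_fun_sub (hφ.diff2 z) (hψ.diff2 z)
  ext i j
  rw [Matrix.sub_apply, hess_apply, hess_apply, hess_apply, e,
    fderiv_fun_sub (differentiable_fderiv hφ x) (differentiable_fderiv hψ x)]
  rfl

lemma hess_add' {φ ψ : EN N → ℝ} (hφ : ContDiff ℝ 2 φ) (hψ : ContDiff ℝ 2 ψ) (x : EN N) :
    hess (fun z => φ z + ψ z) x = hess φ x + hess ψ x := by
  have e : fderiv ℝ (fun z => φ z + ψ z) = fun z => fderiv ℝ φ z + fderiv ℝ ψ z := by
    funext z; exact fderiv_fun_add (hφ.diff2 z) (hψ.diff2 z)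
  ext i j
  rw [Matrix.add_apply, hess_apply, hess_apply, hess_apply, e,
    fderiv_fun_add (differentiable_fderiv hφ x) (differentiable_fderiv hψ x)]
  rfl

lemma hess_neg' (φ : EN N → ℝ) (x : EN N) :
    hess (fun z => - φ z) x = - hess φ x := by
  have e : fderiv ℝ (fun z => - φ z) = fun z => - fderiv ℝ φ z := by
    funext z; exact fderiv_fun_neg
  ext i j
  rw [Matrix.neg_apply, hess_apply, hess_apply, e, fderiv_fun_neg]
  rfl

lemma hess_const_add' (φ : EN N → ℝ) (k : ℝ) (x : EN N) :
    hess (fun z => φ z + k) x = hess φ x := by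
  have e : fderiv ℝ (fun z => φ z + k) = fderiv ℝ φ := by
    funext z; exact fderiv_add_const k
  ext i j
  rw [hess_apply, hess_apply, e]

lemma hess_const_mul' {φ : EN N → ℝ} (hφ : ContDiff ℝ 2 φ) (k : ℝ) (x : EN N) :
    hess (fun z => k * φ z) x = k • hess φ x := by
  have e : fderiv ℝ (fun z => k * φ z) = fun z => k • fderiv ℝ φ z := by
    funext z; exact fderiv_const_mul (hφ.diff2 z) k
  ext i j
  rw [Matrix.smul_apply, hess_apply, hess_apply, e,
    fderiv_fun_const_smul (differentiable_fderiv hφ x)]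
  rfl

lemma continuous_gradient' {φ : EN N → ℝ} (hφ : ContDiff ℝ 2 φ) : Continuous (gradient φ) := by
  have : Continuous (fderiv ℝ φ) := (differentiable_fderiv hφ).continuous
  exact (InnerProductSpace.toDual ℝ (EN N)).symm.continuous.comp this

lemma fderiv_fderiv_near {E : Type*} [NormedAddCommGroup E] [NormedSpace ℝ E] {φ : E → ℝ}
    (hφ : ContDiff ℝ 2 φ) (x0 : E) {δ : ℝ} (hδ : 0 < δ) : ∀ᶠ x in 𝓝 x0, ∀ h,
      |fderiv ℝ (fderiv ℝ φ) x h h - fderiv ℝ (fderiv ℝ φ) x0 h h| ≤ δ * ‖h‖ ^ 2 := by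
  have hc : Continuous (fderiv ℝ (fderiv ℝ φ)) :=
    (hφ.fderiv_right (m := 1) (by norm_num)).continuous_fderiv (by norm_num)
  filter_upwards [(Metric.continuousAt_iff' (f := fderiv ℝ (fderiv ℝ φ)) (b := x0)).1
    hc.continuousAt δ hδ] with x hx h
  replace hx : ‖fderiv ℝ (fderiv ℝ φ) x - fderiv ℝ (fderiv ℝ φ) x0‖ < δ :=
    (dist_eq_norm (fderiv ℝ (fderiv ℝ φ) x) (fderiv ℝ (fderiv ℝ φ) x0)).symm.trans_lt hx
  calc |fderiv ℝ (fderiv ℝ φ) x h h - fderiv ℝ (fderiv ℝ φ) x0 h h|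
      = ‖(fderiv ℝ (fderiv ℝ φ) x - fderiv ℝ (fderiv ℝ φ) x0) h h‖ := rfl
    _ ≤ ‖fderiv ℝ (fderiv ℝ φ) x - fderiv ℝ (fderiv ℝ φ) x0‖ * ‖h‖ * ‖h‖ :=
        ContinuousLinearMap.le_opNorm₂ _ _ _
    _ ≤ δ * ‖h‖ * ‖h‖ := by gcongr
    _ = _ := by ring

lemma hess_near {φ : EN N → ℝ} (hφ : ContDiff ℝ 2 φ) (x0 : EN N) {δ : ℝ} (hδ : 0 < δ) :
    ∀ᶠ x in 𝓝 x0, ∀ h, |qf (hess φ x) h - qf (hess φ x0) h| ≤ δ * ‖h‖ ^ 2 := by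
  simp only [qf_hess]
  exact fderiv_fderiv_near hφ x0 hδ

lemma qf_hess_of_gradient {f : EN N → ℝ} {G : EN N → EN N} {S : EN N →L[ℝ] EN N} {x : EN N}
    (hf : ContDiff ℝ 2 f)
    (hG : ∀ z, HasGradientAt f (G z) z) (hS : HasFDerivAt G S x) (h : EN N) :
    qf (hess f x) h = ⟪S h, h⟫ := by
  have h1 : HasFDerivAt (fun z => fderiv ℝ f z h)
      ((fderiv ℝ (fderiv ℝ f) x).flip h) x := by
    have := (differentiable_fderiv hf x).hasFDerivAt.clm_apply (hasFDerivAt_const h x)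
    exact this.congr_fderiv (by ext; simp)
  have e : (fun z => fderiv ℝ f z h) = fun z => ⟪G z, h⟫ := by
    funext z; rw [fderiv_eq_inner_gradient, (hG z).gradient]
  rw [e] at h1
  have h2 := hS.inner ℝ (hasFDerivAt_const h x)
  rw [qf_hess, ← ContinuousLinearMap.flip_apply, h1.unique h2]
  simp

/-- The quadratic test function with prescribed value, gradient and Hessian form at `y`. -/
def quadFun (k : ℝ) (p : EN N) (S : EN N →L[ℝ] EN N) (y x : EN N) : ℝ :=
  k + ⟪p, x - y⟫ + 1 / 2 * ⟪S (x - y), x - y⟫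

lemma contDiff_quadFun (k : ℝ) (p : EN N) (S : EN N →L[ℝ] EN N) (y : EN N) :
    ContDiff ℝ 2 (quadFun k p S y) := by
  unfold quadFun
  refine ContDiff.add (ContDiff.add contDiff_const ?_) (ContDiff.mul contDiff_const ?_)
  · exact contDiff_const.inner ℝ (contDiff_id.sub contDiff_const)
  · exact ((S.contDiff.comp (contDiff_id.sub contDiff_const))).inner ℝ
      (contDiff_id.sub contDiff_const)

lemma hasGradientAt_quadFun (k : ℝ) (p : EN N) (S : EN N →L[ℝ] EN N) (y x : EN N) :
    HasGradientAt (quadFun k p S y)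
      (p + (1 / 2 : ℝ) • (S (x - y) + ContinuousLinearMap.adjoint S (x - y))) x := by
  rw [hasGradientAt_iff_hasFDerivAt]
  have h1 : HasFDerivAt (fun z : EN N => z - y) (ContinuousLinearMap.id ℝ (EN N)) x :=
    (hasFDerivAt_id x).sub_const y
  have h2 := S.hasFDerivAt.comp x h1
  have h3 := (hasFDerivAt_const p x).inner ℝ h1
  have h4 := (h2.inner ℝ h1).const_mul (1 / 2 : ℝ)
  have h5 := ((hasFDerivAt_const k x).add h3).add h4
  refine h5.congr_fderiv ?_
  ext h
  have e1 : ⟪ContinuousLinearMap.adjoint S (x - y), h⟫ = ⟪S h, x - y⟫ := by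
    rw [ContinuousLinearMap.adjoint_inner_left, real_inner_comm]
  rw [InnerProductSpace.toDual_apply_apply, inner_add_left, real_inner_smul_left, inner_add_left,
    e1]
  simp

lemma gradient_quadFun (k : ℝ) (p : EN N) (S : EN N →L[ℝ] EN N) (y : EN N) :
    gradient (quadFun k p S y) y = p := by
  rw [(hasGradientAt_quadFun k p S y y).gradient]; simp

lemma qf_hess_quadFun (k : ℝ) (p : EN N) (S : EN N →L[ℝ] EN N) (y h : EN N) :
    qf (hess (quadFun k p S y) y) h = ⟪S h, h⟫ := by
  have h1 : HasFDerivAt (fun z : EN N => z - y) (ContinuousLinearMap.id ℝ (EN N)) y :=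
    (hasFDerivAt_id y).sub_const y
  have h2 : HasFDerivAt (fun z : EN N => p + (1 / 2 : ℝ) •
      (S (z - y) + ContinuousLinearMap.adjoint S (z - y)))
      ((1 / 2 : ℝ) • (S + ContinuousLinearMap.adjoint S)) y := by
    have := (((S + ContinuousLinearMap.adjoint S).hasFDerivAt.comp y h1).const_smul
      (1 / 2 : ℝ)).const_add p
    simpa [Function.comp_def] using this
  rw [qf_hess_of_gradient (contDiff_quadFun k p S y) (hasGradientAt_quadFun k p S y) h2]
  simp [inner_add_left, real_inner_smul_left, ContinuousLinearMap.adjoint_inner_left]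
  rw [real_inner_comm]; ring

/-- Second order necessary condition at an interior maximum. -/
lemma second_order_max {ψ : EN N → ℝ} (hψ : ContDiff ℝ 2 ψ) {x : EN N} (hm : IsLocalMax ψ x) :
    gradient ψ x = 0 ∧ ∀ h, qf (hess ψ x) h ≤ 0 := by
  have hg0 : fderiv ℝ ψ x = 0 := hm.fderiv_eq_zero
  refine ⟨ext_inner_right ℝ fun h => by
    rw [← fderiv_eq_inner_gradient, hg0]; simp, fun h => ?_⟩
  by_contra hneg
  push Not at hneg
  have hline : ∀ t : ℝ, HasDerivAt (fun s : ℝ => x + s • h) h t := fun t => by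
    simpa using ((hasDerivAt_id t).smul_const h).const_add x
  have d1 : ∀ t : ℝ, HasDerivAt (fun s : ℝ => ψ (x + s • h)) (fderiv ℝ ψ (x + t • h) h) t :=
    fun t => (hψ.diff2 _).hasFDerivAt.comp_hasDerivAt t (hline t)
  have d1' : deriv (fun s : ℝ => ψ (x + s • h)) = fun t => fderiv ℝ ψ (x + t • h) h :=
    funext fun t => (d1 t).deriv
  have d2 : HasDerivAt (fun t : ℝ => fderiv ℝ ψ (x + t • h) h)
      (fderiv ℝ (fderiv ℝ ψ) x h h) 0 := by
    have hx0 : HasFDerivAt (fderiv ℝ ψ) (fderiv ℝ (fderiv ℝ ψ) x) (x + (0 : ℝ) • h) := by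
      simpa using (differentiable_fderiv hψ x).hasFDerivAt
    have := hx0.comp_hasDerivAt (0 : ℝ) (hline 0)
    exact (this.clm_apply (hasDerivAt_const (0 : ℝ) h)).congr_deriv (by simp)
  have hmin : IsLocalMin (fun s : ℝ => ψ (x + s • h)) 0 := by
    refine isLocalMin_of_deriv_deriv_pos ?_ ?_ (d1 0).continuousAt
    · rw [d1', d2.deriv, ← qf_hess]; exact hneg
    · rw [d1']; simp [hg0]
  have hmax : IsLocalMax (fun s : ℝ => ψ (x + s • h)) 0 := by
    have ht : Tendsto (fun s : ℝ => x + s • h) (𝓝 0) (𝓝 x) := by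
      have := (hline 0).continuousAt.tendsto
      simpa using this
    have := ht.eventually hm
    filter_upwards [this] with s hs
    simpa using hs
  have hconst : (fun s : ℝ => ψ (x + s • h)) =ᶠ[𝓝 0] fun _ => ψ x := by
    filter_upwards [hmin, hmax] with s h1 h2
    simp only [zero_smul, add_zero] at h1 h2
    exact le_antisymm h2 h1
  have hc2 := hconst.deriv.deriv_eq
  rw [d1', d2.deriv] at hc2
  simp at hc2
  rw [qf_hess] at hneg
  linarith

/-- The radial test function `A |x - y|^(2n)`. -/
def radFun (A : ℝ) (n : ℕ) (y x : EN N) : ℝ := A * (‖x - y‖ ^ 2) ^ n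

lemma contDiff_radFun (A : ℝ) (n : ℕ) (y : EN N) : ContDiff ℝ 2 (radFun A n y) := by
  unfold radFun
  exact contDiff_const.mul (((contDiff_id.sub contDiff_const).norm_sq ℝ).pow n)

lemma hasGradientAt_radFun (A : ℝ) (n : ℕ) (y x : EN N) :
    HasGradientAt (radFun A (n + 1) y) ((2 * (n + 1) * A * (‖x - y‖ ^ 2) ^ n) • (x - y)) x := by
  rw [hasGradientAt_iff_hasFDerivAt]
  have h1 : HasFDerivAt (fun z : EN N => z - y) (ContinuousLinearMap.id ℝ (EN N)) x :=
    (hasFDerivAt_id x).sub_const y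
  have h2 := (h1.norm_sq.pow (n + 1)).const_mul A
  refine h2.congr_fderiv ?_
  ext h
  simp
  ring

lemma abs_qf_hess_radFun (A : ℝ) (hA : 0 ≤ A) (n : ℕ) (y x h : EN N) :
    |qf (hess (radFun A (n + 2) y) x) h|
      ≤ 4 * (n + 2) ^ 2 * A * (‖x - y‖ ^ 2) ^ (n + 1) * ‖h‖ ^ 2 := by
  have h1 : HasFDerivAt (fun z : EN N => z - y) (ContinuousLinearMap.id ℝ (EN N)) x :=
    (hasFDerivAt_id x).sub_const y
  have h3 := ((h1.norm_sq.pow (n + 1)).const_mul (2 * ((n + 1 : ℕ) + 1) * A)).smul h1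
  rw [qf_hess_of_gradient (contDiff_radFun A _ y) (hasGradientAt_radFun A (n + 1) y) h3]
  simp only [add_apply, smul_apply, ContinuousLinearMap.smulRight_apply, inner_add_left,
    real_inner_smul_left, ContinuousLinearMap.comp_apply, ContinuousLinearMap.id_apply,
    innerSL_apply_apply, real_inner_self_eq_norm_sq, smul_eq_mul, nsmul_eq_mul]
  set s := ‖x - y‖ ^ 2 with hs
  have hs0 : 0 ≤ s := by positivity
  set w := ⟪x - y, h⟫ with hw
  have hw2 : w * w ≤ s * ‖h‖ ^ 2 := by
    have := abs_real_inner_le_norm (x - y) h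
    calc w * w = |w| * |w| := (abs_mul_abs_self w).symm
      _ ≤ (‖x - y‖ * ‖h‖) * (‖x - y‖ * ‖h‖) := by gcongr
      _ = _ := by rw [hs]; ring
  have hw0 : 0 ≤ w * w := mul_self_nonneg w
  have hn : (0 : ℝ) ≤ n := n.cast_nonneg
  have hsn : 0 ≤ s ^ n := by positivity
  push_cast
  have e0 : 2 * (n + 1 + 1) * A * ((n + 1) * s ^ n * (2 * w)) * w
      = 4 * (n + 1 + 1) * (n + 1) * (A * s ^ n * (w * w)) := by ring
  rw [e0, abs_of_nonneg (by positivity)]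
  have k1 : A * s ^ n * (w * w) ≤ A * s ^ n * (s * ‖h‖ ^ 2) := by gcongr
  have k2 : 0 ≤ A * s ^ n * (s * ‖h‖ ^ 2) := by positivity
  have e1 : (n + 1 + 1 : ℝ) = n + 2 := by ring
  have e2 : s ^ (n + 1) = s ^ n * s := pow_succ _ _
  rw [e2]
  nlinarith [mul_le_mul_of_nonneg_left k1 (show 0 ≤ 4 * (n + 2 : ℝ) * (n + 1) by positivity)]

end Calculus

/-! ### Pointwise formulation of sub- and supersolutions -/

section Tests
variable {N : ℕ}

/-- Test-function part of the subsolution property at `x0` for `H(x,Du,D²u) + c(x,u) ≥ 0`; at a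
boundary point only tests with outward pointing gradient carry information. -/
def SubTest (Ω : Set (EN N)) (nv : EN N → EN N) (H : EN N → EN N → Mat N → ℝ)
    (c : EN N → ℝ → ℝ) (u : EN N → ℝ) (x0 : EN N) : Prop :=
  ∀ φ : EN N → ℝ, ContDiff ℝ 2 φ → IsLocalMaxOn (fun x => u x - φ x) (closure Ω) x0 →
    gradient φ x0 ≠ 0 → (x0 ∈ frontier Ω → 0 < ⟪gradient φ x0, nv x0⟫) →
    0 ≤ H x0 (gradient φ x0) (hess φ x0) + c x0 (u x0)

/-- Strong form of the condition for constant tests: it is required at every local maximum of `u`,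
not only where `u` is locally constant. This form is stable under maxima. -/
def SubConst (Ω : Set (EN N)) (c : EN N → ℝ → ℝ) (u : EN N → ℝ) (x0 : EN N) : Prop :=
  x0 ∈ Ω → IsLocalMaxOn u (closure Ω) x0 → 0 ≤ c x0 (u x0)

/-- The weak form of the condition for constant tests, as in the definition of solutions. -/
def WeakConst (Ω : Set (EN N)) (c : EN N → ℝ → ℝ) (u : EN N → ℝ) (x0 : EN N) : Prop :=
  x0 ∈ Ω → ∀ k, (∀ᶠ x in 𝓝[closure Ω] x0, u x = k) → 0 ≤ c x0 k

/-- Test-function part of the supersolution property at `x0`. -/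
def SuperTest (Ω : Set (EN N)) (nv : EN N → EN N) (H : EN N → EN N → Mat N → ℝ)
    (c : EN N → ℝ → ℝ) (u : EN N → ℝ) (x0 : EN N) : Prop :=
  ∀ φ : EN N → ℝ, ContDiff ℝ 2 φ → IsLocalMinOn (fun x => u x - φ x) (closure Ω) x0 →
    gradient φ x0 ≠ 0 → (x0 ∈ frontier Ω → ⟪gradient φ x0, nv x0⟫ < 0) →
    H x0 (gradient φ x0) (hess φ x0) + c x0 (u x0) ≤ 0

/-- Strong condition for constant tests from below. -/
def SuperConst (Ω : Set (EN N)) (c : EN N → ℝ → ℝ) (u : EN N → ℝ) (x0 : EN N) : Prop :=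
  x0 ∈ Ω → IsLocalMinOn u (closure Ω) x0 → c x0 (u x0) ≤ 0

variable {Ω : Set (EN N)} {nv : EN N → EN N} {H : EN N → EN N → Mat N → ℝ}
  {c : EN N → ℝ → ℝ} {u : EN N → ℝ} {x0 : EN N} {α : ℝ}

lemma superTest_of_flip (h : SubTest Ω nv (flipOp H) (flipC c) (fun x => - u x) x0) :
    SuperTest Ω nv H c u x0 := by
  intro φ hφ hm hg hb
  have h1 := h (fun z => - φ z) hφ.neg (by
    filter_upwards [hm] with x hx
    linarith) (by rw [gradient_neg']; simpa using hg)
    (fun hx => by rw [gradient_neg', inner_neg_left]; linarith [hb hx])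
  rw [gradient_neg', hess_neg'] at h1
  simp only [flipOp, flipC, neg_neg] at h1
  linarith

lemma flip_of_superTest (h : SuperTest Ω nv H c u x0) :
    SubTest Ω nv (flipOp H) (flipC c) (fun x => - u x) x0 := by
  intro φ hφ hm hg hb
  have h1 := h (fun z => - φ z) hφ.neg (by
    filter_upwards [hm] with x hx
    linarith) (by rw [gradient_neg']; simpa using hg)
    (fun hx => by rw [gradient_neg', inner_neg_left]; linarith [hb hx])
  rw [gradient_neg', hess_neg'] at h1
  simp only [flipOp, flipC, neg_neg]
  linarith

lemma superConst_of_flip (h : SubConst Ω (flipC c) (fun x => - u x) x0) :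
    SuperConst Ω c u x0 := by
  intro hx hm
  have := h hx (by filter_upwards [hm] with x hx; linarith)
  simp only [flipC, neg_neg] at this
  linarith

lemma isSubSol_of_tests {F : EN N → EN N → Mat N → ℝ} {b : EN N → EN N} {c₀ : EN N → ℝ → ℝ}
    {g : EN N → ℝ} (hΩ : IsOpen Ω)
    (h1 : ∀ x ∈ closure Ω, SubTest Ω nv (Hop F b α) (fun x r => c₀ x r - g x) u x)
    (h2 : ∀ x ∈ closure Ω, SubConst Ω (fun x r => c₀ x r - g x) u x) :
    IsSubSol Ω F b α c₀ g (BNeu nv) u := by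
  have hfr : ∀ x ∈ Ω, x ∉ frontier Ω := fun x hx hf => by
    rw [hΩ.frontier_eq] at hf; exact hf.2 hx
  refine ⟨fun x hx φ hφ hm hg => ?_, fun x hx k hk => ?_, fun x hx φ hφ hm hg => ?_,
    fun x hx k hk => ?_⟩
  · have := h1 x (subset_closure hx) φ hφ hm hg (fun h => absurd h (hfr x hx))
    simp only [Hop] at this; linarith
  · have hk' : u x = k := hk.self_of_nhdsWithin (subset_closure hx)
    have := h2 x (subset_closure hx) hx (by
      filter_upwards [hk] with z hz; rw [hz, hk'])
    rw [hk'] at this; linarith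
  · by_cases hb : 0 < ⟪gradient φ x, nv x⟫
    · have := h1 x (frontier_subset_closure hx) φ hφ hm hg (fun _ => hb)
      simp only [Hop] at this
      exact (min_le_left _ _).trans (by linarith)
    · exact (min_le_right _ _).trans (by simpa [BNeu] using hb)
  · exact (min_le_right _ _).trans (by simp [BNeu])

lemma tests_of_isSubSol {F : EN N → EN N → Mat N → ℝ} {b : EN N → EN N} {c₀ : EN N → ℝ → ℝ}
    {g : EN N → ℝ} (hΩ : IsOpen Ω) (h : IsSubSol Ω F b α c₀ g (BNeu nv) u) :
    (∀ x ∈ closure Ω, SubTest Ω nv (Hop F b α) (fun x r => c₀ x r - g x) u x) ∧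
    (∀ x ∈ closure Ω, WeakConst Ω (fun x r => c₀ x r - g x) u x) := by
  refine ⟨fun x hx φ hφ hm hg hb => ?_, fun x hx hx' k hk => ?_⟩
  · by_cases hxi : x ∈ Ω
    · have := h.1 x hxi φ hφ hm hg
      simp only [Hop]; linarith
    · have hf : x ∈ frontier Ω := by rw [hΩ.frontier_eq]; exact ⟨hx, hxi⟩
      have := h.2.2.1 x hf φ hφ hm hg
      have hb' := hb hf
      rcases min_le_iff.1 this with h3 | h3
      · simp only [Hop]; linarith
      · simp only [BNeu] at h3; linarith
  · have := h.2.1 x hx' k hk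
    linarith

lemma isSuperSol_of_tests {F : EN N → EN N → Mat N → ℝ} {b : EN N → EN N} {c₀ : EN N → ℝ → ℝ}
    {g : EN N → ℝ} (hΩ : IsOpen Ω)
    (h1 : ∀ x ∈ closure Ω, SuperTest Ω nv (Hop F b α) (fun x r => c₀ x r - g x) u x)
    (h2 : ∀ x ∈ closure Ω, SuperConst Ω (fun x r => c₀ x r - g x) u x) :
    IsSuperSol Ω F b α c₀ g (BNeu nv) u := by
  have hfr : ∀ x ∈ Ω, x ∉ frontier Ω := fun x hx hf => by
    rw [hΩ.frontier_eq] at hf; exact hf.2 hx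
  refine ⟨fun x hx φ hφ hm hg => ?_, fun x hx k hk => ?_, fun x hx φ hφ hm hg => ?_,
    fun x hx k hk => ?_⟩
  · have := h1 x (subset_closure hx) φ hφ hm hg (fun h => absurd h (hfr x hx))
    simp only [Hop] at this; linarith
  · have hk' : u x = k := hk.self_of_nhdsWithin (subset_closure hx)
    have := h2 x (subset_closure hx) hx (by
      filter_upwards [hk] with z hz; rw [hz, hk'])
    rw [hk'] at this; linarith
  · by_cases hb : ⟪gradient φ x, nv x⟫ < 0
    · have := h1 x (frontier_subset_closure hx) φ hφ hm hg (fun _ => hb)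
      simp only [Hop] at this
      exact le_max_of_le_left (by linarith)
    · exact le_max_of_le_right (by simpa [BNeu] using hb)
  · exact le_max_of_le_right (by simp [BNeu])

lemma tests_of_isSuperSol {F : EN N → EN N → Mat N → ℝ} {b : EN N → EN N} {c₀ : EN N → ℝ → ℝ}
    {g : EN N → ℝ} (hΩ : IsOpen Ω) (h : IsSuperSol Ω F b α c₀ g (BNeu nv) u) :
    (∀ x ∈ closure Ω, SuperTest Ω nv (Hop F b α) (fun x r => c₀ x r - g x) u x) ∧
    (∀ x ∈ closure Ω, WeakConst Ω (flipC fun x r => c₀ x r - g x) (fun x => - u x) x) := by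
  refine ⟨fun x hx φ hφ hm hg hb => ?_, fun x hx hx' k hk => ?_⟩
  · by_cases hxi : x ∈ Ω
    · have := h.1 x hxi φ hφ hm hg
      simp only [Hop]; linarith
    · have hf : x ∈ frontier Ω := by rw [hΩ.frontier_eq]; exact ⟨hx, hxi⟩
      have := h.2.2.1 x hf φ hφ hm hg
      have hb' := hb hf
      rcases le_max_iff.1 this with h3 | h3
      · simp only [Hop]; linarith
      · simp only [BNeu] at h3; linarith
  · have := h.2.1 x hx' (-k) (by filter_upwards [hk] with z hz; linarith)
    simp only [flipC]; linarith

/-- For a suitable power the radial functions `± A |x - y|^(2(n+2))` are almost solutions when `A` is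
small: the operator evaluated on them is `O(A^(1+α))`, even near the degenerate point `y`. -/
lemma exists_radial_bound (hα : -1 < α) (hH : Oper Ω α H) : ∃ n : ℕ, ∃ K, 0 ≤ K ∧ ∀ A > 0,
    ∀ x ∈ closure Ω, ∀ y, x ≠ y → ‖x - y‖ ≤ 1 →
      gradient (radFun A (n + 2) y) x ≠ 0 ∧
      |H x (gradient (radFun A (n + 2) y) x) (hess (radFun A (n + 2) y) x)| ≤ K * A ^ (α + 1) ∧
      |H x (-gradient (radFun A (n + 2) y) x) (-hess (radFun A (n + 2) y) x)|
        ≤ K * A ^ (α + 1) := by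
  obtain ⟨K, hK, hg⟩ := hH.growth
  obtain ⟨n, hn⟩ := exists_nat_ge (1 / (α + 1))
  have hα1 : 0 < α + 1 := by linarith
  have hn1 : 1 ≤ (2 * n + 3 : ℝ) * (α + 1) := by
    rw [div_le_iff₀ hα1] at hn
    have : (0 : ℝ) ≤ n := n.cast_nonneg
    nlinarith
  set m : ℝ := n + 2 with hm
  have hm0 : 0 < m := by positivity
  refine ⟨n, K * ((2 * m + 1) * (2 * m) ^ (α + 1)), by positivity, fun A hA x hx y hxy hd => ?_⟩
  set r := ‖x - y‖ with hr
  have hr0 : 0 < r := norm_pos_iff.2 (sub_ne_zero.2 hxy)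
  have hgr : gradient (radFun A (n + 2) y) x = (2 * m * A * (r ^ 2) ^ (n + 1)) • (x - y) := by
    rw [(hasGradientAt_radFun A (n + 1) y x).gradient, hm]; push_cast; congr 1; ring
  have hne : gradient (radFun A (n + 2) y) x ≠ 0 := by
    rw [hgr]; exact smul_ne_zero (by positivity) (sub_ne_zero.2 hxy)
  set p := gradient (radFun A (n + 2) y) x with hp
  have hpn : ‖p‖ = 2 * m * A * (r ^ 2) ^ (n + 1) * r := by
    rw [hgr, norm_smul, Real.norm_eq_abs, abs_of_pos (by positivity)]
  have hp0 : 0 < ‖p‖ := norm_pos_iff.2 hne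
  set t := 4 * m ^ 2 * A * (r ^ 2) ^ (n + 1) with ht
  have ht0 : 0 ≤ t := by positivity
  have htp : t = 2 * m * ‖p‖ / r := by rw [hpn, ht]; field_simp; ring
  have hpe : ‖p‖ ^ (α + 1) ≤ (2 * m * A) ^ (α + 1) * r := by
    have e : ‖p‖ = 2 * m * A * r ^ (2 * n + 3 : ℝ) := by
      rw [hpn, mul_assoc, ← pow_mul, ← pow_succ, ← Real.rpow_natCast]
      congr 2; push_cast; ring
    rw [e, Real.mul_rpow (by positivity) (by positivity), ← Real.rpow_mul hr0.le]
    gcongr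
    calc r ^ ((2 * n + 3 : ℝ) * (α + 1)) ≤ r ^ (1 : ℝ) :=
          Real.rpow_le_rpow_of_exponent_ge hr0 hd hn1
      _ = r := Real.rpow_one r
  have hmain : ‖p‖ ^ α * t + ‖p‖ ^ (α + 1) ≤ (2 * m + 1) * (2 * m) ^ (α + 1) * A ^ (α + 1) := by
    have e1 : ‖p‖ ^ α * t = 2 * m * (‖p‖ ^ (α + 1) / r) := by
      rw [htp, Real.rpow_add_one hp0.ne']; field_simp
    have e2 : ‖p‖ ^ (α + 1) / r ≤ (2 * m * A) ^ (α + 1) := by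
      rw [div_le_iff₀ hr0]; exact hpe
    have e3 : ‖p‖ ^ (α + 1) ≤ (2 * m * A) ^ (α + 1) :=
      hpe.trans (mul_le_of_le_one_right (by positivity) hd)
    have e4 : (2 * m * A) ^ (α + 1) = (2 * m) ^ (α + 1) * A ^ (α + 1) :=
      Real.mul_rpow (by positivity) hA.le
    rw [e1, mul_assoc (2 * m + 1), ← e4]
    nlinarith
  have hq : ∀ h, |qf (hess (radFun A (n + 2) y) x) h| ≤ t * ‖h‖ ^ 2 := fun h =>
    abs_qf_hess_radFun A hA.le n y x h
  have hs := hess_isSymm (contDiff_radFun A (n + 2) y) x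
  refine ⟨hne, ?_, ?_⟩
  · refine (hg x hx p hne _ t hs ht0 hq).trans ?_
    rw [mul_assoc]
    exact mul_le_mul_of_nonneg_left hmain hK
  · refine (hg x hx (-p) (neg_ne_zero.2 hne) _ t (isSymm_neg' hs) ht0
      (fun h => by rw [qf_neg, abs_neg]; exact hq h)).trans ?_
    rw [norm_neg, mul_assoc]
    exact mul_le_mul_of_nonneg_left hmain hK

end Tests

/-! ### Constant tests at local maxima -/

section LocalConst
variable {N : ℕ} {Ω : Set (EN N)} {nv : EN N → EN N} {H : EN N → EN N → Mat N → ℝ}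
  {c : EN N → ℝ → ℝ} {u : EN N → ℝ} {x0 : EN N} {α : ℝ}

lemma c_near (hc : ContinuousOn (fun z : EN N × ℝ => c z.1 z.2) (closure Ω ×ˢ univ))
    (hx0 : x0 ∈ closure Ω) (k : ℝ) {ε : ℝ} (hε : 0 < ε) : ∃ δ > 0, ∀ x ∈ closure Ω, ∀ s,
      ‖x - x0‖ ≤ δ → |s - k| ≤ δ → |c x s - c x0 k| ≤ ε := by
  obtain ⟨δ, hδ, h⟩ := Metric.continuousWithinAt_iff.1 (hc (x0, k) ⟨hx0, trivial⟩) ε hε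
  refine ⟨δ / 2, half_pos hδ, fun x hx s h1 h2 => ?_⟩
  have := h (x := (x, s)) ⟨hx, trivial⟩ (by
    rw [Prod.dist_eq, dist_eq_norm, Real.dist_eq]
    exact max_lt (by simp; linarith) (by simp; linarith))
  rw [Real.dist_eq] at this
  exact this.le

lemma nhdsWithin_closure_eq (hΩ : IsOpen Ω) (hx0 : x0 ∈ Ω) : 𝓝[closure Ω] x0 = 𝓝 x0 :=
  nhdsWithin_eq_nhds.2 (mem_of_superset (hΩ.mem_nhds hx0) subset_closure)

/-- If `c(x0,k) < 0`, a subsolution lying below `k` near an interior point `x0` stays below `k` by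
a fixed amount at `x0`. Sliding the radial test functions over a neighbourhood of `x0` shows that
otherwise the subsolution is locally constant. -/
lemma exists_gap_of_neg (hα : -1 < α) (hH : Oper Ω α H) (hΩ : IsOpen Ω)
    (hc : ContinuousOn (fun z : EN N × ℝ => c z.1 z.2) (closure Ω ×ˢ univ))
    (hx0 : x0 ∈ Ω) {k : ℝ} (hk : c x0 k < 0) :
    ∃ R0 > 0, ∀ R, 0 < R → R ≤ R0 → ∃ ε > 0, ∀ f : EN N → ℝ,
      UpperSemicontinuousOn f (closure Ω) → (∀ x ∈ closure Ω, SubTest Ω nv H c f x) →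
      (∀ x ∈ closure Ω, WeakConst Ω c f x) →
      (∀ x ∈ closure Ω, ‖x - x0‖ ≤ R → f x ≤ k) → f x0 ≤ k - ε := by
  obtain ⟨n, K, hK, hrad⟩ := exists_radial_bound hα hH
  have hα1 : 0 < α + 1 := by linarith
  set γ := - c x0 k / 4 with hγ
  have hγ0 : 0 < γ := by rw [hγ]; linarith
  obtain ⟨δ, hδ, hcn⟩ := c_near hc (subset_closure hx0) k hγ0
  obtain ⟨R1, hR1, hball⟩ := Metric.isOpen_iff.1 hΩ x0 hx0
  refine ⟨min (min δ 1) (R1 / 2), by positivity, fun R hR hRle => ?_⟩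
  have hRδ : R ≤ δ := hRle.trans ((min_le_left _ _).trans (min_le_left _ _))
  have hR1' : R ≤ 1 := hRle.trans ((min_le_left _ _).trans (min_le_right _ _))
  have hRR : R < R1 := by
    have := hRle.trans (min_le_right _ _); linarith
  have hsub : ∀ x, ‖x - x0‖ ≤ R → x ∈ Ω := fun x hx => hball (by
    rw [mem_ball, dist_eq_norm]; linarith)
  obtain ⟨A, hA, hAK, hAδ⟩ : ∃ A > 0, K * A ^ (α + 1) < γ ∧ A < δ / 2 := by
    have hcont : ContinuousAt (fun A : ℝ => K * A ^ (α + 1)) 0 :=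
      continuousAt_const.mul (Real.continuousAt_rpow_const _ _ (Or.inr hα1.le))
    have h1 := hcont.eventually (gt_mem_nhds (a := γ)
      (by simp [Real.zero_rpow hα1.ne']; exact hγ0))
    have h2 : ∀ᶠ A : ℝ in 𝓝[>] 0, K * A ^ (α + 1) < γ := h1.filter_mono nhdsWithin_le_nhds
    have h3 : ∀ᶠ A : ℝ in 𝓝[>] 0, A < δ / 2 :=
      (gt_mem_nhds (half_pos hδ)).filter_mono nhdsWithin_le_nhds
    obtain ⟨A, ⟨a1, a2⟩, a3⟩ := ((h2.and h3).and self_mem_nhdsWithin).exists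
    exact ⟨A, a3, a1, a2⟩
  set ε := min (δ / 4) (A * ((R / 4) ^ 2) ^ (n + 2)) with hε
  have hε0 : 0 < ε := by positivity
  refine ⟨ε, hε0, fun f hf hT hW hfk => ?_⟩
  by_contra hcon
  push Not at hcon
  have hfx0 : f x0 ≤ k := hfk x0 (subset_closure hx0) (by simpa using hR.le)
  -- sliding the test function: it can only touch at its own centre
  have slide : ∀ y, ‖y - x0‖ ≤ R / 4 → ∀ x, ‖x - y‖ ≤ R / 2 →
      f x ≤ f y + A * (‖x - y‖ ^ 2) ^ (n + 2) := by
    intro y hy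
    have hin : ∀ x, ‖x - y‖ ≤ R / 2 → ‖x - x0‖ ≤ R := fun x hx => by
      have : x - x0 = (x - y) + (y - x0) := by abel
      rw [this]; exact (norm_add_le _ _).trans (by linarith)
    have hcpt : IsCompact (closedBall y (R / 2)) := isCompact_closedBall _ _
    have hBsub : closedBall y (R / 2) ⊆ closure Ω := fun x hx =>
      subset_closure (hsub x (hin x (by rw [← dist_eq_norm]; exact hx)))
    have husc : UpperSemicontinuousOn (fun x => f x + - radFun A (n + 2) y x)
        (closedBall y (R / 2)) :=
      (hf.mono hBsub).add
        ((contDiff_radFun A (n + 2) y).continuous.neg.continuousOn.upperSemicontinuousOn)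
    obtain ⟨z, hz, hzm⟩ := husc.exists_isMaxOn
      ⟨y, mem_closedBall_self (by linarith)⟩ hcpt
    have hzm' : ∀ x, ‖x - y‖ ≤ R / 2 → f x - radFun A (n + 2) y x
        ≤ f z - radFun A (n + 2) y z := fun x hx => by
      have := hzm (show x ∈ closedBall y (R / 2) by rw [mem_closedBall, dist_eq_norm]; exact hx)
      simp only [mem_ofPred_eq] at this
      linarith
    rw [mem_closedBall, dist_eq_norm] at hz
    have hradnn : ∀ x, 0 ≤ radFun A (n + 2) y x := fun x => by unfold radFun; positivity
    have hz0 := hzm' x0 (by rw [norm_sub_rev]; linarith)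
    have hrad0 : radFun A (n + 2) y x0 ≤ A * ((R / 4) ^ 2) ^ (n + 2) := by
      unfold radFun
      rw [norm_sub_rev]
      gcongr
    by_cases hzy : z = y
    · intro x hx
      have := hzm' x hx
      rw [hzy] at this
      have e : radFun A (n + 2) y y = 0 := by simp [radFun]
      rw [e] at this
      simp only [radFun] at this
      linarith
    exfalso
    have hzΩ : z ∈ Ω := hsub z (hin z hz)
    have hzk : f z ≤ k := hfk z (subset_closure hzΩ) (hin z hz)
    have hzlt : ‖z - y‖ < R / 2 := by
      rcases hz.lt_or_eq with h | h
      · exact h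
      · exfalso
        have e1 : radFun A (n + 2) y z = A * ((R / 2) ^ 2) ^ (n + 2) := by
          simp only [radFun, h]
        have e2 : ((R / 2) ^ 2) ^ (n + 2) = 4 ^ (n + 2) * ((R / 4) ^ 2) ^ (n + 2) := by
          rw [← mul_pow]; congr 1; ring
        have e3 : (2 : ℝ) ≤ 4 ^ (n + 2) :=
          calc (2 : ℝ) ≤ 4 ^ 1 := by norm_num
            _ ≤ 4 ^ (n + 2) := pow_le_pow_right₀ (by norm_num) (by omega)
        have e4 : ε ≤ A * ((R / 4) ^ 2) ^ (n + 2) := min_le_right _ _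
        have e5 : 2 * (A * ((R / 4) ^ 2) ^ (n + 2)) ≤ A * ((R / 2) ^ 2) ^ (n + 2) := by
          rw [e2]
          have : 0 ≤ A * ((R / 4) ^ 2) ^ (n + 2) := by positivity
          nlinarith
        rw [e1] at hz0
        linarith
    have hmax : IsLocalMaxOn (fun x => f x - radFun A (n + 2) y x) (closure Ω) z := by
      refine Filter.Eventually.filter_mono nhdsWithin_le_nhds ?_
      have : ball y (R / 2) ∈ 𝓝 z := isOpen_ball.mem_nhds (by
        rw [mem_ball, dist_eq_norm]; exact hzlt)
      filter_upwards [this] with x hx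
      rw [mem_ball, dist_eq_norm] at hx
      exact hzm' x hx.le
    obtain ⟨g1, g2, -⟩ := hrad A hA z (subset_closure hzΩ) y hzy (by linarith)
    have hfr : z ∉ frontier Ω := fun hfz => by rw [hΩ.frontier_eq] at hfz; exact hfz.2 hzΩ
    have h0 := hT z (subset_closure hzΩ) _ (contDiff_radFun A (n + 2) y) hmax g1
      (fun h => absurd h hfr)
    have hRpow : A * ((R / 4) ^ 2) ^ (n + 2) ≤ A := by
      refine mul_le_of_le_one_right hA.le (pow_le_one₀ (by positivity) ?_)
      nlinarith
    have hcz := hcn z (subset_closure hzΩ) (f z) ((hin z hz).trans hRδ) (by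
      have := hradnn z
      have e4 : ε ≤ δ / 4 := min_le_left _ _
      rw [abs_le]; constructor <;> linarith)
    have h1 := (abs_le.1 g2).2
    have h2 := (abs_le.1 hcz).2
    linarith
  have hflat : ∀ y ∈ ball x0 (R / 4), HasFDerivAt f (0 : EN N →L[ℝ] ℝ) y := by
    intro y hy
    have hO : (fun x => f x - f y) =O[𝓝 y] fun x => ‖x - y‖ ^ (2 * (n + 2)) := by
      refine Asymptotics.IsBigO.of_bound A ?_
      have hb : ball x0 (R / 4) ∈ 𝓝 y := isOpen_ball.mem_nhds hy
      filter_upwards [hb] with x hx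
      rw [mem_ball, dist_eq_norm] at hx hy
      have hxy : ‖x - y‖ ≤ R / 2 := by
        have : x - y = (x - x0) - (y - x0) := by abel
        rw [this]; exact (norm_sub_le _ _).trans (by linarith)
      have s1 := slide y hy.le x hxy
      have s2 := slide x hx.le y (by rwa [norm_sub_rev])
      rw [norm_sub_rev y x] at s2
      rw [Real.norm_eq_abs, norm_pow, norm_norm, pow_mul, abs_le]
      constructor <;> linarith
    have := hO.hasFDerivAt (𝕜 := ℝ) (by omega)
    simpa using this.add_const (f y)
  have hconst : ∀ x ∈ ball x0 (R / 4), f x = f x0 := by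
    intro x hx
    exact isOpen_ball.is_const_of_fderiv_eq_zero (convex_ball x0 (R / 4)).isPreconnected
      (fun y hy => (hflat y hy).differentiableAt.differentiableWithinAt)
      (fun y hy => (hflat y hy).fderiv) hx (mem_ball_self (by positivity))
  have hw := hW x0 (subset_closure hx0) hx0 (f x0) (by
    refine Filter.Eventually.filter_mono nhdsWithin_le_nhds ?_
    filter_upwards [ball_mem_nhds x0 (show 0 < R / 4 by positivity)] with x hx
    exact hconst x hx)
  have hcz := hcn x0 (subset_closure hx0) (f x0) (by simpa using hδ.le) (by
    have e4 : ε ≤ δ / 4 := min_le_left _ _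
    rw [abs_le]; constructor <;> linarith)
  have h2 := (abs_le.1 hcz).2
  linarith

/-- Together with the test-function condition, the condition for constant tests at points where
`u` is locally constant implies the condition at all local maxima. -/
lemma subConst_of_weak (hα : -1 < α) (hH : Oper Ω α H) (hΩ : IsOpen Ω)
    (hc : ContinuousOn (fun z : EN N × ℝ => c z.1 z.2) (closure Ω ×ˢ univ))
    (hu : UpperSemicontinuousOn u (closure Ω)) (hT : ∀ x ∈ closure Ω, SubTest Ω nv H c u x)
    (hW : ∀ x ∈ closure Ω, WeakConst Ω c u x) (x0 : EN N) : SubConst Ω c u x0 := by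
  intro hx0 hm
  by_contra hneg
  push Not at hneg
  obtain ⟨R0, hR0, h⟩ := exists_gap_of_neg (nv := nv) hα hH hΩ hc hx0 hneg
  obtain ⟨R1, hR1, hb⟩ := Metric.mem_nhdsWithin_iff.1 hm
  obtain ⟨ε, hε, h2⟩ := h (min R0 (R1 / 2)) (by positivity) (min_le_left _ _)
  have := h2 u hu hT hW (fun x hx hd => hb ⟨by
    rw [mem_ball, dist_eq_norm]
    have := hd.trans (min_le_right _ _)
    linarith, hx⟩)
  linarith

end LocalConst

/-! ### Stability, suprema and classical subsolutions -/

section Stability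
variable {N : ℕ} {Ω : Set (EN N)} {nv : EN N → EN N} {H : EN N → EN N → Mat N → ℝ}
  {c : EN N → ℝ → ℝ} {u : EN N → ℝ} {x0 : EN N} {α : ℝ}

lemma SubTest.of_le {f w : EN N → ℝ}
    (hle : ∀ᶠ z in 𝓝[closure Ω] x0, f z ≤ w z)
    (he : f x0 = w x0) (h : SubTest Ω nv H c f x0) : SubTest Ω nv H c w x0 := by
  intro φ hφ hm hg hb
  have := h φ hφ (by filter_upwards [hm, hle] with z h1 h2; rw [he]; linarith) hg hb
  rwa [he] at this

lemma SubConst.of_le {f w : EN N → ℝ} (hle : ∀ᶠ z in 𝓝[closure Ω] x0, f z ≤ w z)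
    (he : f x0 = w x0) (h : SubConst Ω c f x0) : SubConst Ω c w x0 := by
  intro hx hm
  have := h hx (by filter_upwards [hm, hle] with z h1 h2; rw [he]; linarith)
  rwa [he] at this

lemma SuperTest.of_le {f w : EN N → ℝ} (hle : ∀ᶠ z in 𝓝[closure Ω] x0, w z ≤ f z)
    (he : f x0 = w x0) (h : SuperTest Ω nv H c f x0) : SuperTest Ω nv H c w x0 := by
  intro φ hφ hm hg hb
  have := h φ hφ (by filter_upwards [hm, hle] with z h1 h2; rw [he]; linarith) hg hb
  rwa [he] at this

lemma SuperConst.of_le {f w : EN N → ℝ} (hle : ∀ᶠ z in 𝓝[closure Ω] x0, w z ≤ f z)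
    (he : f x0 = w x0) (h : SuperConst Ω c f x0) : SuperConst Ω c w x0 := by
  intro hx hm
  have := h hx (by filter_upwards [hm, hle] with z h1 h2; rw [he]; linarith)
  rwa [he] at this

/-- For a `C²` test with nonvanishing gradient the operator is continuous near the base point. -/
lemma oper_near (hH : Oper Ω α H)
    (hc : ContinuousOn (fun z : EN N × ℝ => c z.1 z.2) (closure Ω ×ˢ univ))
    {φ : EN N → ℝ} (hφ : ContDiff ℝ 2 φ) (hx0 : x0 ∈ closure Ω) {p0 : EN N} {X0 : Mat N}
    (hX0 : X0.IsSymm) (hp : gradient φ x0 = p0) (hX : ∀ h, qf (hess φ x0) h = qf X0 h)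
    (hp0 : p0 ≠ 0) (k : ℝ) {ε : ℝ} (hε : 0 < ε) :
    ∃ δ > 0, ∀ x ∈ closure Ω, ‖x - x0‖ ≤ δ → gradient φ x ≠ 0 ∧ ∀ s, |s - k| ≤ δ →
      |H x (gradient φ x) (hess φ x) + c x s - (H x0 p0 X0 + c x0 k)| ≤ ε := by
  obtain ⟨δ1, hδ1, h1⟩ := c_near hc hx0 k (half_pos hε)
  obtain ⟨δ2, hδ2, h2⟩ := hH.cont x0 hx0 p0 hp0 X0 hX0 (ε / 2) (half_pos hε)
  have e1 : ∀ᶠ x in 𝓝 x0, gradient φ x ≠ 0 :=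
    (continuous_gradient' hφ).continuousAt.eventually_ne (by rwa [hp])
  have e2 := (Metric.continuousAt_iff' (f := gradient φ) (b := x0)).1
    (continuous_gradient' hφ).continuousAt δ2 hδ2
  have e3 := hess_near hφ x0 hδ2
  obtain ⟨δ3, hδ3, h3⟩ := Metric.eventually_nhds_iff.1 ((e1.and e2).and e3)
  refine ⟨min (min δ1 δ2) (δ3 / 2), by positivity, fun x hx hd => ?_⟩
  have d1 : min (min δ1 δ2) (δ3 / 2) ≤ δ1 := (min_le_left _ _).trans (min_le_left _ _)
  have d2 : min (min δ1 δ2) (δ3 / 2) ≤ δ2 := (min_le_left _ _).trans (min_le_right _ _)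
  have d3 : min (min δ1 δ2) (δ3 / 2) ≤ δ3 / 2 := min_le_right _ _
  obtain ⟨⟨g1, g2⟩, g3⟩ := h3 (y := x) (by rw [dist_eq_norm]; linarith)
  refine ⟨g1, fun s hs => ?_⟩
  rw [dist_eq_norm, hp] at g2
  have k1 := h1 x hx s (hd.trans d1) (hs.trans d1)
  have k2 := h2 x hx _ g1 _ (hess_isSymm hφ x) (hd.trans d2) g2.le
    (fun h => by rw [← hX]; exact g3 h)
  rw [abs_le] at *
  constructor <;> linarith [k1.1, k1.2, k2.1, k2.2]

lemma bdry_near (hnv : ContinuousOn nv (frontier Ω)) {G : EN N → EN N} (hG : Continuous G)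
    (h0 : x0 ∈ frontier Ω → 0 < ⟪G x0, nv x0⟫) :
    ∀ᶠ x in 𝓝 x0, x ∈ frontier Ω → 0 < ⟪G x, nv x⟫ := by
  by_cases hx : x0 ∈ frontier Ω
  · have : ContinuousWithinAt (fun x => ⟪G x, nv x⟫) (frontier Ω) x0 :=
      ContinuousWithinAt.inner (𝕜 := ℝ) hG.continuousWithinAt (hnv x0 hx)
    exact eventually_nhdsWithin_iff.1 (this.eventually (lt_mem_nhds (h0 hx)))
  · filter_upwards [isClosed_frontier.isOpen_compl.mem_nhds hx] with x hx h
    exact absurd h hx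

/-- The supremum of a family of subsolutions satisfies the test-function condition. -/
lemma subTest_sup (hH : Oper Ω α H)
    (hnv : ContinuousOn nv (frontier Ω))
    (hc : ContinuousOn (fun z : EN N × ℝ => c z.1 z.2) (closure Ω ×ˢ univ))
    {S : Set (EN N → ℝ)} {U : EN N → ℝ} (hx0 : x0 ∈ closure Ω)
    (hS : ∀ f ∈ S, UpperSemicontinuousOn f (closure Ω) ∧ ∀ x ∈ closure Ω, SubTest Ω nv H c f x)
    (hle : ∀ f ∈ S, ∀ x ∈ closure Ω, f x ≤ U x)
    (happ : ∀ ε > 0, ∃ f ∈ S, U x0 - ε < f x0) (hU : ContinuousWithinAt U (closure Ω) x0) :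
    SubTest Ω nv H c U x0 := by
  intro φ hφ hm hg hb
  by_contra hneg
  push Not at hneg
  -- adding a quartic keeps the second order jet at `x0` and makes the contact strict
  set ψ : EN N → ℝ := fun x => φ x + radFun 1 2 x0 x with hψdef
  have hψ : ContDiff ℝ 2 ψ := hφ.add (contDiff_radFun 1 2 x0)
  have hψg : gradient ψ x0 = gradient φ x0 := by
    rw [hψdef, gradient_add' hφ (contDiff_radFun 1 2 x0),
      (hasGradientAt_radFun 1 1 x0 x0).gradient]; simp
  have hψh : ∀ h, qf (hess ψ x0) h = qf (hess φ x0) h := fun h => by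
    rw [hψdef, hess_add' hφ (contDiff_radFun 1 2 x0), qf_add]
    have := abs_qf_hess_radFun 1 zero_le_one 0 x0 x0 h
    simp at this
    rw [this, add_zero]
  set γ := -(H x0 (gradient φ x0) (hess φ x0) + c x0 (U x0)) with hγ
  have hγ0 : 0 < γ := by rw [hγ]; linarith
  obtain ⟨δ, hδ, hop⟩ := oper_near hH hc hψ hx0 (hess_isSymm hφ x0) hψg hψh hg (U x0)
    (half_pos hγ0)
  have hbd := bdry_near hnv (continuous_gradient' hψ) (x0 := x0) (by rwa [hψg])
  have hUc := Metric.continuousWithinAt_iff'.1 hU δ hδ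
  have hψc := Metric.continuousAt_iff'.1 (hψ.continuous.continuousAt (x := x0)) (δ / 2)
    (half_pos hδ)
  obtain ⟨R1, hR1, hb1⟩ := Metric.eventually_nhds_iff.1 (hbd.and hψc)
  obtain ⟨R2, hR2, hb2⟩ := Metric.mem_nhdsWithin_iff.1 (hm.and hUc)
  set R := min (min (R1 / 2) (R2 / 2)) δ with hR
  have hR0 : 0 < R := by positivity
  have r1 : R < R1 := by
    have : R ≤ R1 / 2 := (min_le_left _ _).trans (min_le_left _ _)
    linarith
  have r2 : R < R2 := by
    have : R ≤ R2 / 2 := (min_le_left _ _).trans (min_le_right _ _)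
    linarith
  have r3 : R ≤ δ := min_le_right _ _
  obtain ⟨f, hfS, hfx⟩ := happ (min (δ / 2) ((R ^ 2) ^ 2)) (by positivity)
  obtain ⟨hfu, hfT⟩ := hS f hfS
  have hK : IsCompact (closedBall x0 R ∩ closure Ω) :=
    (isCompact_closedBall x0 R).inter_right isClosed_closure
  have husc : UpperSemicontinuousOn (fun x => f x + - ψ x) (closedBall x0 R ∩ closure Ω) :=
    (hfu.mono inter_subset_right).add hψ.continuous.neg.continuousOn.upperSemicontinuousOn
  obtain ⟨z, ⟨hzR, hzc⟩, hzm⟩ := husc.exists_isMaxOn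
    (show (closedBall x0 R ∩ closure Ω).Nonempty from
      ⟨x0, mem_closedBall_self hR0.le, hx0⟩) hK
  have hzm' : ∀ x ∈ closedBall x0 R ∩ closure Ω, f x - ψ x ≤ f z - ψ z := fun x hx => by
    have := hzm hx
    simp only [mem_ofPred_eq] at this
    linarith
  have hz0 := hzm' x0 ⟨mem_closedBall_self hR0.le, hx0⟩
  rw [mem_closedBall] at hzR
  have hUz := hb2 (show z ∈ ball x0 R2 ∩ closure Ω from ⟨hzR.trans_lt r2, hzc⟩)
  obtain ⟨hUz1, hUz2⟩ := hUz
  obtain ⟨hz1, hz2⟩ := hb1 (hzR.trans_lt r1)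
  have hfz := hle f hfS z hzc
  have eψ0 : ψ x0 = φ x0 := by simp [hψdef, radFun]
  have eψz : ψ z = φ z + (‖z - x0‖ ^ 2) ^ 2 := by simp [hψdef, radFun]
  have hmin1 : min (δ / 2) ((R ^ 2) ^ 2) ≤ δ / 2 := min_le_left _ _
  have hmin2 : min (δ / 2) ((R ^ 2) ^ 2) ≤ (R ^ 2) ^ 2 := min_le_right _ _
  have hlt : (‖z - x0‖ ^ 2) ^ 2 < (R ^ 2) ^ 2 := by
    linarith
  have hlt' : ‖z - x0‖ < R := by
    by_contra hge
    push Not at hge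
    have : (R ^ 2) ^ 2 ≤ (‖z - x0‖ ^ 2) ^ 2 := by gcongr
    linarith
  have hmax : IsLocalMaxOn (fun x => f x - ψ x) (closure Ω) z := by
    have : ball x0 R ∈ 𝓝 z := isOpen_ball.mem_nhds (by rw [mem_ball, dist_eq_norm]; exact hlt')
    filter_upwards [mem_nhdsWithin_of_mem_nhds this, self_mem_nhdsWithin] with x hx1 hx2
    exact hzm' x ⟨ball_subset_closedBall hx1, hx2⟩
  obtain ⟨g1, g2⟩ := hop z hzc (by linarith)
  have h0 := hfT z hzc ψ hψ hmax g1 hz1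
  rw [Real.dist_eq, abs_lt] at hUz2 hz2
  have h1 := g2 (f z) (by rw [abs_le]; constructor <;> linarith)
  rw [abs_le] at h1
  linarith

variable {ρ : EN N → ℝ}

/-- Points slightly inside along the normal belong to the domain. -/
lemma inward_mem (hρ : IsC2DefiningFun Ω nv ρ) (hx0 : x0 ∈ frontier Ω) :
    ∀ᶠ t : ℝ in 𝓝[>] 0, x0 - t • nv x0 ∈ Ω := by
  obtain ⟨h1, h2, h3, h4⟩ := hρ
  obtain ⟨h5, h6⟩ := h4 x0 hx0
  have hρ0 : ρ x0 = 0 := by rw [h3] at hx0; exact hx0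
  have hgp : 0 < ‖gradient ρ x0‖ := norm_pos_iff.2 h5
  have hd : HasDerivAt (fun t : ℝ => ρ (x0 - t • nv x0)) (-‖gradient ρ x0‖) 0 := by
    have hl : HasDerivAt (fun t : ℝ => x0 - t • nv x0) (-nv x0) 0 := by
      simpa using ((hasDerivAt_id (0 : ℝ)).smul_const (nv x0)).const_sub x0
    have hf : HasFDerivAt ρ (fderiv ℝ ρ x0) (x0 - (0 : ℝ) • nv x0) := by
      simpa using (h1.diff2 x0).hasFDerivAt
    have := hf.comp_hasDerivAt (0 : ℝ) hl
    refine this.congr_deriv ?_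
    rw [fderiv_eq_inner_gradient, inner_neg_right, h6, inner_smul_right,
      real_inner_self_eq_norm_sq]
    field_simp
  have hs := hd.hasDerivWithinAt (s := Ioi 0)
  have hev : ∀ᶠ t : ℝ in 𝓝[>] 0, slope (fun t : ℝ => ρ (x0 - t • nv x0)) 0 t < 0 := by
    have := (hasDerivWithinAt_iff_tendsto_slope' (by simp)).1 hs
    exact this.eventually (gt_mem_nhds (by linarith))
  filter_upwards [hev, self_mem_nhdsWithin] with t ht ht0
  rw [h2]
  have ht0' : (0 : ℝ) < t := ht0
  rw [slope_def_field] at ht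
  simp only [zero_smul, sub_zero, hρ0] at ht
  have := (div_neg_iff.1 ht)
  rcases this with h | h
  · linarith [h.2]
  · exact h.1

/-- At a boundary maximum the gradient does not point inward. -/
lemma inner_normal_nonneg (hρ : IsC2DefiningFun Ω nv ρ) (hx0 : x0 ∈ frontier Ω)
    {ψ : EN N → ℝ} (hψ : ContDiff ℝ 2 ψ) (hm : IsLocalMaxOn ψ (closure Ω) x0) :
    0 ≤ ⟪gradient ψ x0, nv x0⟫ := by
  have hd : HasDerivAt (fun t : ℝ => ψ (x0 - t • nv x0)) (-⟪gradient ψ x0, nv x0⟫) 0 := by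
    have hl : HasDerivAt (fun t : ℝ => x0 - t • nv x0) (-nv x0) 0 := by
      simpa using ((hasDerivAt_id (0 : ℝ)).smul_const (nv x0)).const_sub x0
    have hf : HasFDerivAt ψ (fderiv ℝ ψ x0) (x0 - (0 : ℝ) • nv x0) := by
      simpa using (hψ.diff2 x0).hasFDerivAt
    refine (hf.comp_hasDerivAt (0 : ℝ) hl).congr_deriv ?_
    rw [fderiv_eq_inner_gradient, inner_neg_right]
  have ht : Tendsto (fun t : ℝ => x0 - t • nv x0) (𝓝[>] 0) (𝓝[closure Ω] x0) := by
    refine tendsto_nhdsWithin_iff.2 ⟨?_, ?_⟩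
    · have : Continuous fun t : ℝ => x0 - t • nv x0 := by fun_prop
      have := this.tendsto 0
      simp only [zero_smul, sub_zero] at this
      exact this.mono_left nhdsWithin_le_nhds
    · filter_upwards [inward_mem hρ hx0] with t ht using subset_closure ht
  have hev := ht.eventually hm
  have := (hasDerivWithinAt_iff_tendsto_slope' (by simp)).1 (hd.hasDerivWithinAt (s := Ioi 0))
  have hle := le_of_tendsto this (b := 0) (by
    filter_upwards [hev, self_mem_nhdsWithin] with t h1 h2
    have h2' : (0 : ℝ) < t := h2
    rw [slope_def_field]
    simp only [zero_smul, sub_zero]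
    exact div_nonpos_of_nonpos_of_nonneg (by linarith) h2'.le)
  linarith

/-- A function that is a classical subsolution where its gradient does not vanish, with
nonpositive normal derivative, satisfies the test-function condition. -/
lemma subTest_of_classical (hΩ : IsOpen Ω) (hρ : IsC2DefiningFun Ω nv ρ) (hH : Oper Ω α H)
    {ψ : EN N → ℝ} (hψ : ContDiff ℝ 2 ψ)
    (h1 : x0 ∈ Ω → gradient ψ x0 ≠ 0 →
      0 ≤ H x0 (gradient ψ x0) (hess ψ x0) + c x0 (ψ x0))
    (h2 : x0 ∈ frontier Ω → ⟪gradient ψ x0, nv x0⟫ ≤ 0) (hx0 : x0 ∈ closure Ω) :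
    SubTest Ω nv H c ψ x0 := by
  intro φ hφ hm hg hb
  by_cases hx : x0 ∈ Ω
  · have hm' : IsLocalMax (fun x => ψ x - φ x) x0 := by
      rw [IsLocalMaxOn, IsMaxFilter, nhdsWithin_closure_eq hΩ hx] at hm
      exact hm
    obtain ⟨s1, s2⟩ := second_order_max (hψ.sub hφ) hm'
    rw [gradient_sub' hψ hφ, sub_eq_zero] at s1
    rw [s1] at h1
    refine (h1 hx hg).trans ?_
    have := hH.mono x0 hx0 _ hg _ _ (hess_isSymm hψ x0) (hess_isSymm hφ x0) (fun h => by
      have := s2 h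
      rw [hess_sub' hψ hφ, qf_sub] at this
      linarith)
    linarith
  · have hf : x0 ∈ frontier Ω := by rw [hΩ.frontier_eq]; exact ⟨hx0, hx⟩
    have := inner_normal_nonneg hρ hf (hψ.sub hφ) hm
    rw [gradient_sub' hψ hφ, inner_sub_left] at this
    linarith [hb hf, h2 hf]

lemma subConst_of_classical (hΩ : IsOpen Ω)
    {ψ : EN N → ℝ} (h1 : x0 ∈ Ω → gradient ψ x0 = 0 → 0 ≤ c x0 (ψ x0)) :
    SubConst Ω c ψ x0 := by
  intro hx hm
  have hm' : IsLocalMax ψ x0 := by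
    rw [IsLocalMaxOn, IsMaxFilter, nhdsWithin_closure_eq hΩ hx] at hm
    exact hm
  refine h1 hx (ext_inner_right ℝ fun h => ?_)
  rw [← fderiv_eq_inner_gradient, hm'.fderiv_eq_zero]; simp

lemma continuousOn_normal (hρ : IsC2DefiningFun Ω nv ρ) : ContinuousOn nv (frontier Ω) := by
  obtain ⟨h1, h2, h3, h4⟩ := hρ
  have hc : ContinuousOn (fun x => ‖gradient ρ x‖⁻¹ • gradient ρ x) (frontier Ω) := by
    have hn : ContinuousOn (fun x => ‖gradient ρ x‖) (frontier Ω) :=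
      (continuous_gradient' h1).norm.continuousOn
    exact (hn.inv₀ fun x hx => by simpa using (h4 x hx).1).smul
      (continuous_gradient' h1).continuousOn
  exact hc.congr fun x hx => (h4 x hx).2

end Stability

/-! ### The boundary-weighted modulus and its expansion -/

section Modulus
variable {N : ℕ}

/-- Taylor estimates for a `C²` function, uniform on a ball. -/
lemma exists_taylor_bound {f : EN N → ℝ} (hf : ContDiff ℝ 2 f) (R : ℝ) :
    ∃ C, 0 ≤ C ∧ ∀ x ∈ closedBall (0 : EN N) R, ∀ y ∈ closedBall (0 : EN N) R,
      ‖gradient f x‖ ≤ C ∧ |f y - f x - ⟪gradient f x, y - x⟫| ≤ C * ‖y - x‖ ^ 2 ∧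
      |f y - f x| ≤ C * ‖y - x‖ := by
  have hK : IsCompact (closedBall (0 : EN N) R) := isCompact_closedBall 0 R
  have hcv : Convex ℝ (closedBall (0 : EN N) R) := convex_closedBall 0 R
  have hf1 : ContDiff ℝ 1 (fderiv ℝ f) := hf.fderiv_right (by norm_num)
  obtain ⟨C1, h1⟩ := hK.exists_bound_of_continuousOn (hf1.continuous).continuousOn
  obtain ⟨C2, h2⟩ := hK.exists_bound_of_continuousOn
    (hf1.continuous_fderiv (by norm_num)).continuousOn
  have hlip : ∀ x ∈ closedBall (0 : EN N) R, ∀ y ∈ closedBall (0 : EN N) R,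
      ‖fderiv ℝ f y - fderiv ℝ f x‖ ≤ C2 * ‖y - x‖ := fun x hx y hy =>
    hcv.norm_image_sub_le_of_norm_fderiv_le
      (fun z _ => (hf1.differentiable (by norm_num)) z) h2 hx hy
  refine ⟨max (max C1 C2) 0, le_max_right _ _, fun x hx y hy => ⟨?_, ?_, ?_⟩⟩
  · have : ‖gradient f x‖ = ‖fderiv ℝ f x‖ := by simp [gradient]
    rw [this]
    exact (h1 x hx).trans ((le_max_left _ _).trans (le_max_left _ _))
  · have hseg : segment ℝ x y ⊆ closedBall (0 : EN N) R := hcv.segment_subset hx hy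
    have hb : ∀ z ∈ segment ℝ x y, ‖fderiv ℝ f z - fderiv ℝ f x‖ ≤ max (max C1 C2) 0 * ‖y - x‖ := by
      intro z hz
      refine (hlip x hx z (hseg hz)).trans ?_
      have hzx : ‖z - x‖ ≤ ‖y - x‖ := by
        have := norm_sub_le_of_mem_segment hz
        simpa [norm_sub_rev] using this
      exact mul_le_mul ((le_max_right _ _).trans (le_max_left _ _)) hzx (norm_nonneg _)
        (le_max_right _ _)
    have := (convex_segment x y).norm_image_sub_le_of_norm_fderiv_le'
      (fun z _ => hf.diff2 z) hb (left_mem_segment ℝ x y) (right_mem_segment ℝ x y)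
    rw [fderiv_eq_inner_gradient, Real.norm_eq_abs] at this
    calc _ ≤ _ := this
      _ = _ := by ring
  · have := hcv.norm_image_sub_le_of_norm_fderiv_le (fun z _ => hf.diff2 z) h1 hx hy
    rw [Real.norm_eq_abs] at this
    exact this.trans (mul_le_mul_of_nonneg_right
      ((le_max_left _ _).trans (le_max_left _ _)) (norm_nonneg _))

/-- A weight `h` with gradient `Dh` on `closure Ω`. The field `bdry` says that `h` grows towards the
boundary fast enough to make `h(x) h(y) √‖x - y‖` strictly increasing in the outward direction at a
boundary point `x`, for every `y ∈ closure Ω`. -/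
structure Weight (Ω : Set (EN N)) (nv : EN N → EN N) (h : EN N → ℝ) (Dh : EN N → EN N)
    (h0 C : ℝ) : Prop where
  pos : 0 < h0
  C_nonneg : 0 ≤ C
  lower : ∀ x ∈ closure Ω, h0 ≤ h x
  upper : ∀ x ∈ closure Ω, h x ≤ 1
  grad : ∀ x ∈ closure Ω, ‖Dh x‖ ≤ C
  taylor : ∀ x ∈ closure Ω, ∀ y ∈ closure Ω, |h y - h x - ⟪Dh x, y - x⟫| ≤ C * ‖y - x‖ ^ 2
  lip : ∀ x ∈ closure Ω, ∀ y ∈ closure Ω, |h y - h x| ≤ C * ‖y - x‖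
  bdry : ∀ x ∈ frontier Ω, ∀ y ∈ closure Ω, y ≠ x →
    0 < ⟪(h x / (2 * ‖x - y‖ ^ 2)) • (x - y) + Dh x, nv x⟫

lemma gradient_exp_comp {ρ : EN N → ℝ} (hρ : ContDiff ℝ 2 ρ) (K : ℝ) (x : EN N) :
    gradient (fun z => Real.exp (K * ρ z)) x = (Real.exp (K * ρ x) * K) • gradient ρ x := by
  have h1 : HasFDerivAt ρ (fderiv ℝ ρ x) x := (hρ.diff2 x).hasFDerivAt
  have h2 := ((h1.const_mul K).exp)
  refine ext_inner_right ℝ fun v => ?_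
  rw [← fderiv_eq_inner_gradient, h2.fderiv, inner_smul_left, ← fderiv_eq_inner_gradient]
  simp [mul_assoc]

lemma closure_subset_nonpos {Ω : Set (EN N)} {nv : EN N → EN N} {ρ : EN N → ℝ}
    (hρ : IsC2DefiningFun Ω nv ρ) {x : EN N} (hx : x ∈ closure Ω) : ρ x ≤ 0 := by
  have hcl : IsClosed {x | ρ x ≤ 0} := isClosed_le hρ.1.continuous continuous_const
  refine closure_minimal ?_ hcl hx
  intro z hz
  rw [hρ.2.1] at hz
  exact (show ρ z < 0 from hz).le

/-- The weight is `h = exp (K ρ)` with `ρ` a defining function of `Ω`; the constant `K` is taken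
large compared with the curvature of the boundary. -/
lemma exists_weight {Ω : Set (EN N)} {nv : EN N → EN N} (hΩ : IsC2Domain Ω nv) :
    ∃ h Dh h0 C, Weight Ω nv h Dh h0 C := by
  obtain ⟨_, _, hbd, ρ, hρ⟩ := hΩ
  obtain ⟨R, hR⟩ := hbd.closure.subset_closedBall (0 : EN N)
  obtain ⟨C1, hC1, hT1⟩ := exists_taylor_bound hρ.1 R
  have hcl : IsCompact (closure Ω) := hbd.isCompact_closure
  have hfr : IsCompact (frontier Ω) :=
    hcl.of_isClosed_subset isClosed_frontier frontier_subset_closure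
  have hcont : ContinuousOn (fun x => C1 * (‖gradient ρ x‖ ^ 2)⁻¹) (frontier Ω) := by
    have hn : ContinuousOn (fun x => ‖gradient ρ x‖ ^ 2) (frontier Ω) :=
      ((continuous_gradient' hρ.1).norm.pow 2).continuousOn
    exact continuousOn_const.mul (hn.inv₀ fun x hx => by simpa using (hρ.2.2.2 x hx).1)
  obtain ⟨K, hK⟩ := hfr.exists_bound_of_continuousOn hcont
  set K' := max K 0 + 1 with hK'
  have hK'0 : 0 < K' := by positivity
  set h : EN N → ℝ := fun z => Real.exp (K' * ρ z) with hh
  have hhC : ContDiff ℝ 2 h := (contDiff_const.mul hρ.1).exp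
  obtain ⟨C2, hC2, hT2⟩ := exists_taylor_bound hhC R
  obtain ⟨C3, hC3⟩ := hcl.exists_bound_of_continuousOn hρ.1.continuous.continuousOn
  refine ⟨h, gradient h, Real.exp (K' * (-C3)), C2, Real.exp_pos _, hC2, fun x hx => ?_,
    fun x hx => ?_, fun x hx => (hT2 x (hR hx) x (hR hx)).1,
    fun x hx y hy => (hT2 x (hR hx) y (hR hy)).2.1,
    fun x hx y hy => (hT2 x (hR hx) y (hR hy)).2.2, fun x hx y hy hxy => ?_⟩
  · have := hC3 x hx
    rw [Real.norm_eq_abs, abs_le] at this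
    exact Real.exp_le_exp.2 (mul_le_mul_of_nonneg_left this.1 hK'0.le)
  · exact Real.exp_le_one_iff.2 (mul_nonpos_of_nonneg_of_nonpos hK'0.le
      (closure_subset_nonpos hρ hx))
  · obtain ⟨hg0, hnv⟩ := hρ.2.2.2 x hx
    have hρx : ρ x = 0 := by
      have := hx; rw [hρ.2.2.1] at this; exact this
    have hgp : 0 < ‖gradient ρ x‖ := norm_pos_iff.2 hg0
    have hxc := frontier_subset_closure hx
    have hKx := hK x hx
    rw [Real.norm_eq_abs] at hKx
    have hKx' : C1 ≤ (max K 0) * ‖gradient ρ x‖ ^ 2 := by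
      have : C1 * (‖gradient ρ x‖ ^ 2)⁻¹ ≤ max K 0 := (le_abs_self _).trans (hKx.trans (le_max_left _ _))
      rwa [← div_eq_mul_inv, div_le_iff₀ (by positivity)] at this
    have ht := (hT1 x (hR hxc) y (hR hy)).2.1
    rw [abs_le, hρx] at ht
    have hy0 := closure_subset_nonpos hρ hy
    have hxy' : 0 < ‖x - y‖ := norm_pos_iff.2 (sub_ne_zero.2 hxy.symm)
    have hin : -(C1 * ‖x - y‖ ^ 2) ≤ ⟪x - y, gradient ρ x⟫ := by
      have e : ⟪gradient ρ x, y - x⟫ = - ⟪x - y, gradient ρ x⟫ := by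
        rw [← neg_sub x y, inner_neg_right, real_inner_comm]
      rw [e, ← norm_sub_rev] at ht
      linarith [ht.2, ht.1]
    rw [hnv, inner_smul_right]
    refine mul_pos (inv_pos.2 hgp) ?_
    rw [hh, gradient_exp_comp hρ.1, inner_add_left, inner_smul_left, inner_smul_left,
      real_inner_self_eq_norm_sq]
    simp only [hρx, mul_zero, Real.exp_zero, one_mul, conj_trivial]
    have : -(C1 / 2) ≤ 1 / (2 * ‖x - y‖ ^ 2) * ⟪x - y, gradient ρ x⟫ := by
      have := mul_le_mul_of_nonneg_left hin (show 0 ≤ 1 / (2 * ‖x - y‖ ^ 2) by positivity)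
      refine le_trans (le_of_eq ?_) this
      field_simp
    have h5 : 0 < ‖gradient ρ x‖ ^ 2 := by positivity
    nlinarith

/-- The modulus `L √‖x - y‖ h(x) h(y)`. -/
def omg (h : EN N → ℝ) (L : ℝ) (x y : EN N) : ℝ := L * √‖x - y‖ * (h x * h y)

lemma omg_comm (h : EN N → ℝ) (L : ℝ) (x y : EN N) : omg h L x y = omg h L y x := by
  rw [omg, omg, norm_sub_rev, mul_comm (h x)]

lemma omg_self (h : EN N → ℝ) (L : ℝ) (x : EN N) : omg h L x x = 0 := by
  simp [omg]

lemma quartic_bound {t : ℝ} (ht : |t| ≤ 1 / 40) :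
    0 ≤ 1 + t / 4 - 5 / 64 * t ^ 2 ∧ 1 + t ≤ ((1 + t / 4 - 5 / 64 * t ^ 2) ^ 2) ^ 2 := by
  rw [abs_le] at ht
  have h2 : t ^ 2 ≤ 1 / 1600 := by nlinarith
  have h20 := sq_nonneg t
  have h3 : -(1 / 40 * t ^ 2) ≤ t ^ 3 := by
    have : 0 ≤ (t + 1 / 40) * t ^ 2 := mul_nonneg (by linarith) h20
    linarith
  have h3' : t ^ 3 ≤ 1 / 40 * t ^ 2 := by
    have : 0 ≤ (1 / 40 - t) * t ^ 2 := mul_nonneg (by linarith) h20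
    linarith
  have h4 : 0 ≤ t ^ 4 := by positivity
  have hq2 : 1 + t / 2 - 3 / 32 * t ^ 2 - 5 / 128 * t ^ 3 ≤ (1 + t / 4 - 5 / 64 * t ^ 2) ^ 2 := by
    have : (1 + t / 4 - 5 / 64 * t ^ 2) ^ 2 = 1 + t / 2 - 3 / 32 * t ^ 2 - 5 / 128 * t ^ 3
      + 25 / 4096 * t ^ 4 := by ring
    linarith
  have hq3 : 0 ≤ 1 + t / 2 - 3 / 32 * t ^ 2 - 5 / 128 * t ^ 3 := by linarith
  refine ⟨by linarith, le_trans ?_ (pow_le_pow_left₀ hq3 hq2 2)⟩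
  have hfac : (1 + t / 2 - 3 / 32 * t ^ 2 - 5 / 128 * t ^ 3) ^ 2 - (1 + t) =
    t ^ 2 * (1 / 16 - t * (3 / 32 + 5 / 64) + t ^ 2 * (9 / 1024 - 5 / 128) + t ^ 3 * (15 / 2048)
      + t ^ 4 * (25 / 16384)) := by ring
  have : 0 ≤ 1 / 16 - t * (3 / 32 + 5 / 64) + t ^ 2 * (9 / 1024 - 5 / 128) + t ^ 3 * (15 / 2048)
      + t ^ 4 * (25 / 16384) := by linarith
  have := mul_nonneg h20 this
  linarith

/-- Second order upper expansion of `√‖d + δ‖` around `d = r • e`; the coefficients leave room so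
that the radial coefficient stays negative after regularisation. -/
lemma sqrt_norm_expand {e δ : EN N} {r : ℝ} (he : ‖e‖ = 1) (hr : 0 < r) (hδ : ‖δ‖ ≤ r / 100) :
    √‖r • e + δ‖ ≤ √r * (1 + ⟪e, δ⟫ / (2 * r) + (9 / 32 * ‖δ‖ ^ 2 - 10 / 32 * ⟪e, δ⟫ ^ 2) / r ^ 2)
      := by
  set σ := ⟪e, δ⟫ / r with hσ
  set τ := ‖δ‖ ^ 2 / r ^ 2 with hτ
  have hσ1 : |σ| ≤ 1 / 100 := by
    rw [hσ, abs_div, abs_of_pos hr, div_le_iff₀ hr]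
    have := abs_real_inner_le_norm e δ
    rw [he] at this; linarith
  have hτ0 : 0 ≤ τ := by positivity
  have hτ1 : τ ≤ 1 / 10000 := by
    rw [hτ, div_le_iff₀ (by positivity)]
    nlinarith [norm_nonneg δ]
  rw [abs_le] at hσ1
  have hn : ‖r • e + δ‖ ^ 2 = r ^ 2 * (1 + 2 * σ + τ) := by
    rw [norm_add_sq_real, norm_smul, he, inner_smul_left, hσ, hτ, Real.norm_eq_abs, abs_of_pos hr]
    simp only [conj_trivial]
    field_simp
  set B := 1 + σ / 2 + 9 / 32 * τ - 10 / 32 * σ ^ 2 with hB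
  have hBe : 1 + ⟪e, δ⟫ / (2 * r) + (9 / 32 * ‖δ‖ ^ 2 - 10 / 32 * ⟪e, δ⟫ ^ 2) / r ^ 2 = B := by
    rw [hB, hσ, hτ]; field_simp; ring
  rw [hBe]
  set t := 2 * σ + τ with ht
  have hBt : 1 + t / 4 - 5 / 64 * t ^ 2 ≤ B := by
    rw [hB, ht]
    nlinarith [mul_nonneg hτ0 (show 0 ≤ σ + 1 / 100 by linarith), sq_nonneg τ]
  have ht1 : |t| ≤ 1 / 40 := by rw [abs_le, ht]; constructor <;> linarith
  obtain ⟨hB0, hq4⟩ := quartic_bound ht1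
  have hq : 1 + t ≤ (B ^ 2) ^ 2 := by
    exact hq4.trans (pow_le_pow_left₀ (sq_nonneg _) (pow_le_pow_left₀ hB0 hBt 2) 2)
  have hB0' : 0 ≤ B := hB0.trans hBt
  rw [Real.sqrt_le_left (by positivity)]
  rw [mul_pow, Real.sq_sqrt hr.le]
  refine abs_le_of_sq_le_sq' ?_ (by positivity) |>.2
  rw [hn, mul_pow]
  refine mul_le_mul_of_nonneg_left ?_ (by positivity)
  linarith
end Modulus

section Modulus2
variable {N : ℕ}

/-- The gradient of `omg h L · y` at `x`, for a weight `h` with gradient `Dh`. -/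
def omgGrad (h : EN N → ℝ) (Dh : EN N → EN N) (L : ℝ) (x y : EN N) : EN N :=
  (L * √‖x - y‖ * h y) • ((h x / (2 * ‖x - y‖ ^ 2)) • (x - y) + Dh x)

/-- The size of the second derivative of `omg h L` at `(x, y)`. -/
def omgM (h : EN N → ℝ) (L : ℝ) (x y : EN N) : ℝ := L * √‖x - y‖ * (h x * h y) / ‖x - y‖ ^ 2

/-- The scalar inequality behind `omg_expand`: `a, b` are the values of the weight at the base
points and `a', b'` those at the displaced points, with linear increments `l1, l2`. -/
lemma expand_core {a b a' b' l1 l2 C h0 u v r β κ : ℝ} (hr : 0 < r) (hr1 : r ≤ 1) (hC : 0 ≤ C)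
    (hh : 0 < h0) (ha0 : h0 ≤ a) (ha1 : a ≤ 1) (hb0 : h0 ≤ b) (hb1 : b ≤ 1)
    (hu : 0 ≤ u) (hv : 0 ≤ v) (hur : u ≤ r / 200) (hvr : v ≤ r / 200)
    (hl1 : |l1| ≤ C * u) (hl2 : |l2| ≤ C * v) (ht1 : |a' - a - l1| ≤ C * u ^ 2)
    (ht2 : |b' - b - l2| ≤ C * v ^ 2) (hp1 : |a' - a| ≤ C * u) (hp2 : |b' - b| ≤ C * v)
    (hβ : |β| ≤ (u + v) / (2 * r)) (hκ : |κ| ≤ 10 / 32 * ((u + v) / r) ^ 2) :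
    (1 + β + κ) * (a' * b') ≤ a * b + (a * b * β + b * l1 + a * l2) + a * b * κ
      + a * b / r ^ 2 * (((4 * C + 2 * C ^ 2) / h0 ^ 2 + 1) * r * (u ^ 2 + v ^ 2)) := by
  set q := (u + v) / r with hq
  have hq0 : 0 ≤ q := by positivity
  have hq1 : q ≤ 1 / 100 := by rw [hq, div_le_iff₀ hr]; linarith
  have hβ' : |β| ≤ q / 2 := by
    refine hβ.trans (le_of_eq ?_); rw [hq]; field_simp
  have hκ' : |κ| ≤ q / 2 := hκ.trans (by nlinarith)
  have hB1 : |β + κ| ≤ q := (abs_add_le _ _).trans (by linarith)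
  have hB2 : |1 + β + κ| ≤ 2 := by rw [abs_le] at *; constructor <;> linarith
  set ℓ := b * l1 + a * l2 with hℓ
  set err := (a' - a) * (b' - b) + a * (b' - b - l2) + b * (a' - a - l1) with herr
  have hℓb : |ℓ| ≤ C * (u + v) := by
    rw [hℓ]
    refine (abs_add_le _ _).trans ?_
    rw [abs_mul, abs_mul, abs_of_nonneg (by linarith : 0 ≤ b), abs_of_nonneg (by linarith : 0 ≤ a)]
    have h1 : b * |l1| ≤ 1 * (C * u) := mul_le_mul hb1 hl1 (abs_nonneg _) zero_le_one
    have h2 : a * |l2| ≤ 1 * (C * v) := mul_le_mul ha1 hl2 (abs_nonneg _) zero_le_one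
    linarith
  have herrb : |err| ≤ (C ^ 2 + C) * (u ^ 2 + v ^ 2) := by
    rw [herr]
    refine (abs_add_le _ _).trans ?_
    have h0 := abs_add_le ((a' - a) * (b' - b)) (a * (b' - b - l2))
    have h1 : |(a' - a) * (b' - b)| ≤ (C * u) * (C * v) := by
      rw [abs_mul]; exact mul_le_mul hp1 hp2 (abs_nonneg _) (by positivity)
    have h2 : |a * (b' - b - l2)| ≤ 1 * (C * v ^ 2) := by
      rw [abs_mul, abs_of_nonneg (by linarith : 0 ≤ a)]
      exact mul_le_mul ha1 ht2 (abs_nonneg _) zero_le_one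
    have h3 : |b * (a' - a - l1)| ≤ 1 * (C * u ^ 2) := by
      rw [abs_mul, abs_of_nonneg (by linarith : 0 ≤ b)]
      exact mul_le_mul hb1 ht1 (abs_nonneg _) zero_le_one
    nlinarith [sq_nonneg (C * (u - v)), sq_nonneg (C * u), sq_nonneg (C * v)]
  have hprod : a' * b' = a * b + ℓ + err := by rw [hℓ, herr]; ring
  set W := u ^ 2 + v ^ 2 with hW
  have hW0 : 0 ≤ W := by positivity
  have h1 : (β + κ) * ℓ ≤ 2 * C * W / r := by
    calc (β + κ) * ℓ ≤ |β + κ| * |ℓ| := by rw [← abs_mul]; exact le_abs_self _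
      _ ≤ q * (C * (u + v)) := mul_le_mul hB1 hℓb (abs_nonneg _) hq0
      _ = C * (u + v) ^ 2 / r := by rw [hq]; ring
      _ ≤ 2 * C * W / r := by
        refine div_le_div_of_nonneg_right ?_ hr.le
        have : (u + v) ^ 2 ≤ 2 * W := by rw [hW]; linarith [sq_nonneg (u - v)]
        linarith [mul_le_mul_of_nonneg_left this hC]
  have h2 : (1 + β + κ) * err ≤ (2 * C ^ 2 + 2 * C) * W / r := by
    calc (1 + β + κ) * err ≤ |1 + β + κ| * |err| := by rw [← abs_mul]; exact le_abs_self _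
      _ ≤ 2 * ((C ^ 2 + C) * W) := mul_le_mul hB2 herrb (abs_nonneg _) (by norm_num)
      _ = (2 * C ^ 2 + 2 * C) * W := by ring
      _ ≤ (2 * C ^ 2 + 2 * C) * W / r := by
        rw [le_div_iff₀ hr]
        exact mul_le_of_le_one_right (by positivity) hr1
  have h3 : (4 * C + 2 * C ^ 2) * W / r ≤
      a * b / r ^ 2 * (((4 * C + 2 * C ^ 2) / h0 ^ 2 + 1) * r * W) := by
    have hab : h0 ^ 2 ≤ a * b := by
      rw [sq]; exact mul_le_mul ha0 hb0 hh.le (by linarith)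
    have e1 : (4 * C + 2 * C ^ 2) ≤ a * b * ((4 * C + 2 * C ^ 2) / h0 ^ 2 + 1) := by
      calc (4 * C + 2 * C ^ 2) = h0 ^ 2 * ((4 * C + 2 * C ^ 2) / h0 ^ 2) := by field_simp
        _ ≤ a * b * ((4 * C + 2 * C ^ 2) / h0 ^ 2 + 1) := by
          exact mul_le_mul hab (by linarith) (by positivity)
            (mul_nonneg (by linarith) (by linarith))
    have e2 : a * b / r ^ 2 * (((4 * C + 2 * C ^ 2) / h0 ^ 2 + 1) * r * W)
      = a * b * ((4 * C + 2 * C ^ 2) / h0 ^ 2 + 1) * W / r := by field_simp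
    rw [e2]
    gcongr
  have e : (1 + β + κ) * (a' * b') = a * b + (a * b * β + b * l1 + a * l2) + a * b * κ
      + (β + κ) * ℓ + (1 + β + κ) * err := by rw [hprod, hℓ]; ring
  have e3 : 2 * C * W / r + (2 * C ^ 2 + 2 * C) * W / r = (4 * C + 2 * C ^ 2) * W / r := by ring
  rw [e]
  linarith

variable {Ω : Set (EN N)} {nv : EN N → EN N} {h : EN N → ℝ} {Dh : EN N → EN N} {h0 C L : ℝ}

/-- Second-order upper expansion of the modulus at a pair `(x, y)` off the diagonal. In the radial
direction `e` the coefficient `9/32 - 10/32` is negative: this is the gain from the concavity of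
the square root. -/
lemma omg_expand (hW : Weight Ω nv h Dh h0 C) (hL : 0 ≤ L) {x y ξ η e : EN N} {r : ℝ}
    (hx : x ∈ closure Ω) (hy : y ∈ closure Ω) (hxξ : x + ξ ∈ closure Ω) (hyη : y + η ∈ closure Ω)
    (he : ‖e‖ = 1) (hxy : x - y = r • e) (hr : 0 < r) (hr1 : r ≤ 1)
    (hξ : ‖ξ‖ ≤ r / 200) (hη : ‖η‖ ≤ r / 200) :
    omg h L (x + ξ) (y + η) ≤ omg h L x y + ⟪omgGrad h Dh L x y, ξ⟫ + ⟪omgGrad h Dh L y x, η⟫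
      + omgM h L x y * (9 / 32 * ‖ξ - η‖ ^ 2 - 10 / 32 * ⟪e, ξ - η⟫ ^ 2
        + ((4 * C + 2 * C ^ 2) / h0 ^ 2 + 1) * r * (‖ξ‖ ^ 2 + ‖η‖ ^ 2)) := by
  have hnr : ‖x - y‖ = r := by rw [hxy, norm_smul, he, Real.norm_eq_abs, abs_of_pos hr, mul_one]
  have hnr' : ‖y - x‖ = r := by rw [norm_sub_rev, hnr]
  have hyx : y - x = -(r • e) := by rw [← hxy]; abel
  have hδ : ‖ξ - η‖ ≤ ‖ξ‖ + ‖η‖ := norm_sub_le _ _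
  have hs := sqrt_norm_expand he hr (δ := ξ - η) (by linarith)
  have hin : |⟪e, ξ - η⟫| ≤ ‖ξ‖ + ‖η‖ := by
    have := abs_real_inner_le_norm e (ξ - η)
    rw [he] at this; linarith
  have hin2 : ⟪e, ξ - η⟫ ^ 2 ≤ ‖ξ - η‖ ^ 2 := by
    have := abs_real_inner_le_norm e (ξ - η)
    rw [he, one_mul] at this
    rw [← sq_abs]
    exact pow_le_pow_left₀ (abs_nonneg _) this 2
  have hδ2 : ‖ξ - η‖ ^ 2 ≤ (‖ξ‖ + ‖η‖) ^ 2 := pow_le_pow_left₀ (norm_nonneg _) hδ 2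
  set β := ⟪e, ξ - η⟫ / (2 * r) with hβ
  set κ := (9 / 32 * ‖ξ - η‖ ^ 2 - 10 / 32 * ⟪e, ξ - η⟫ ^ 2) / r ^ 2 with hκ
  have t1 := hW.taylor x hx (x + ξ) hxξ
  have t2 := hW.taylor y hy (y + η) hyη
  have g1 := hW.lip x hx (x + ξ) hxξ
  have g2 := hW.lip y hy (y + η) hyη
  simp only [add_sub_cancel_left] at t1 t2 g1 g2
  have core := expand_core (a := h x) (b := h y) (a' := h (x + ξ)) (b' := h (y + η))
    (l1 := ⟪Dh x, ξ⟫) (l2 := ⟪Dh y, η⟫) (β := β) (κ := κ) hr hr1 hW.C_nonneg hW.pos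
    (hW.lower x hx) (hW.upper x hx) (hW.lower y hy) (hW.upper y hy) (norm_nonneg ξ) (norm_nonneg η)
    hξ hη ((abs_real_inner_le_norm _ _).trans
      (mul_le_mul_of_nonneg_right (hW.grad x hx) (norm_nonneg _)))
    ((abs_real_inner_le_norm _ _).trans
      (mul_le_mul_of_nonneg_right (hW.grad y hy) (norm_nonneg _))) t1 t2 g1 g2
    (by
      rw [hβ, abs_div, abs_of_pos (by positivity : 0 < 2 * r)]
      exact div_le_div_of_nonneg_right hin (by positivity))
    (by
      rw [hκ, abs_div, abs_of_pos (by positivity : 0 < r ^ 2), div_pow, ← mul_div_assoc]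
      refine div_le_div_of_nonneg_right ?_ (by positivity)
      rw [abs_le]
      constructor <;> nlinarith [sq_nonneg ‖ξ - η‖, sq_nonneg ⟪e, ξ - η⟫])
  have hxh := hW.pos.trans_le (hW.lower _ hxξ)
  have hyh := hW.pos.trans_le (hW.lower _ hyη)
  have hexp : omg h L (x + ξ) (y + η) ≤ L * √r * ((1 + β + κ) * (h (x + ξ) * h (y + η))) := by
    rw [omg]
    have e1 : x + ξ - (y + η) = r • e + (ξ - η) := by rw [← hxy]; abel
    rw [e1]
    have := mul_le_mul_of_nonneg_right hs (mul_pos hxh hyh).le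
    have := mul_le_mul_of_nonneg_left this hL
    linarith
  refine hexp.trans ((mul_le_mul_of_nonneg_left core
    (mul_nonneg hL (Real.sqrt_nonneg r))).trans (le_of_eq ?_))
  rw [omg, omgGrad, omgGrad, omgM, hnr, hnr', hxy, hyx, hκ, hβ]
  simp only [inner_smul_left, inner_add_left, inner_neg_left, smul_neg, inner_sub_right,
    conj_trivial]
  field_simp
  ring
end Modulus2

/-! ### Subadditivity of the modulus and ellipticity at short range -/

section Modulus3
variable {N : ℕ} {Ω : Set (EN N)} {nv : EN N → EN N} {h : EN N → ℝ} {Dh : EN N → EN N}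
  {h0 C L : ℝ}

/-- The scalar inequality behind `omg_triangle`: `a, c` are the values of the weight at the outer
points, `b` that at the middle point, and `s1, s2, sg` are square roots of distances. -/
lemma triangle_core {a b c s1 s2 sg : ℝ} (hh : 0 < h0) (ha0 : h0 ≤ a) (ha1 : a ≤ 1)
    (hc0 : h0 ≤ c) (hc1 : c ≤ 1) (hs1 : 0 < s1) (hs2 : 0 < s2)
    (hab : a - b ≤ C * s1 ^ 2) (hcb : c - b ≤ C * s2 ^ 2) (hC : 0 ≤ C)
    (hsm : C * (s1 + s2) ^ 2 < h0 ^ 2) (hsg : sg ^ 2 ≤ s1 ^ 2 + s2 ^ 2) :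
    a * c * sg < b * (a * s1 + c * s2) := by
  have hs : 0 < s1 + s2 := by linarith
  have hsgle : sg ≤ s1 + s2 - s1 * s2 / (s1 + s2) := by
    have e : s1 + s2 - s1 * s2 / (s1 + s2) = (s1 ^ 2 + s1 * s2 + s2 ^ 2) / (s1 + s2) := by
      field_simp; ring
    rw [e]
    refine (abs_le_of_sq_le_sq' (hsg.trans ?_) (by positivity)).2
    rw [div_pow, le_div_iff₀ (by positivity)]
    nlinarith [sq_nonneg (s1 * s2)]
  have hac : h0 ^ 2 ≤ a * c := by rw [sq]; exact mul_le_mul ha0 hc0 hh.le (by linarith)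
  have hac0 : 0 < a * c := lt_of_lt_of_le (by positivity) hac
  have h1 : a * (c - b) * s1 ≤ C * s2 ^ 2 * s1 := by
    refine mul_le_mul_of_nonneg_right ?_ hs1.le
    calc a * (c - b) ≤ a * (C * s2 ^ 2) := mul_le_mul_of_nonneg_left hcb (by linarith)
      _ ≤ C * s2 ^ 2 := mul_le_of_le_one_left (by positivity) ha1
  have h2 : c * (a - b) * s2 ≤ C * s1 ^ 2 * s2 := by
    refine mul_le_mul_of_nonneg_right ?_ hs2.le
    calc c * (a - b) ≤ c * (C * s1 ^ 2) := mul_le_mul_of_nonneg_left hab (by linarith)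
      _ ≤ C * s1 ^ 2 := mul_le_of_le_one_left (by positivity) hc1
  have h3 : C * (s1 * s2 * (s1 + s2)) < a * c * (s1 * s2 / (s1 + s2)) := by
    have : C * (s1 * s2 * (s1 + s2)) = C * (s1 + s2) ^ 2 * (s1 * s2 / (s1 + s2)) := by field_simp
    rw [this]
    exact mul_lt_mul_of_pos_right (hsm.trans_le hac) (by positivity)
  have h4 := mul_le_mul_of_nonneg_left hsgle hac0.le
  linarith

lemma omg_nonneg (hW : Weight Ω nv h Dh h0 C) (hL : 0 ≤ L) {x y : EN N} (hx : x ∈ closure Ω)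
    (hy : y ∈ closure Ω) : L * h0 ^ 2 * √‖x - y‖ ≤ omg h L x y := by
  rw [omg]
  have : h0 ^ 2 ≤ h x * h y := by
    rw [sq]; exact mul_le_mul (hW.lower x hx) (hW.lower y hy) hW.pos.le
      (hW.pos.le.trans (hW.lower x hx))
  have := mul_le_mul_of_nonneg_left this (mul_nonneg hL (Real.sqrt_nonneg ‖x - y‖))
  linarith

lemma omg_le (hW : Weight Ω nv h Dh h0 C) (hL : 0 ≤ L) {x y : EN N} (hx : x ∈ closure Ω)
    (hy : y ∈ closure Ω) : omg h L x y ≤ L * √‖x - y‖ := by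
  rw [omg]
  refine mul_le_of_le_one_right (by positivity) ?_
  exact mul_le_one₀ (hW.upper x hx) (hW.pos.le.trans (hW.lower y hy)) (hW.upper y hy)

/-- The modulus is strictly subadditive at short range. -/
lemma omg_triangle (hW : Weight Ω nv h Dh h0 C) (hL : 0 < L) {x y z : EN N} {r0 : ℝ}
    (hx : x ∈ closure Ω) (hy : y ∈ closure Ω) (hz : z ∈ closure Ω) (hxy : x ≠ y) (hyz : y ≠ z)
    (h1 : ‖x - y‖ < r0) (h2 : ‖y - z‖ < r0) (hr0 : 4 * C * r0 < h0 ^ 2) :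
    omg h L x z < omg h L x y + omg h L y z := by
  have p1 : 0 < ‖x - y‖ := norm_pos_iff.2 (sub_ne_zero.2 hxy)
  have p2 : 0 < ‖y - z‖ := norm_pos_iff.2 (sub_ne_zero.2 hyz)
  have q1 : √‖x - y‖ ^ 2 = ‖x - y‖ := Real.sq_sqrt p1.le
  have q2 : √‖y - z‖ ^ 2 = ‖y - z‖ := Real.sq_sqrt p2.le
  have l1 := hW.lip y hy x hx
  have l2 := hW.lip y hy z hz
  rw [norm_sub_rev] at l2
  have core := triangle_core (C := C) (a := h x) (b := h y) (c := h z) (s1 := √‖x - y‖)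
    (s2 := √‖y - z‖) (sg := √‖x - z‖) hW.pos (hW.lower x hx) (hW.upper x hx) (hW.lower z hz)
    (hW.upper z hz) (Real.sqrt_pos.2 p1) (Real.sqrt_pos.2 p2)
    (by rw [q1]; exact (le_abs_self _).trans l1) (by rw [q2]; exact (le_abs_self _).trans l2)
    hW.C_nonneg (by
      have : (√‖x - y‖ + √‖y - z‖) ^ 2 ≤ 4 * r0 := by
        nlinarith [sq_nonneg (√‖x - y‖ - √‖y - z‖)]
      have := mul_le_mul_of_nonneg_left this hW.C_nonneg
      linarith) (by
      rw [q1, q2, Real.sq_sqrt (norm_nonneg _)]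
      exact norm_sub_le_norm_sub_add_norm_sub x y z)
  rw [omg, omg, omg]
  have := mul_lt_mul_of_pos_left core hL
  linarith

end Modulus3

section Doubling
variable {N : ℕ} {Ω : Set (EN N)} {α a A C₁ θ C₂ ν : ℝ} {F : EN N → EN N → Mat N → ℝ}
  {b : EN N → EN N}

/-- Ellipticity beats all the other terms at short range: the two viscosity inequalities obtained by
doubling variables with the square root modulus are incompatible. -/
lemma doubling_contra (hα : -1 < α) (hF2 : CondF2 Ω α a A F) (hF3 : CondF3 Ω α C₁ θ F)
    (hF4 : CondF4 Ω α C₂ ν F) {Mb : ℝ} (hMb : ∀ x ∈ closure Ω, ‖b x‖ ≤ Mb) (hMb0 : 0 ≤ Mb)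
    {C C0 : ℝ} (hC : 0 ≤ C) (hC0 : 0 ≤ C0) :
    ∃ r0 > 0, ∀ r, 0 < r → r ≤ r0 → ∀ m > 0, 4 ≤ m * r → ∀ x ∈ closure Ω, ∀ y ∈ closure Ω,
      ‖x - y‖ ≤ 2 * r → ∀ e : EN N, ‖e‖ = 1 → ∀ p1 p2 : EN N, m * r / 4 ≤ ‖p1‖ →
      ‖p1‖ ≤ 2 * (m * r) → ‖p2 - p1‖ ≤ C * r * ‖p1‖ → ∀ X Y : Mat N, X.IsSymm → Y.IsSymm →
      (∀ h k, qf X h - qf Y k ≤ 2 * m * (‖h - k‖ ^ 2 - 65 / 64 * ⟪e, h - k⟫ ^ 2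
        + 3 * C * r * (‖h‖ ^ 2 + ‖k‖ ^ 2))) →
      0 ≤ Hop F b α x p1 X + C0 → Hop F b α y p2 Y - C0 ≤ 0 → False := by
  have ha := hF2.1
  have haA := hF2.2.1
  have hC1 := hF3.1
  have hθ : 0 < θ := by linarith [hF3.2.1.1]
  have hC2 := hF4.1
  have hν : 0 < ν := by linarith [hF4.2.1.1]
  set Φ : ℝ → ℝ := fun r => 96 * A * C * N * r + 33 * C₁ * (2 * r) ^ θ + 33 * C₂ * (C * r) ^ ν
    + 16 * Mb * (1 + 2 ^ (α + 1)) * r + 32 * C0 * r with hΦ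
  have hΦc : ContinuousAt Φ 0 := by
    have k1 : ContinuousAt (fun r : ℝ => (2 * r) ^ θ) 0 :=
      ContinuousAt.rpow_const (by fun_prop) (Or.inr hθ.le)
    have k2 : ContinuousAt (fun r : ℝ => (C * r) ^ ν) 0 :=
      ContinuousAt.rpow_const (by fun_prop) (Or.inr hν.le)
    rw [hΦ]
    fun_prop
  have hΦ0 : Φ 0 = 0 := by
    simp only [hΦ, mul_zero, Real.zero_rpow hθ.ne', Real.zero_rpow hν.ne', add_zero]
  have hev : ∀ᶠ r in 𝓝 0, Φ r < a := hΦc.eventually (gt_mem_nhds (by rw [hΦ0]; exact ha))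
  obtain ⟨ρ0, hρ0, hρ⟩ := Metric.eventually_nhds_iff.1 hev
  refine ⟨min (ρ0 / 2) (1 / (6 * C + 1)), by positivity, ?_⟩
  intro r hr hr0 m hm hmr x hx y hy hxy e he p1 p2 hp1 hp1' hp12 X Y hX hY hXY hsub hsup
  have hΦr : Φ r < a := hρ (by
    rw [Real.dist_eq, sub_zero, abs_of_pos hr]
    have := hr0.trans (min_le_left _ _); linarith)
  have hCr : 6 * C * r ≤ 1 := by
    have := hr0.trans (min_le_right _ _)
    rw [le_div_iff₀ (by positivity)] at this
    nlinarith
  have hp1pos : 0 < ‖p1‖ := by linarith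
  have hp1ne : p1 ≠ 0 := norm_pos_iff.1 hp1pos
  have hp2le : ‖p2‖ ≤ 2 * ‖p1‖ := by
    have : ‖p2‖ ≤ ‖p2 - p1‖ + ‖p1‖ := norm_le_norm_sub_add p2 p1
    nlinarith
  set κ := 12 * C * m * r with hκ
  have hκ0 : 0 ≤ κ := by positivity
  set Z : Mat N := Y + κ • (1 : Mat N) with hZ
  have hZs : Z.IsSymm := isSymm_add' hY (isSymm_smul_one κ)
  have qZ : ∀ v, qf Z v = qf Y v + κ * ‖v‖ ^ 2 := fun v => by rw [hZ, qf_add, qf_smul, qf_one]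
  have hXZ : ∀ v, qf X v ≤ qf Z v := fun v => by
    have := hXY v v
    simp only [sub_self, norm_zero, inner_zero_right] at this
    rw [qZ, hκ]; linarith
  set P := Z - X with hP
  have hPs : P.IsSymm := isSymm_sub' hZs hX
  have qP : ∀ v, qf P v = qf Y v + κ * ‖v‖ ^ 2 - qf X v := fun v => by rw [hP, qf_sub, qZ]
  have hP0 : ∀ v, 0 ≤ qf P v := fun v => by have := hXZ v; rw [qZ] at this; rw [qP]; linarith
  set T := P.trace with hT
  have hPT : ∀ v, qf P v ≤ T * ‖v‖ ^ 2 := fun v => qf_le_trace (posSemidef_of_qf hPs hP0) v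
  have hmT : m ≤ 8 * T := by
    have h1 := hPT e
    have h2 := hXY e (-e)
    have e2 : qf Y (-e) = qf Y e := by
      have := qf_smul_vec Y (-1) e; simpa using this
    have e3 : e - -e = (2 : ℝ) • e := by rw [sub_neg_eq_add, two_smul]
    rw [e2, e3, norm_smul, inner_smul_right, real_inner_self_eq_norm_sq, norm_neg, he] at h2
    rw [qP, he] at h1
    norm_num at h1 h2
    rw [hκ] at h1
    linarith
  have hT0 : 0 < T := by linarith
  have hXu : ∀ v, qf X v ≤ 4 * m * ‖v‖ ^ 2 := fun v => by
    have := hXY v 0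
    simp only [sub_zero, norm_zero] at this
    have h0 : qf Y (0 : EN N) = 0 := by simp [qf]
    have h3 : 0 ≤ 2 * m * (65 / 64 * ⟪e, v⟫ ^ 2) := by positivity
    have h4 : 2 * m * (3 * C * r * ‖v‖ ^ 2) ≤ m * ‖v‖ ^ 2 := by
      have : 6 * C * r * (m * ‖v‖ ^ 2) ≤ 1 * (m * ‖v‖ ^ 2) :=
        mul_le_mul_of_nonneg_right hCr (by positivity)
      linarith
    have h5 : 0 ≤ m * ‖v‖ ^ 2 := by positivity
    rw [h0] at this
    linarith
  have hYl : ∀ v, -(4 * m * ‖v‖ ^ 2) ≤ qf Y v := fun v => by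
    have := hXY 0 v
    simp only [zero_sub, norm_zero, norm_neg, inner_neg_right] at this
    have h0 : qf X (0 : EN N) = 0 := by simp [qf]
    have h3 : 0 ≤ 2 * m * (65 / 64 * ⟪e, v⟫ ^ 2) := by positivity
    have h4 : 2 * m * (3 * C * r * ‖v‖ ^ 2) ≤ m * ‖v‖ ^ 2 := by
      have : 6 * C * r * (m * ‖v‖ ^ 2) ≤ 1 * (m * ‖v‖ ^ 2) :=
        mul_le_mul_of_nonneg_right hCr (by positivity)
      linarith
    have h5 : 0 ≤ m * ‖v‖ ^ 2 := by positivity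
    rw [h0] at this
    linarith
  have hYn : matNorm Y ≤ 33 * T := by
    refine matNorm_le_of_qf hY (by positivity) fun v => ?_
    have v0 : 0 ≤ ‖v‖ ^ 2 := by positivity
    have k1 := hXu v
    have k2 := hYl v
    have k3 := hPT v
    rw [qP] at k3
    have k4 : m * ‖v‖ ^ 2 ≤ 8 * T * ‖v‖ ^ 2 := mul_le_mul_of_nonneg_right hmT v0
    have k5 : 0 ≤ κ * ‖v‖ ^ 2 := by positivity
    have k6 : 0 ≤ T * ‖v‖ ^ 2 := by positivity
    rw [abs_le]
    constructor <;> linarith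
  have hMY : 0 ≤ matNorm Y := matNorm_nonneg Y
  set w := ‖p1‖ ^ α with hw
  have hw0 : 0 < w := Real.rpow_pos_of_pos hp1pos α
  have hw1 : ‖p1‖ ^ (α + 1) = w * ‖p1‖ := by rw [Real.rpow_add_one hp1pos.ne']
  have s1 : F x p1 X + a * w * T ≤ F x p1 Z := hF2.mono hx hp1ne hX hZs hXZ
  have s2 : F x p1 Z ≤ F x p1 Y + A * w * (N * κ) :=
    hF2.lip hx hp1ne hZs hY hκ0 (fun v => (qZ v).le)
  have s3 : F x p1 Y ≤ F y p1 Y + C₁ * (2 * r) ^ θ * w * (33 * T) := by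
    have k := (le_abs_self _).trans (hF3.2.2 x hx y hy p1 hp1ne Y hY)
    have : C₁ * ‖x - y‖ ^ θ * w * matNorm Y ≤ C₁ * (2 * r) ^ θ * w * (33 * T) := by gcongr
    linarith
  have hq : ‖p2 - p1‖ ≤ ‖p1‖ / 2 := by nlinarith
  have s4 : F y p1 Y ≤ F y p2 Y + C₂ * (C * r) ^ ν * w * (33 * T) := by
    have k := hF4.2.2 y hy p1 hp1ne (p2 - p1) hq Y hY
    rw [add_sub_cancel] at k
    have k' := (abs_le.1 k).1
    have : C₂ * ‖p1‖ ^ (α - ν) * ‖p2 - p1‖ ^ ν * matNorm Y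
        ≤ C₂ * (C * r) ^ ν * w * (33 * T) := by
      calc _ ≤ C₂ * ‖p1‖ ^ (α - ν) * (C * r * ‖p1‖) ^ ν * (33 * T) := by gcongr
        _ = C₂ * (C * r) ^ ν * (‖p1‖ ^ (α - ν) * ‖p1‖ ^ ν) * (33 * T) := by
          rw [Real.mul_rpow (by positivity) hp1pos.le]; ring
        _ = _ := by rw [← Real.rpow_add hp1pos, sub_add_cancel]
    linarith
  have hmrT : m * r ≤ 8 * T * r := mul_le_mul_of_nonneg_right hmT hr.le
  have hwp : w * ‖p1‖ ≤ w * (16 * r * T) := mul_le_mul_of_nonneg_left (by linarith) hw0.le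
  have s5 : ⟪b x, p1⟫ * w ≤ Mb * (w * (16 * r * T)) := by
    calc ⟪b x, p1⟫ * w ≤ (Mb * ‖p1‖) * w := by
          refine mul_le_mul_of_nonneg_right ?_ hw0.le
          exact (real_inner_le_norm _ _).trans
            (mul_le_mul_of_nonneg_right (hMb x hx) (norm_nonneg _))
      _ = Mb * (w * ‖p1‖) := by ring
      _ ≤ _ := mul_le_mul_of_nonneg_left hwp hMb0
  have s6 : -(Mb * 2 ^ (α + 1) * (w * (16 * r * T))) ≤ ⟪b y, p2⟫ * ‖p2‖ ^ α := by
    have k0 : ‖p2‖ * ‖p2‖ ^ α ≤ 2 ^ (α + 1) * (w * ‖p1‖) := by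
      rcases eq_or_lt_of_le (norm_nonneg p2) with h | h
      · rw [← h, zero_mul]; positivity
      · rw [mul_comm, ← Real.rpow_add_one h.ne', ← hw1, ← Real.mul_rpow (by norm_num) hp1pos.le]
        exact Real.rpow_le_rpow h.le hp2le (by linarith)
    have k1 : -(Mb * ‖p2‖) ≤ ⟪b y, p2⟫ := by
      have := (abs_le.1 (abs_real_inner_le_norm (b y) p2)).1
      have := mul_le_mul_of_nonneg_right (hMb y hy) (norm_nonneg p2)
      linarith
    have k2 := mul_le_mul_of_nonneg_right k1 (Real.rpow_nonneg (norm_nonneg p2) α)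
    have k3 : Mb * (‖p2‖ * ‖p2‖ ^ α) ≤ Mb * (2 ^ (α + 1) * (w * (16 * r * T))) :=
      mul_le_mul_of_nonneg_left (k0.trans (mul_le_mul_of_nonneg_left hwp (by positivity))) hMb0
    linarith
  have s7 : 2 * C0 ≤ 32 * C0 * r * (w * T) := by
    have k1 : 1 ≤ w * ‖p1‖ := by
      rw [← hw1]; exact Real.one_le_rpow (by linarith) (by linarith)
    have k2 : 1 ≤ 16 * r * (w * T) := by linarith
    have := mul_le_mul_of_nonneg_left k2 hC0
    linarith
  have s8 : A * w * (N * κ) ≤ 96 * A * C * N * r * (w * T) := by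
    have hA : 0 ≤ A := by linarith
    have : 12 * A * w * N * C * r * m ≤ 12 * A * w * N * C * r * (8 * T) :=
      mul_le_mul_of_nonneg_left hmT (by positivity)
    rw [hκ]; linarith
  simp only [Hop] at hsub hsup
  have hfin : a * (w * T) ≤ Φ r * (w * T) := by
    rw [hΦ]
    simp only
    linarith
  have := mul_lt_mul_of_pos_right hΦr (mul_pos hw0 hT0)
  linarith
end Doubling

/-! ### The regularised quadratic form and unsaturated points -/

section RegQuad
variable {N : ℕ} {m c : ℝ} {e : EN N}

/-- The quadratic form controlling the second derivatives in the doubling argument. It is negative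
on `(e, -e)` when `c` is small. -/
def regQ (m c : ℝ) (e ζ1 ζ2 : EN N) : ℝ :=
  m * (‖ζ1 - ζ2‖ ^ 2 - 65 / 64 * ⟪e, ζ1 - ζ2⟫ ^ 2 + 2 * c * (‖ζ1‖ ^ 2 + ‖ζ2‖ ^ 2))

lemma inner_sq_le (he : ‖e‖ = 1) (v : EN N) : ⟪e, v⟫ ^ 2 ≤ ‖v‖ ^ 2 := by
  have := abs_real_inner_le_norm e v
  rw [he, one_mul] at this
  rw [← sq_abs]
  exact pow_le_pow_left₀ (abs_nonneg _) this 2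

lemma reg_ineq (he : ‖e‖ = 1) (δ ε : EN N) :
    9 / 32 * ‖δ + ε‖ ^ 2 - 10 / 32 * ⟪e, δ + ε⟫ ^ 2
      ≤ ‖δ‖ ^ 2 - 65 / 64 * ⟪e, δ⟫ ^ 2 + ‖ε‖ ^ 2 := by
  have h1 := inner_sq_le he (δ - ε)
  have h2 := inner_sq_le he δ
  have h3 := inner_sq_le he ε
  rw [norm_sub_sq_real, inner_sub_right] at h1
  rw [norm_add_sq_real, inner_add_right]
  nlinarith [sq_nonneg (⟪e, δ⟫ + 2 * ⟪e, ε⟫), sq_nonneg ⟪e, ε⟫]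

lemma norm_sub_sq_le_two (x y : EN N) : ‖x - y‖ ^ 2 ≤ 2 * (‖x‖ ^ 2 + ‖y‖ ^ 2) := by
  have := parallelogram_law_with_norm ℝ x y
  nlinarith [sq_nonneg ‖x + y‖]

/-- The quadratic part of `omg_expand` is below `regQ` at arbitrary points plus a penalisation,
which is the hypothesis needed in `theorem_on_sums`. -/
lemma regQ_reg (he : ‖e‖ = 1) (hm : 0 ≤ m) (hc : 0 ≤ c) (hc1 : c ≤ 1 / 2) (x y ζ1 ζ2 : EN N) :
    m * (9 / 32 * ‖x - y‖ ^ 2 - 10 / 32 * ⟪e, x - y⟫ ^ 2 + c * (‖x‖ ^ 2 + ‖y‖ ^ 2))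
      ≤ regQ m c e ζ1 ζ2 + 4 * m * (‖ζ1 - x‖ ^ 2 + ‖ζ2 - y‖ ^ 2) := by
  have h1 := reg_ineq he (ζ1 - ζ2) ((ζ2 - y) - (ζ1 - x))
  have e1 : ζ1 - ζ2 + ((ζ2 - y) - (ζ1 - x)) = x - y := by abel
  rw [e1] at h1
  have h2 := norm_sub_sq_le_two (ζ2 - y) (ζ1 - x)
  have h3 := norm_sub_sq_le_two ζ1 (ζ1 - x)
  have h4 := norm_sub_sq_le_two ζ2 (ζ2 - y)
  rw [sub_sub_cancel] at h3 h4
  have h5 : c * (‖x‖ ^ 2 + ‖y‖ ^ 2) ≤ c * (2 * (‖ζ1‖ ^ 2 + ‖ζ2‖ ^ 2)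
      + 2 * (‖ζ1 - x‖ ^ 2 + ‖ζ2 - y‖ ^ 2)) := mul_le_mul_of_nonneg_left (by linarith) hc
  have h6 : c * (2 * (‖ζ1 - x‖ ^ 2 + ‖ζ2 - y‖ ^ 2)) ≤ 1 / 2 * (2 * (‖ζ1 - x‖ ^ 2 + ‖ζ2 - y‖ ^ 2)) :=
    mul_le_mul_of_nonneg_right hc1 (by positivity)
  have h7 := sq_nonneg ‖ζ1 - x‖
  have h8 := sq_nonneg ‖ζ2 - y‖
  rw [regQ]
  have : 9 / 32 * ‖x - y‖ ^ 2 - 10 / 32 * ⟪e, x - y⟫ ^ 2 + c * (‖x‖ ^ 2 + ‖y‖ ^ 2) ≤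
    (‖ζ1 - ζ2‖ ^ 2 - 65 / 64 * ⟪e, ζ1 - ζ2⟫ ^ 2 + 2 * c * (‖ζ1‖ ^ 2 + ‖ζ2‖ ^ 2)) +
      4 * (‖ζ1 - x‖ ^ 2 + ‖ζ2 - y‖ ^ 2) := by linarith
  have := mul_le_mul_of_nonneg_left this hm
  linarith

/-- `regQ` is a quadratic form with gradient of linear growth. -/
lemma regQ_deriv (he : ‖e‖ = 1) (hm : 0 ≤ m) (hc : 0 ≤ c) (ζ1 ζ2 : EN N) :
    ∃ d1 d2, ‖d1‖ ≤ m * (5 + 4 * c) * (‖ζ1‖ + ‖ζ2‖) ∧ ‖d2‖ ≤ m * (5 + 4 * c) * (‖ζ1‖ + ‖ζ2‖) ∧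
      ∀ h1 h2, regQ m c e (ζ1 + h1) (ζ2 + h2)
        = regQ m c e ζ1 ζ2 + ⟪d1, h1⟫ + ⟪d2, h2⟫ + regQ m c e h1 h2 := by
  set w : EN N := (2 : ℝ) • (ζ1 - ζ2) - (65 / 32 * ⟪e, ζ1 - ζ2⟫) • e with hw
  have hwn : ‖w‖ ≤ 5 * (‖ζ1‖ + ‖ζ2‖) := by
    have k1 : ‖ζ1 - ζ2‖ ≤ ‖ζ1‖ + ‖ζ2‖ := norm_sub_le _ _
    have k2 := abs_real_inner_le_norm e (ζ1 - ζ2)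
    rw [he, one_mul] at k2
    calc ‖w‖ ≤ ‖(2 : ℝ) • (ζ1 - ζ2)‖ + ‖(65 / 32 * ⟪e, ζ1 - ζ2⟫) • e‖ := norm_sub_le _ _
      _ = 2 * ‖ζ1 - ζ2‖ + 65 / 32 * |⟪e, ζ1 - ζ2⟫| := by
        rw [norm_smul, norm_smul, he, Real.norm_eq_abs, Real.norm_eq_abs, abs_mul]
        norm_num
      _ ≤ _ := by linarith [norm_nonneg (ζ1 - ζ2)]
  have hbd : ∀ v : EN N, ‖v‖ ≤ 5 * (‖ζ1‖ + ‖ζ2‖) → ∀ z : EN N, ‖z‖ ≤ ‖ζ1‖ + ‖ζ2‖ →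
      ‖m • (v + (4 * c) • z)‖ ≤ m * (5 + 4 * c) * (‖ζ1‖ + ‖ζ2‖) := fun v hv z hz => by
    rw [norm_smul, Real.norm_eq_abs, abs_of_nonneg hm, mul_assoc]
    refine mul_le_mul_of_nonneg_left ?_ hm
    refine (norm_add_le _ _).trans ?_
    rw [norm_smul, Real.norm_eq_abs, abs_of_nonneg (by positivity : 0 ≤ 4 * c)]
    have := mul_le_mul_of_nonneg_left hz (by positivity : 0 ≤ 4 * c)
    linarith
  refine ⟨m • (w + (4 * c) • ζ1), m • (-w + (4 * c) • ζ2),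
    hbd w hwn ζ1 (by linarith [norm_nonneg ζ2]),
    hbd (-w) (by rwa [norm_neg]) ζ2 (by linarith [norm_nonneg ζ1]), fun h1 h2 => ?_⟩
  have e1 : ζ1 + h1 - (ζ2 + h2) = (ζ1 - ζ2) + (h1 - h2) := by abel
  simp only [regQ]
  rw [e1, norm_add_sq_real (ζ1 - ζ2), norm_add_sq_real ζ1, norm_add_sq_real ζ2, inner_add_right e,
    hw]
  simp only [inner_smul_left, inner_add_left, inner_neg_left, inner_sub_left, inner_sub_right,
    conj_trivial]
  ring

lemma regQ_smul (t : ℝ) (h1 h2 : EN N) :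
    regQ m c e (t • h1) (t • h2) = t ^ 2 * regQ m c e h1 h2 := by
  simp only [regQ]
  rw [← smul_sub, norm_smul, norm_smul, norm_smul, inner_smul_right, Real.norm_eq_abs]
  simp only [mul_pow, sq_abs]
  ring

lemma regQ_bound (he : ‖e‖ = 1) (hm : 0 ≤ m) (hc : 0 ≤ c) (h1 h2 : EN N) :
    |regQ m c e h1 h2| ≤ m * (5 + 4 * c) * (‖h1‖ ^ 2 + ‖h2‖ ^ 2) := by
  rw [regQ, abs_mul, abs_of_nonneg hm, mul_assoc m (5 + 4 * c)]
  refine mul_le_mul_of_nonneg_left ?_ hm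
  have k1 := norm_sub_sq_le_two h1 h2
  have k2 := inner_sq_le he (h1 - h2)
  have k3 : 0 ≤ c * (‖h1‖ ^ 2 + ‖h2‖ ^ 2) := by positivity
  have k4 := sq_nonneg ⟪e, h1 - h2⟫
  have k5 : 0 ≤ ‖h1‖ ^ 2 + ‖h2‖ ^ 2 := by positivity
  rw [abs_le]
  constructor <;> linarith

/-- The linear map representing `regQ` on either axis. -/
def regR (m c : ℝ) (e : EN N) : EN N →L[ℝ] EN N :=
  (m * (1 + 2 * c)) • ContinuousLinearMap.id ℝ (EN N)
    - (65 / 64 * m) • (innerSL ℝ e).smulRight e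

lemma regR_apply (h : EN N) :
    ⟪regR m c e h, h⟫ = m * (‖h‖ ^ 2 - 65 / 64 * ⟪e, h⟫ ^ 2 + 2 * c * ‖h‖ ^ 2) := by
  have : regR m c e h = (m * (1 + 2 * c)) • h - (65 / 64 * m) • (⟪e, h⟫ • e) := by
    simp [regR]
  rw [this, inner_sub_left, inner_smul_left, inner_smul_left, inner_smul_left,
    real_inner_self_eq_norm_sq]
  simp only [conj_trivial]
  ring

lemma regQ_left (h : EN N) : regQ m c e h 0 = ⟪regR m c e h, h⟫ := by
  rw [regR_apply, regQ]; simp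

lemma regQ_right (h : EN N) : regQ m c e 0 h = ⟪regR m c e h, h⟫ := by
  rw [regR_apply, regQ]; simp
end RegQuad

section Unsat
variable {N : ℕ} {Ω : Set (EN N)} {nv : EN N → EN N} {h : EN N → ℝ} {Dh : EN N → EN N}
  {h0 C L : ℝ} {u : EN N → ℝ}

/-- `y` is not the upper end of a pair along which `u` realises the modulus. -/
def Unsat (Ω : Set (EN N)) (h : EN N → ℝ) (L : ℝ) (u : EN N → ℝ) (y : EN N) : Prop :=
  ∀ z ∈ closure Ω, z ≠ y → u y - u z < omg h L y z

lemma Weight.continuousOn (hW : Weight Ω nv h Dh h0 C) : ContinuousOn h (closure Ω) := by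
  have : LipschitzOnWith (Real.toNNReal C) h (closure Ω) := by
    refine LipschitzOnWith.of_dist_le_mul fun x hx y hy => ?_
    rw [Real.dist_eq, dist_eq_norm, Real.coe_toNNReal _ hW.C_nonneg]
    exact hW.lip y hy x hx
  exact this.continuousOn

lemma omg_continuousOn (hW : Weight Ω nv h Dh h0 C) (L : ℝ) :
    ContinuousOn (fun z : EN N × EN N => omg h L z.1 z.2) (closure Ω ×ˢ closure Ω) := by
  have h1 : ContinuousOn (fun z : EN N × EN N => h z.1) (closure Ω ×ˢ closure Ω) :=
    hW.continuousOn.comp continuousOn_fst fun z hz => hz.1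
  have h2 : ContinuousOn (fun z : EN N × EN N => h z.2) (closure Ω ×ˢ closure Ω) :=
    hW.continuousOn.comp continuousOn_snd fun z hz => hz.2
  have h3 : ContinuousOn (fun z : EN N × EN N => L * √‖z.1 - z.2‖) (closure Ω ×ˢ closure Ω) := by
    fun_prop
  exact h3.mul (h1.mul h2)

/-- Away from the diagonal, being unsaturated is an open condition. -/
lemma unsat_away (hW : Weight Ω nv h Dh h0 C) (hΩb : Bornology.IsBounded Ω)
    (hu : ContinuousOn u (closure Ω)) {y0 : EN N} (hy0 : y0 ∈ closure Ω)
    (hun : Unsat Ω h L u y0) {t : ℝ} (ht : 0 < t) :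
    ∀ᶠ y in 𝓝 y0, y ∈ closure Ω → ∀ z ∈ closure Ω, t ≤ ‖z - y0‖ → u y - u z < omg h L y z := by
  have hK : IsCompact (closure Ω ∩ {z | t ≤ ‖z - y0‖}) :=
    hΩb.isCompact_closure.inter_right
      (isClosed_le continuous_const (by fun_prop))
  have hΨ : ContinuousOn (fun z : EN N × EN N => omg h L z.1 z.2 - (u z.1 - u z.2))
      (closure Ω ×ˢ closure Ω) :=
    (omg_continuousOn hW L).sub
      ((hu.comp continuousOn_fst fun z hz => hz.1).sub
        (hu.comp continuousOn_snd fun z hz => hz.2))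
  have key := hK.eventually_forall_of_forall_eventually (x₀ := y0)
    (P := fun y z => y ∈ closure Ω → z ∈ closure Ω → u y - u z < omg h L y z) (by
      intro z hz
      have hne : z ≠ y0 := fun heq => by
        have := hz.2
        simp only [mem_ofPred_eq, heq, sub_self, norm_zero] at this
        linarith
      have h1 := (hΨ (y0, z) ⟨hy0, hz.1⟩).eventually
        (lt_mem_nhds (a := 0) (by have := hun z hz.1 hne; simp only; linarith))
      filter_upwards [eventually_nhdsWithin_iff.1 h1] with p hp h2 h3
      have := hp ⟨h2, h3⟩
      linarith)
  filter_upwards [key] with y hy h1 z hz hzt using hy z ⟨hz, hzt⟩ h1 hz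

/-- At short distances the square root dominates quadratic polynomials vanishing at `0`. -/
lemma sqrt_beats {h0 L B Λ : ℝ} (hh : 0 < L * h0 ^ 2) (hB : 0 ≤ B) (hΛ : 0 ≤ Λ) :
    ∃ s > 0, ∀ τ, 0 < τ → τ ≤ s → B * τ + Λ * τ ^ 2 < L * h0 ^ 2 * √τ := by
  refine ⟨min 1 ((L * h0 ^ 2 / (B + Λ + 1)) ^ 2 / 2), by positivity, fun τ hτ hτs => ?_⟩
  have h1 : τ ≤ 1 := hτs.trans (min_le_left _ _)
  have h2 : τ < (L * h0 ^ 2 / (B + Λ + 1)) ^ 2 := by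
    have := hτs.trans (min_le_right _ _)
    have : 0 < (L * h0 ^ 2 / (B + Λ + 1)) ^ 2 := by positivity
    linarith
  have h3 : √τ < L * h0 ^ 2 / (B + Λ + 1) := (Real.sqrt_lt' (by positivity)).2 h2
  rw [lt_div_iff₀ (by positivity)] at h3
  have h4 : √τ * √τ = τ := Real.mul_self_sqrt hτ.le
  have h5 : 0 < √τ := Real.sqrt_pos.2 hτ
  have h6 : Λ * τ ^ 2 ≤ Λ * τ := mul_le_mul_of_nonneg_left (by nlinarith) hΛ
  have h7 := mul_lt_mul_of_pos_right h3 h5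
  nlinarith

/-- Points near an unsaturated point which admit a quadratic lower bound are unsaturated. -/
lemma unsat_near (hW : Weight Ω nv h Dh h0 C) (hΩb : Bornology.IsBounded Ω) (hL : 0 < L)
    (hu : ContinuousOn u (closure Ω)) {y0 : EN N} (hy0 : y0 ∈ closure Ω)
    (hun : Unsat Ω h L u y0) {t B Λ : ℝ} (ht : 0 < t) (hB : 0 ≤ B) (hΛ : 0 ≤ Λ) :
    ∃ δ > 0, ∀ y ∈ closure Ω, ‖y - y0‖ ≤ δ → ∀ q : EN N, ‖q‖ ≤ B →
      (∀ z ∈ closure Ω, ‖z - y0‖ ≤ t → u y - u z ≤ ⟪q, z - y⟫ + Λ * ‖z - y‖ ^ 2) →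
      Unsat Ω h L u y := by
  have hh : 0 < L * h0 ^ 2 := mul_pos hL (pow_pos hW.pos 2)
  obtain ⟨s, hs, hs1⟩ := sqrt_beats hh hB hΛ
  set t' := min t (s / 2) with ht'
  have ht'0 : 0 < t' := by positivity
  obtain ⟨δ, hδ, hδ1⟩ := Metric.eventually_nhds_iff.1 (unsat_away hW hΩb hu hy0 hun ht'0)
  refine ⟨min (δ / 2) (s / 2), by positivity, fun y hy hyd q hq hqu z hz hzy => ?_⟩
  rcases le_or_gt t' ‖z - y0‖ with hzt | hzt
  · refine hδ1 (y := y) ?_ hy z hz hzt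
    rw [dist_eq_norm]
    have := hyd.trans (min_le_left _ _)
    linarith
  · have hzs : ‖z - y‖ ≤ s := by
      have k1 : ‖z - y‖ ≤ ‖z - y0‖ + ‖y - y0‖ := by
        rw [norm_sub_rev y y0]; exact norm_sub_le_norm_sub_add_norm_sub _ _ _
      have k2 := hyd.trans (min_le_right _ _)
      have k3 : t' ≤ s / 2 := min_le_right _ _
      linarith
    have hzp : 0 < ‖z - y‖ := norm_pos_iff.2 (sub_ne_zero.2 hzy)
    have k4 := hqu z hz (hzt.le.trans (min_le_left _ _))
    have k5 : ⟪q, z - y⟫ ≤ B * ‖z - y‖ := (real_inner_le_norm _ _).trans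
      (mul_le_mul_of_nonneg_right hq hzp.le)
    have k6 := hs1 _ hzp hzs
    have k7 := omg_nonneg hW hL.le hy hz
    rw [norm_sub_rev] at k7
    linarith

/-- Pointing strictly outward at the boundary is stable under small perturbations. -/
lemma bdry_pert (hnv : ContinuousOn nv (frontier Ω)) {x0 p0 : EN N}
    (h0 : x0 ∈ frontier Ω → 0 < ⟪p0, nv x0⟫) :
    ∃ δ > 0, ∀ x ∈ frontier Ω, ‖x - x0‖ ≤ δ → ∀ p : EN N, ‖p - p0‖ ≤ δ → 0 < ⟪p, nv x⟫ := by
  by_cases hx : x0 ∈ frontier Ω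
  · have h1 : ContinuousWithinAt (fun z : EN N × EN N => ⟪z.2, nv z.1⟫)
        (frontier Ω ×ˢ univ) (x0, p0) := by
      refine ContinuousWithinAt.inner (𝕜 := ℝ) continuousWithinAt_snd ?_
      exact (hnv x0 hx).comp continuousWithinAt_fst fun z hz => hz.1
    have h2 := h1.eventually (lt_mem_nhds (h0 hx))
    obtain ⟨δ, hδ, h3⟩ := Metric.mem_nhdsWithin_iff.1 h2
    refine ⟨δ / 2, half_pos hδ, fun x hxf hd p hp => ?_⟩
    refine h3 (show (x, p) ∈ ball (x0, p0) δ ∩ frontier Ω ×ˢ univ from ⟨?_, hxf, trivial⟩)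
    rw [mem_ball, Prod.dist_eq, dist_eq_norm, dist_eq_norm]
    exact max_lt (by simp only; linarith) (by simp only; linarith)
  · obtain ⟨δ, hδ, h1⟩ := Metric.mem_nhds_iff.1 (isClosed_frontier.isOpen_compl.mem_nhds hx)
    refine ⟨δ / 2, half_pos hδ, fun x hxf hd => absurd hxf (h1 ?_)⟩
    rw [mem_ball, dist_eq_norm]; linarith

/-- At short range the gradient of the modulus is nearly radial. -/
lemma omgGrad_near (hW : Weight Ω nv h Dh h0 C) (hL : 0 ≤ L) {x y e : EN N} {r : ℝ}
    (hx : x ∈ closure Ω) (hy : y ∈ closure Ω) (he : ‖e‖ = 1) (hxy : x - y = r • e) (hr : 0 < r) :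
    ‖omgGrad h Dh L x y - (omgM h L x y * r / 2) • e‖ ≤ C / h0 * (omgM h L x y * r ^ 2) := by
  have hnr : ‖x - y‖ = r := by rw [hxy, norm_smul, he, Real.norm_eq_abs, abs_of_pos hr, mul_one]
  have ha := hW.lower x hx
  have hb := hW.pos.trans_le (hW.lower y hy)
  have e1 : omgGrad h Dh L x y - (omgM h L x y * r / 2) • e = (L * √r * h y) • Dh x := by
    rw [omgGrad, omgM, hnr, hxy, smul_add, smul_smul, smul_smul, add_sub_right_comm, ← sub_smul]
    have : L * √r * h y * (h x / (2 * r ^ 2)) * r - L * √r * (h x * h y) / r ^ 2 * r / 2 = 0 := by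
      field_simp; ring
    rw [this, zero_smul, zero_add]
  rw [e1, norm_smul, Real.norm_eq_abs, abs_of_nonneg (by positivity), omgM, hnr]
  have e2 : C / h0 * (L * √r * (h x * h y) / r ^ 2 * r ^ 2) = (L * √r * h y) * (C * (h x / h0)) := by
    field_simp
  rw [e2]
  refine mul_le_mul_of_nonneg_left ((hW.grad x hx).trans ?_) (by positivity)
  have : 1 ≤ h x / h0 := (one_le_div hW.pos).2 ha
  exact le_mul_of_one_le_right hW.C_nonneg this

lemma omgM_comm (h : EN N → ℝ) (L : ℝ) (x y : EN N) : omgM h L x y = omgM h L y x := by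
  rw [omgM, omgM, norm_sub_rev, mul_comm (h x)]
end Unsat

/-! ### Absence of saturated points -/

section NoSat
variable {N : ℕ} {Ω : Set (EN N)} {nv : EN N → EN N} {h : EN N → ℝ} {Dh : EN N → EN N}
  {h0 C L : ℝ} {u : EN N → ℝ}

/-- The part of `Ω̄` near `x0`, recentred at the origin. -/
def locK (Ω : Set (EN N)) (x0 : EN N) (ρ : ℝ) : Set (EN N) :=
  {ξ | x0 + ξ ∈ closure Ω} ∩ closedBall 0 ρ

lemma isCompact_locK (Ω : Set (EN N)) (x0 : EN N) (ρ : ℝ) : IsCompact (locK Ω x0 ρ) :=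
  (isCompact_closedBall _ _).inter_left
    (isClosed_closure.preimage (by fun_prop : Continuous fun ξ : EN N => x0 + ξ))

lemma eventually_of_locK {x0 ξ : EN N} {ρ : ℝ} (hξ : ‖ξ‖ < ρ) {P : EN N → Prop}
    (hP : ∀ᶠ ξ' in 𝓝[locK Ω x0 ρ] ξ, P ξ') :
    ∀ᶠ x in 𝓝[closure Ω] (x0 + ξ), P (x - x0) := by
  have ht : Tendsto (fun x => x - x0) (𝓝[closure Ω] (x0 + ξ)) (𝓝[locK Ω x0 ρ] ξ) := by
    refine tendsto_nhdsWithin_iff.2 ⟨?_, ?_⟩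
    · have : Tendsto (fun x : EN N => x - x0) (𝓝 (x0 + ξ)) (𝓝 (x0 + ξ - x0)) :=
        (by fun_prop : Continuous fun x : EN N => x - x0).tendsto _
      rw [add_sub_cancel_left] at this
      exact this.mono_left nhdsWithin_le_nhds
    · have h1 : ∀ᶠ x in 𝓝 (x0 + ξ), ‖x - x0‖ < ρ := by
        refine (by fun_prop : Continuous fun x : EN N => ‖x - x0‖).continuousAt.eventually
          (gt_mem_nhds ?_)
        simpa using hξ
      filter_upwards [self_mem_nhdsWithin, nhdsWithin_le_nhds h1] with x hx hx1
      refine ⟨?_, ?_⟩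
      · simpa using hx
      · simpa using hx1.le
  exact ht.eventually hP

/-- The doubling of variables at a saturated pair: near-optimal jets for the subsolution at `x`
and the supersolution at `y`, with the matrix inequality coming from the expansion of the modulus.
-/
lemma saturated_jets {H : EN N → EN N → Mat N → ℝ} {c : EN N → ℝ → ℝ}
    (hW : Weight Ω nv h Dh h0 C) (hΩb : Bornology.IsBounded Ω)
    (hnv : ContinuousOn nv (frontier Ω)) (hL : 0 < L) (hu : ContinuousOn u (closure Ω))
    (hω : ∀ x ∈ closure Ω, ∀ y ∈ closure Ω, u x - u y ≤ omg h L x y)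
    (hsub : ∀ x ∈ closure Ω, SubTest Ω nv H c u x)
    (hsup : ∀ y ∈ closure Ω, Unsat Ω h L u y → SuperTest Ω nv H c u y)
    {x0 y0 e : EN N} {r : ℝ} (hx0 : x0 ∈ closure Ω) (hy0 : y0 ∈ closure Ω) (he : ‖e‖ = 1)
    (hxy : x0 - y0 = r • e) (hr : 0 < r) (hr1 : r ≤ 1)
    (hCr : ((4 * C + 2 * C ^ 2) / h0 ^ 2 + 1) * r ≤ 1 / 2) (hCr' : C / h0 * r ≤ 1 / 8)
    (hsat : u x0 - u y0 = omg h L x0 y0) (hun : Unsat Ω h L u y0)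
    {ε : ℝ} (hε : 0 < ε) (hεm : ε ≤ omgM h L x0 y0 * r / 8) :
    ∃ x ∈ closure Ω, ∃ y ∈ closure Ω, ∃ (p1 p2 : EN N) (X Y : Mat N), ‖x - y‖ ≤ 2 * r ∧
      ‖p1 - (omgM h L x0 y0 * r / 2) • e‖ ≤ C / h0 * (omgM h L x0 y0 * r ^ 2) + ε ∧
      ‖p2 - (omgM h L x0 y0 * r / 2) • e‖ ≤ C / h0 * (omgM h L x0 y0 * r ^ 2) + ε ∧
      X.IsSymm ∧ Y.IsSymm ∧
      (∀ h' k, qf X h' - qf Y k ≤ 2 * (regQ (omgM h L x0 y0)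
        (((4 * C + 2 * C ^ 2) / h0 ^ 2 + 1) * r) e h' k + ε * (‖h'‖ ^ 2 + ‖k‖ ^ 2))) ∧
      0 ≤ H x p1 X + c x (u x) ∧ H y p2 Y + c y (u y) ≤ 0 := by
  set m := omgM h L x0 y0 with hm
  set c' := ((4 * C + 2 * C ^ 2) / h0 ^ 2 + 1) * r with hc'
  have hC := hW.C_nonneg
  have hh0 := hW.pos
  have hc'0 : 0 ≤ c' := by positivity
  have hnr : ‖x0 - y0‖ = r := by
    rw [hxy, norm_smul, he, Real.norm_eq_abs, abs_of_pos hr, mul_one]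
  have hyx : y0 - x0 = r • (-e) := by rw [smul_neg, ← hxy]; abel
  have hne : x0 ≠ y0 := fun hh => by rw [hh, sub_self, norm_zero] at hnr; linarith
  have hmpos : 0 < m := by
    have : 0 < m * r := by linarith
    exact pos_of_mul_pos_left this hr.le
  set G1 := omgGrad h Dh L x0 y0 with hG1
  set G2 := omgGrad h Dh L y0 x0 with hG2
  have n1 : ‖G1 - (m * r / 2) • e‖ ≤ C / h0 * (m * r ^ 2) := omgGrad_near hW hL.le hx0 hy0 he hxy hr
  have n2 : ‖-G2 - (m * r / 2) • e‖ ≤ C / h0 * (m * r ^ 2) := by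
    have := omgGrad_near hW hL.le hy0 hx0 (by rwa [norm_neg]) hyx hr
    rw [omgM_comm, ← hm, ← hG2] at this
    rw [← norm_neg]
    have e1 : -(-G2 - (m * r / 2) • e) = G2 - (m * r / 2) • -e := by module
    rwa [e1]
  have hpos : ∀ x y : EN N, x ∈ closure Ω → y ∈ closure Ω → x ≠ y → x ∈ frontier Ω →
      0 < ⟪omgGrad h Dh L x y, nv x⟫ := fun x y hx hy hxy' hxf => by
    rw [omgGrad, inner_smul_left]
    refine mul_pos ?_ (hW.bdry x hxf y hy hxy'.symm)
    have h1 : 0 < √‖x - y‖ := Real.sqrt_pos.2 (norm_pos_iff.2 (sub_ne_zero.2 hxy'))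
    have h2 := hh0.trans_le (hW.lower y hy)
    simp only [conj_trivial]
    positivity
  -- gradients that point outward at the boundary do so nearby, which excludes the Neumann
  -- alternative in the tests below
  obtain ⟨δ1, hδ1, hb1⟩ := bdry_pert hnv (x0 := x0) (p0 := G1) (hpos x0 y0 hx0 hy0 hne)
  obtain ⟨δ2, hδ2, hb2⟩ := bdry_pert hnv (x0 := y0) (p0 := G2) (hpos y0 x0 hy0 hx0 hne.symm)
  set ρ := r / 200 with hρ
  have hρ0 : 0 < ρ := by positivity
  obtain ⟨δ3, hδ3, hus⟩ := unsat_near hW hΩb hL hu hy0 hun hρ0 (B := ‖G2‖ + ε) (Λ := 4 * m)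
    (by positivity) (by positivity)
  set δ := min (min δ1 δ2) (min (min δ3 ε) (ρ / 2)) with hδ
  have hδ0 : 0 < δ := by positivity
  have d1 : δ ≤ δ1 := (min_le_left _ _).trans (min_le_left _ _)
  have d2 : δ ≤ δ2 := (min_le_left _ _).trans (min_le_right _ _)
  have d3 : δ ≤ δ3 := ((min_le_right _ _).trans (min_le_left _ _)).trans (min_le_left _ _)
  have d4 : δ ≤ ε := ((min_le_right _ _).trans (min_le_left _ _)).trans (min_le_right _ _)
  have d5 : δ ≤ ρ / 2 := (min_le_right _ _).trans (min_le_right _ _)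
  set u1 : EN N → ℝ := fun ξ => u (x0 + ξ) - u x0 - ⟪G1, ξ⟫ with hu1
  set u2 : EN N → ℝ := fun η => u y0 - u (y0 + η) - ⟪G2, η⟫ with hu2
  have cu : ∀ z : EN N, ContinuousOn (fun ξ => u (z + ξ)) (locK Ω z ρ) := fun z =>
    hu.comp (by fun_prop) fun ξ hξ => hξ.1
  obtain ⟨ξ, hξ, η, hη, q1, q2, S1, S2, ⟨hξδ, hηδ, hq1, hq2, hev1, hev2, hglob, hmat⟩⟩ :=
    theorem_on_sums (isCompact_locK Ω x0 ρ) (isCompact_locK Ω y0 ρ)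
    (by refine ⟨?_, ?_⟩
        · simpa using hx0
        · simpa using hρ0.le)
    (by refine ⟨?_, ?_⟩
        · simpa using hy0
        · simpa using hρ0.le) (u1 := u1) (u2 := u2)
    (((cu x0).sub continuousOn_const).sub (by fun_prop))
    ((continuousOn_const.sub (cu y0)).sub (by fun_prop))
    (by simp [hu1]) (by simp [hu2]) (regQ m c' e) (m * (5 + 4 * c')) (by positivity)
    (Λ := 4 * m) (by positivity) (fun ζ1 ζ2 => regQ_deriv he hmpos.le hc'0 ζ1 ζ2)
    (fun t h1 h2 => regQ_smul t h1 h2) (fun h1 h2 => regQ_bound he hmpos.le hc'0 h1 h2)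
    (regR m c' e) (regR m c' e) (fun h => regQ_left h) (fun h => regQ_right h)
    (fun ξ hξ η hη ζ1 ζ2 => by
      have k1 := omg_expand hW hL.le hx0 hy0 hξ.1 hη.1 he hxy hr hr1
        (by simpa using hξ.2) (by simpa using hη.2)
      have k2 := regQ_reg he hmpos.le hc'0 hCr ξ η ζ1 ζ2
      have k3 := hω _ hξ.1 _ hη.1
      simp only [hu1, hu2]
      linarith) hδ0
  have hξρ : ‖ξ‖ < ρ := by linarith
  have hηρ : ‖η‖ < ρ := by linarith
  set x := x0 + ξ with hx
  set y := y0 + η with hy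
  have hxc : x ∈ closure Ω := hξ.1
  have hyc : y ∈ closure Ω := hη.1
  have hnx : ‖x - x0‖ = ‖ξ‖ := by rw [hx, add_sub_cancel_left]
  have hny : ‖y - y0‖ = ‖η‖ := by rw [hy, add_sub_cancel_left]
  set p1 := G1 + q1 with hp1
  set p2 := -(G2 + q2) with hp2
  have np1 : ‖p1 - (m * r / 2) • e‖ ≤ C / h0 * (m * r ^ 2) + ε := by
    have e1 : p1 - (m * r / 2) • e = (G1 - (m * r / 2) • e) + q1 := by rw [hp1]; abel
    rw [e1]
    exact (norm_add_le _ _).trans (by linarith)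
  have np2 : ‖p2 - (m * r / 2) • e‖ ≤ C / h0 * (m * r ^ 2) + ε := by
    have e1 : p2 - (m * r / 2) • e = (-G2 - (m * r / 2) • e) - q2 := by rw [hp2]; abel
    rw [e1]
    exact (norm_sub_le _ _).trans (by linarith)
  have hsmall : C / h0 * (m * r ^ 2) ≤ m * r / 8 := by
    have := mul_le_mul_of_nonneg_right hCr' (by positivity : 0 ≤ m * r)
    linarith
  have hne0 : ∀ p : EN N, ‖p - (m * r / 2) • e‖ ≤ C / h0 * (m * r ^ 2) + ε → p ≠ 0 := by
    intro p hp h0'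
    rw [h0', zero_sub, norm_neg, norm_smul, he, Real.norm_eq_abs,
      abs_of_pos (by positivity)] at hp
    have : 0 < m * r := by positivity
    linarith
  -- the global paraboloid keeps `y` unsaturated, so that the supersolution test applies at `y`
  have hyun : Unsat Ω h L u y := by
    refine hus y hyc (by rw [hny]; linarith) (G2 + q2)
      ((norm_add_le _ _).trans (by linarith)) fun z hz hzt => ?_
    have := hglob (z - y0) ⟨by simpa using hz, by simpa using hzt⟩
    have e1 : z - y0 - η = z - y := by rw [hy]; abel
    have e2 : z - y0 = (z - y) + η := by rw [hy]; abel
    simp only [hu2] at this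
    rw [e1, add_sub_cancel, ← hy, e2, inner_add_right] at this
    rw [inner_add_left]
    linarith
  refine ⟨x, hxc, y, hyc, p1, p2, hess (quadFun 0 p1 S1 x) x, hess (quadFun 0 p2 (-S2) y) y,
    ?_, np1, np2, hess_isSymm (contDiff_quadFun _ _ _ _) _,
    hess_isSymm (contDiff_quadFun _ _ _ _) _, fun h' k => ?_, ?_, ?_⟩
  · have e1 : x - y = (x0 - y0) + (ξ - η) := by rw [hx, hy]; abel
    rw [e1]
    have k1 := norm_add_le (x0 - y0) (ξ - η)
    have k2 := norm_sub_le ξ η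
    linarith
  · rw [qf_hess_quadFun, qf_hess_quadFun]
    have k1 := hmat h' k
    have k2 := mul_le_mul_of_nonneg_right d4 (by positivity : 0 ≤ ‖h'‖ ^ 2 + ‖k‖ ^ 2)
    simp only [_root_.neg_apply, inner_neg_left]
    linarith
  · have hg : gradient (quadFun 0 p1 S1 x) x = p1 := gradient_quadFun _ _ _ _
    have := hsub x hxc (quadFun 0 p1 S1 x) (contDiff_quadFun _ _ _ _) (by
      have k0 := eventually_of_locK hξρ hev1
      filter_upwards [k0] with z hz
      have e1 : z - x0 - ξ = z - x := by rw [hx]; abel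
      have e2 : z - x0 = (z - x) + ξ := by rw [hx]; abel
      simp only [hu1] at hz
      rw [e1, add_sub_cancel, ← hx, e2, inner_add_right] at hz
      simp only [quadFun, sub_self, inner_zero_right, hp1, inner_add_left]
      linarith) (by rw [hg]; exact hne0 p1 np1) (fun hxf => by
      rw [hg]
      refine hb1 x hxf (by rw [hnx]; linarith) p1 ?_
      rw [hp1, add_sub_cancel_left]; linarith)
    rwa [hg] at this
  · have hg : gradient (quadFun 0 p2 (-S2) y) y = p2 := gradient_quadFun _ _ _ _
    have := hsup y hyc hyun (quadFun 0 p2 (-S2) y) (contDiff_quadFun _ _ _ _) (by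
      have k0 := eventually_of_locK hηρ hev2
      filter_upwards [k0] with z hz
      have e1 : z - y0 - η = z - y := by rw [hy]; abel
      have e2 : z - y0 = (z - y) + η := by rw [hy]; abel
      simp only [hu2] at hz
      rw [e1, add_sub_cancel, ← hy, e2, inner_add_right] at hz
      simp only [quadFun, sub_self, inner_zero_right, hp2, inner_add_left, inner_neg_left,
        _root_.neg_apply]
      linarith) (by rw [hg]; exact hne0 p2 np2) (fun hyf => by
      rw [hg, hp2, inner_neg_left]
      have := hb2 y hyf (by rw [hny]; linarith) (G2 + q2) (by
        rw [add_sub_cancel_left]; linarith)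
      linarith)
    rwa [hg] at this

/-- A function with modulus `omg h L` which is a subsolution, and a supersolution at its
unsaturated points, is nowhere saturated, provided `L` is large. -/
lemma no_saturation {α a A C₁ θ C₂ ν : ℝ} {F : EN N → EN N → Mat N → ℝ} {b : EN N → EN N}
    (hα : -1 < α) (hF2 : CondF2 Ω α a A F) (hF3 : CondF3 Ω α C₁ θ F) (hF4 : CondF4 Ω α C₂ ν F)
    {Mb : ℝ} (hMb : ∀ x ∈ closure Ω, ‖b x‖ ≤ Mb) (hMb0 : 0 ≤ Mb)
    (hW : Weight Ω nv h Dh h0 C) (hΩb : Bornology.IsBounded Ω)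
    (hnv : ContinuousOn nv (frontier Ω)) {c : EN N → ℝ → ℝ} {M C0 : ℝ} (hC0 : 0 ≤ C0)
    (hc : ∀ x ∈ closure Ω, ∀ s, |s| ≤ M → |c x s| ≤ C0) :
    ∃ r0 > 0, ∀ L > 0, 2 * M < L * h0 ^ 2 * √r0 → 4 ≤ L * h0 ^ 2 → ∀ u : EN N → ℝ,
      ContinuousOn u (closure Ω) → (∀ x ∈ closure Ω, |u x| ≤ M) →
      (∀ x ∈ closure Ω, ∀ y ∈ closure Ω, u x - u y ≤ omg h L x y) →
      (∀ x ∈ closure Ω, SubTest Ω nv (Hop F b α) c u x) →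
      (∀ y ∈ closure Ω, Unsat Ω h L u y → SuperTest Ω nv (Hop F b α) c u y) →
      ∀ y ∈ closure Ω, Unsat Ω h L u y := by
  have hC := hW.C_nonneg
  have hh0 := hW.pos
  set C' := (4 * C + 2 * C ^ 2) / h0 ^ 2 + 1 with hC'
  have hC'1 : 1 ≤ C' := by rw [hC']; linarith [show 0 ≤ (4 * C + 2 * C ^ 2) / h0 ^ 2 by positivity]
  set Cd := max C' (8 * (C / h0) + 1) with hCd
  have hCd1 : C' ≤ Cd := le_max_left _ _
  have hCd2 : 8 * (C / h0) + 1 ≤ Cd := le_max_right _ _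
  obtain ⟨rd, hrd, hdc⟩ := doubling_contra hα hF2 hF3 hF4 hMb hMb0 (C := Cd) (C0 := C0)
    (by linarith) hC0
  refine ⟨min (min 1 rd) (min (1 / (2 * C')) (min (1 / (8 * (C / h0) + 1)) (h0 ^ 2 / (4 * C + 1)))
    / 2), by positivity, ?_⟩
  set r0 := min (min 1 rd) (min (1 / (2 * C')) (min (1 / (8 * (C / h0) + 1)) (h0 ^ 2 / (4 * C + 1)))
    / 2) with hr0
  intro L hL hLM hL4 u hu hub hω hsub hsup
  have hr0pos : 0 < r0 := by positivity
  have r1 : r0 ≤ 1 := (min_le_left _ _).trans (min_le_left _ _)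
  have r2 : r0 ≤ rd := (min_le_left _ _).trans (min_le_right _ _)
  have r345 : r0 ≤ min (1 / (2 * C')) (min (1 / (8 * (C / h0) + 1)) (h0 ^ 2 / (4 * C + 1))) / 2 :=
    min_le_right _ _
  have r3 : r0 ≤ 1 / (2 * C') := by
    have := min_le_left (1 / (2 * C')) (min (1 / (8 * (C / h0) + 1)) (h0 ^ 2 / (4 * C + 1)))
    linarith
  have r45 : 2 * r0 ≤ min (1 / (8 * (C / h0) + 1)) (h0 ^ 2 / (4 * C + 1)) := by
    have := min_le_right (1 / (2 * C')) (min (1 / (8 * (C / h0) + 1)) (h0 ^ 2 / (4 * C + 1)))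
    linarith
  have r4 : 2 * r0 ≤ 1 / (8 * (C / h0) + 1) := r45.trans (min_le_left _ _)
  have r5 : 2 * r0 ≤ h0 ^ 2 / (4 * C + 1) := r45.trans (min_le_right _ _)
  rw [le_div_iff₀ (by positivity)] at r3 r4 r5
  have hCr0 : 4 * C * r0 < h0 ^ 2 := by
    have : 0 ≤ C * r0 := by positivity
    linarith
  -- saturated pairs are short
  have hshort : ∀ x ∈ closure Ω, ∀ y ∈ closure Ω, omg h L x y ≤ u x - u y → ‖x - y‖ < r0 := by
    intro x hx y hy hxy
    by_contra hcon
    have k1 := omg_nonneg hW hL.le hx hy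
    have k2 := mul_le_mul_of_nonneg_left (Real.sqrt_le_sqrt (not_lt.1 hcon))
      (by positivity : 0 ≤ L * h0 ^ 2)
    have k3 := abs_le.1 (hub x hx)
    have k4 := abs_le.1 (hub y hy)
    linarith
  by_contra hcon
  push Not at hcon
  obtain ⟨x0, hx0, hnun⟩ := hcon
  rw [Unsat] at hnun
  push Not at hnun
  obtain ⟨y0, hy0, hne, hsat0⟩ := hnun
  have hsat : u x0 - u y0 = omg h L x0 y0 := le_antisymm (hω _ hx0 _ hy0) hsat0
  have hlt := hshort x0 hx0 y0 hy0 hsat0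
  -- strict subadditivity: the lower end of a saturated pair is not the upper end of another one
  have hun : Unsat Ω h L u y0 := by
    intro z hz hzy
    by_contra hcon
    push Not at hcon
    have k1 := hshort y0 hy0 z hz hcon
    have k2 := omg_triangle hW hL hx0 hy0 hz hne.symm hzy.symm hlt k1 hCr0
    have k3 := hω x0 hx0 z hz
    linarith
  set r := ‖x0 - y0‖ with hr
  have hrpos : 0 < r := norm_pos_iff.2 (sub_ne_zero.2 hne.symm)
  set e : EN N := r⁻¹ • (x0 - y0) with he
  have he1 : ‖e‖ = 1 := by
    rw [he, norm_smul, ← hr, Real.norm_eq_abs, abs_of_pos (by positivity), inv_mul_cancel₀ hrpos.ne']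
  have hxy : x0 - y0 = r • e := by rw [he, smul_smul, mul_inv_cancel₀ hrpos.ne', one_smul]
  set m := omgM h L x0 y0 with hm
  have hmr : L * h0 ^ 2 ≤ m * r := by
    have k1 := omg_nonneg hW hL.le hx0 hy0
    rw [← hr] at k1
    have e1 : m * r = omg h L x0 y0 / r := by
      rw [hm, omgM, omg, ← hr]; field_simp
    rw [e1, le_div_iff₀ hrpos]
    refine le_trans ?_ k1
    refine mul_le_mul_of_nonneg_left ?_ (by positivity)
    exact Real.le_sqrt_of_sq_le (by nlinarith)
  have hmpos : 0 < m := pos_of_mul_pos_left (by linarith : 0 < m * r) hrpos.le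
  have hCr : C' * r ≤ 1 / 2 := by
    have := mul_le_mul_of_nonneg_left hlt.le (by linarith : 0 ≤ C')
    linarith
  have hCr' : C / h0 * r ≤ 1 / 16 := by
    have := mul_le_mul_of_nonneg_left hlt.le (by positivity : 0 ≤ C / h0)
    linarith
  have hr1 : r ≤ 1 := by linarith
  set ε := m * r ^ 2 / 16 with hε
  have hε0 : 0 < ε := by positivity
  have hmr2 : m * r ^ 2 ≤ m * r := by
    have := mul_le_mul_of_nonneg_left hr1 (by positivity : 0 ≤ m * r)
    linarith
  have hε8 : ε ≤ m * r / 16 := by linarith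
  obtain ⟨x, hx, y, hy, p1, p2, X, Y, hxy2, hp1, hp2, hX, hY, hmat, hs1, hs2⟩ :=
    saturated_jets hW hΩb hnv hL hu hω hsub hsup hx0 hy0 he1 hxy hrpos hr1 hCr (by linarith)
      hsat hun hε0 (by have : 0 < m * r := by positivity
                       linarith)
  rw [← hm] at hp1 hp2 hmat
  have hsmall : C / h0 * (m * r ^ 2) ≤ m * r / 16 := by
    have := mul_le_mul_of_nonneg_right hCr' (by positivity : 0 ≤ m * r)
    linarith
  have hmr0 : 0 < m * r := by positivity
  have hse : ‖(m * r / 2) • e‖ = m * r / 2 := by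
    rw [norm_smul, he1, Real.norm_eq_abs, abs_of_pos (by positivity), mul_one]
  have l1 : m * r / 4 ≤ ‖p1‖ := by
    have := norm_sub_norm_le ((m * r / 2) • e) p1
    rw [hse, norm_sub_rev] at this
    linarith
  refine hdc r hrpos (by linarith) m hmpos (by linarith) x hx y hy hxy2 e he1 p1 p2 l1 ?_ ?_ X Y hX
    hY (fun h' k => ?_) ?_ ?_
  · have := norm_le_norm_add_norm_sub ((m * r / 2) • e) p1
    rw [hse, norm_sub_rev] at this
    linarith
  · have k1 : ‖p2 - p1‖ ≤ ‖p2 - (m * r / 2) • e‖ + ‖p1 - (m * r / 2) • e‖ := by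
      rw [norm_sub_rev p1]; exact norm_sub_le_norm_sub_add_norm_sub _ _ _
    have k2 : Cd * r * (m * r / 4) ≤ Cd * r * ‖p1‖ := mul_le_mul_of_nonneg_left l1 (by positivity)
    have k3 := mul_le_mul_of_nonneg_right hCd2 (by positivity : 0 ≤ m * r ^ 2)
    linarith
  · have k1 := hmat h' k
    rw [regQ] at k1
    have k2 : 0 ≤ m * r * (‖h'‖ ^ 2 + ‖k‖ ^ 2) := by positivity
    have k3 := mul_le_mul_of_nonneg_right hCd1 k2
    have k4 := mul_le_mul_of_nonneg_right hC'1 k2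
    have k5 : ε * (‖h'‖ ^ 2 + ‖k‖ ^ 2) ≤ m * r / 16 * (‖h'‖ ^ 2 + ‖k‖ ^ 2) :=
      mul_le_mul_of_nonneg_right hε8 (by positivity)
    linarith
  · have := (abs_le.1 (hc x hx _ (hub x hx))).2
    linarith
  · have := (abs_le.1 (hc y hy _ (hub y hy))).1
    linarith
end NoSat

/-! ### The Perron family and its maximal element -/

section Perron
variable {N : ℕ} {Ω : Set (EN N)} {nv : EN N → EN N} {h : EN N → ℝ} {Dh : EN N → EN N}
  {h0 C L α : ℝ} {u0 v : EN N → ℝ} {H : EN N → EN N → Mat N → ℝ} {c : EN N → ℝ → ℝ}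

/-- The Perron family: subsolutions between `u0` and `v` with modulus of continuity `omg h L`. -/
def PerronFam (Ω : Set (EN N)) (nv : EN N → EN N) (H : EN N → EN N → Mat N → ℝ)
    (c : EN N → ℝ → ℝ) (h : EN N → ℝ) (L : ℝ) (u0 v : EN N → ℝ) : Set (EN N → ℝ) :=
  {f | (∀ x ∈ closure Ω, u0 x ≤ f x) ∧ (∀ x ∈ closure Ω, f x ≤ v x) ∧
    (∀ x ∈ closure Ω, ∀ y ∈ closure Ω, f x - f y ≤ omg h L x y) ∧
    (∀ x ∈ closure Ω, SubTest Ω nv H c f x) ∧ (∀ x ∈ closure Ω, SubConst Ω c f x)}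

lemma continuousOn_of_omg (hW : Weight Ω nv h Dh h0 C) (hL : 0 ≤ L) {f : EN N → ℝ}
    (hf : ∀ x ∈ closure Ω, ∀ y ∈ closure Ω, f x - f y ≤ omg h L x y) :
    ContinuousOn f (closure Ω) := by
  intro x hx
  have ht : Tendsto (fun y : EN N => L * √‖x - y‖) (𝓝[closure Ω] x) (𝓝 0) := by
    have : Tendsto (fun y : EN N => L * √‖x - y‖) (𝓝 x) (𝓝 (L * √‖x - x‖)) :=
      (by fun_prop : Continuous fun y : EN N => L * √‖x - y‖).tendsto x
    simp only [sub_self, norm_zero, Real.sqrt_zero, mul_zero] at this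
    exact this.mono_left nhdsWithin_le_nhds
  rw [ContinuousWithinAt, tendsto_iff_norm_sub_tendsto_zero]
  refine squeeze_zero' (Eventually.of_forall fun y => norm_nonneg _) ?_ ht
  filter_upwards [self_mem_nhdsWithin] with y hy
  have k1 := (hf x hx y hy).trans (omg_le hW hL hx hy)
  have k2 := (hf y hy x hx).trans (omg_le hW hL hy hx)
  rw [norm_sub_rev y x] at k2
  rw [Real.norm_eq_abs, abs_le]
  constructor <;> linarith

/-- The Perron family has a largest element. -/
lemma exists_perron_max (hα : -1 < α) (hW : Weight Ω nv h Dh h0 C) (hL : 0 ≤ L) (hΩ : IsOpen Ω)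
    (hH : Oper Ω α H) (hnv : ContinuousOn nv (frontier Ω))
    (hc : ContinuousOn (fun z : EN N × ℝ => c z.1 z.2) (closure Ω ×ˢ univ))
    (hu0 : u0 ∈ PerronFam Ω nv H c h L u0 v) :
    ∃ U ∈ PerronFam Ω nv H c h L u0 v, ∀ f ∈ PerronFam Ω nv H c h L u0 v,
      ∀ x ∈ closure Ω, f x ≤ U x := by
  set S := PerronFam Ω nv H c h L u0 v with hS
  set U : EN N → ℝ := fun x => sSup ((fun f : EN N → ℝ => f x) '' S) with hU
  have hne : ∀ x : EN N, ((fun f : EN N → ℝ => f x) '' S).Nonempty := fun x => ⟨_, u0, hu0, rfl⟩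
  have hbd : ∀ x ∈ closure Ω, BddAbove ((fun f : EN N → ℝ => f x) '' S) := fun x hx =>
    ⟨v x, by rintro _ ⟨f, hf, rfl⟩; exact hf.2.1 x hx⟩
  have hle : ∀ f ∈ S, ∀ x ∈ closure Ω, f x ≤ U x := fun f hf x hx =>
    le_csSup (hbd x hx) ⟨f, hf, rfl⟩
  have happ : ∀ x, ∀ ε > 0, ∃ f ∈ S, U x - ε < f x := fun x ε hε => by
    obtain ⟨_, ⟨f, hf, rfl⟩, h1⟩ := exists_lt_of_lt_csSup (hne x)
      (show U x - ε < sSup _ by rw [hU]; linarith)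
    exact ⟨f, hf, h1⟩
  have hωU : ∀ x ∈ closure Ω, ∀ y ∈ closure Ω, U x - U y ≤ omg h L x y := fun x hx y hy => by
    have : U x ≤ U y + omg h L x y := by
      refine csSup_le (hne x) ?_
      rintro _ ⟨f, hf, rfl⟩
      have k1 := hle f hf y hy
      have k2 := hf.2.2.1 x hx y hy
      simp only
      linarith
    linarith
  have hUc := continuousOn_of_omg hW hL hωU
  have husc : ∀ f ∈ S, UpperSemicontinuousOn f (closure Ω) := fun f hf =>
    (continuousOn_of_omg hW hL hf.2.2.1).upperSemicontinuousOn
  refine ⟨U, ⟨fun x hx => hle u0 hu0 x hx, fun x hx => csSup_le (hne x) ?_, hωU, fun x hx => ?_,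
    fun x hx hxΩ hmax => ?_⟩, hle⟩
  · rintro _ ⟨f, hf, rfl⟩; exact hf.2.1 x hx
  · exact subTest_sup hH hnv hc hx (fun f hf => ⟨husc f hf, hf.2.2.2.1⟩) hle (happ x) (hUc x hx)
  · by_contra hneg
    push Not at hneg
    obtain ⟨R0, hR0, hgap⟩ := exists_gap_of_neg (nv := nv) hα hH hΩ hc hxΩ hneg
    obtain ⟨R1, hR1, hb1⟩ := Metric.mem_nhdsWithin_iff.1 hmax
    obtain ⟨ε, hε, hgap'⟩ := hgap (min R0 (R1 / 2)) (by positivity) (min_le_left _ _)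
    obtain ⟨f, hf, hfx⟩ := happ x ε hε
    have := hgap' f (husc f hf) hf.2.2.2.1 (fun z hz hzΩ k hk => by
        have hkz : f z = k := hk.self_of_nhdsWithin hz
        have := hf.2.2.2.2 z hz hzΩ (by
          filter_upwards [hk] with w hw
          rw [hw, hkz])
        rwa [hkz] at this) (fun z hz hzR => by
        have k1 := hle f hf z hz
        have k2 := hb1 (show z ∈ ball x R1 ∩ closure Ω from ⟨by
          rw [mem_ball, dist_eq_norm]
          have := hzR.trans (min_le_right _ _)
          linarith, hz⟩)
        simp only [mem_ofPred_eq] at k2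
        linarith)
    linarith

/-- At an unsaturated point below the obstacle `v`, the maximal element `U` cannot be touched
strictly from below by a `C²` function all of whose small upward shifts are subsolutions near the
point: the maximum of `U` and such a shift would be a larger member of the family. -/
lemma no_bump (hW : Weight Ω nv h Dh h0 C) (hL : 0 < L) (hΩb : Bornology.IsBounded Ω)
    (hv : LowerSemicontinuousOn v (closure Ω)) {U : EN N → ℝ}
    (hU : U ∈ PerronFam Ω nv H c h L u0 v)
    (hmax : ∀ f ∈ PerronFam Ω nv H c h L u0 v, ∀ x ∈ closure Ω, f x ≤ U x)
    {y0 : EN N} (hy0 : y0 ∈ closure Ω) (hun : Unsat Ω h L U y0) (hlt : U y0 < v y0)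
    {ψ : EN N → ℝ} (hψ : ContDiff ℝ 2 ψ) (hψ0 : ψ y0 = U y0) {R : ℝ} (hR : 0 < R)
    (hψlt : ∀ z ∈ closure Ω, z ≠ y0 → ‖z - y0‖ ≤ R → ψ z < U z)
    (hψs : ∀ δ, 0 < δ → δ ≤ R → ∀ x ∈ closure Ω, ‖x - y0‖ ≤ R →
      SubTest Ω nv H c (fun z => ψ z + δ) x ∧ SubConst Ω c (fun z => ψ z + δ) x) : False := by
  have hUc := continuousOn_of_omg hW hL.le hU.2.2.1
  obtain ⟨B, t, ht, hlip⟩ := (hψ.contDiffAt (x := y0)).of_le (m := 1) (by norm_num)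
    |>.exists_lipschitzOnWith
  obtain ⟨t1, ht1, hlip1⟩ := Metric.mem_nhds_iff.1 ht
  have hh : 0 < L * h0 ^ 2 := mul_pos hL (pow_pos hW.pos 2)
  obtain ⟨s, hs, hs1⟩ := sqrt_beats hh B.2 (le_refl (0 : ℝ))
  set γ := v y0 - U y0 with hγ
  have hγ0 : 0 < γ := by rw [hγ]; linarith
  have hv1 := hv y0 hy0 (v y0 - γ / 2) (by linarith)
  obtain ⟨t2, ht2, hv2⟩ := Metric.mem_nhdsWithin_iff.1 hv1
  obtain ⟨t3, ht3, hψ3⟩ := Metric.continuousAt_iff.1 (hψ.continuous.continuousAt (x := y0)) (γ / 4)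
    (by positivity)
  set R' := min (min (min (t1 / 2) (t2 / 2)) (min (t3 / 2) R)) (s / 2) with hR'
  have hR'0 : 0 < R' := by positivity
  have a1 : R' < t1 := by
    have : R' ≤ t1 / 2 := ((min_le_left _ _).trans (min_le_left _ _)).trans (min_le_left _ _)
    linarith
  have a2 : R' < t2 := by
    have : R' ≤ t2 / 2 := ((min_le_left _ _).trans (min_le_left _ _)).trans (min_le_right _ _)
    linarith
  have a3 : R' < t3 := by
    have : R' ≤ t3 / 2 := ((min_le_left _ _).trans (min_le_right _ _)).trans (min_le_left _ _)
    linarith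
  have a4 : R' ≤ R := ((min_le_left _ _).trans (min_le_right _ _)).trans (min_le_right _ _)
  have a5 : R' ≤ s / 2 := min_le_right _ _
  -- far away, the lifted function keeps the modulus by compactness
  have hfar : ∀ᶠ p in 𝓝 (y0, (0 : ℝ)), ∀ z ∈ closure Ω ∩ {z | R' ≤ ‖z - y0‖},
      p.1 ∈ closure Ω → z ∈ closure Ω → ψ p.1 + p.2 - U z < omg h L p.1 z := by
    have hK : IsCompact (closure Ω ∩ {z | R' ≤ ‖z - y0‖}) :=
      hΩb.isCompact_closure.inter_right (isClosed_le continuous_const (by fun_prop))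
    refine hK.eventually_forall_of_forall_eventually fun z hz => ?_
    have hne : z ≠ y0 := fun heq => by
      have := hz.2
      simp only [mem_ofPred_eq, heq, sub_self, norm_zero] at this
      linarith
    have hΨ : ContinuousOn (fun w : (EN N × ℝ) × EN N =>
        omg h L w.1.1 w.2 - (ψ w.1.1 + w.1.2 - U w.2)) ((closure Ω ×ˢ univ) ×ˢ closure Ω) := by
      refine ContinuousOn.sub ?_ (ContinuousOn.sub ?_ ?_)
      · exact (omg_continuousOn hW L).comp
          (f := fun w : (EN N × ℝ) × EN N => (w.1.1, w.2)) (by fun_prop)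
          fun w hw => ⟨hw.1.1, hw.2⟩
      · have := hψ.continuous
        fun_prop
      · exact hUc.comp continuousOn_snd fun w hw => hw.2
    have h1 := (hΨ ((y0, 0), z) ⟨⟨hy0, trivial⟩, hz.1⟩).eventually
      (lt_mem_nhds (a := 0) (by have := hun z hz.1 hne; simp only [hψ0]; linarith))
    filter_upwards [eventually_nhdsWithin_iff.1 h1] with p hp h2 h3
    have := hp ⟨⟨h2, trivial⟩, h3⟩
    linarith
  obtain ⟨t4, ht4, hfar'⟩ := Metric.eventually_nhds_iff.1 hfar
  set r := min (t4 / 2) (R' / 2) with hr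
  have hr0 : 0 < r := by positivity
  have b1 : r < t4 := by
    have : r ≤ t4 / 2 := min_le_left _ _
    linarith
  have b2 : r < R' := by
    have : r ≤ R' / 2 := min_le_right _ _
    linarith
  obtain ⟨δ2, hδ2, hgap⟩ : ∃ δ2 > 0, ∀ z ∈ closure Ω, r ≤ ‖z - y0‖ → ‖z - y0‖ ≤ R' →
      ψ z + δ2 ≤ U z := by
    have hK : IsCompact (closure Ω ∩ {z | r ≤ ‖z - y0‖ ∧ ‖z - y0‖ ≤ R'}) :=
      hΩb.isCompact_closure.inter_right
        (IsClosed.inter (s₁ := {z : EN N | r ≤ ‖z - y0‖}) (s₂ := {z : EN N | ‖z - y0‖ ≤ R'})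
          (isClosed_le continuous_const (by fun_prop))
          (isClosed_le (by fun_prop) continuous_const))
    rcases (closure Ω ∩ {z | r ≤ ‖z - y0‖ ∧ ‖z - y0‖ ≤ R'}).eq_empty_or_nonempty with hemp | hnon
    · refine ⟨1, one_pos, fun z hz h1 h2 => ?_⟩
      have : z ∈ closure Ω ∩ {z | r ≤ ‖z - y0‖ ∧ ‖z - y0‖ ≤ R'} := ⟨hz, h1, h2⟩
      rw [hemp] at this
      exact this.elim
    · obtain ⟨w, hw, hwm⟩ := hK.exists_isMinOn hnon
        (f := fun z => U z - ψ z) ((hUc.mono inter_subset_left).sub hψ.continuous.continuousOn)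
      have hwne : w ≠ y0 := fun heq => by
        have := hw.2.1
        simp only [heq, sub_self, norm_zero] at this
        linarith
      have := hψlt w hw.1 hwne (hw.2.2.trans a4)
      refine ⟨U w - ψ w, by linarith, fun z hz h1 h2 => ?_⟩
      have := hwm (show z ∈ _ from ⟨hz, h1, h2⟩)
      simp only [mem_ofPred_eq] at this
      linarith
  set δ := min (min (δ2 / 2) (t4 / 2)) (min R (γ / 4)) with hδ
  have hδ0 : 0 < δ := by positivity
  have c1 : δ < δ2 := by
    have : δ ≤ δ2 / 2 := (min_le_left _ _).trans (min_le_left _ _)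
    linarith
  have c2 : δ < t4 := by
    have : δ ≤ t4 / 2 := (min_le_left _ _).trans (min_le_right _ _)
    linarith
  have c3 : δ ≤ R := (min_le_right _ _).trans (min_le_left _ _)
  have c4 : δ ≤ γ / 4 := (min_le_right _ _).trans (min_le_right _ _)
  classical
  set w : EN N → ℝ := fun z => if ‖z - y0‖ < R' then max (U z) (ψ z + δ) else U z with hw
  have hwin : ∀ z, ‖z - y0‖ < R' → w z = max (U z) (ψ z + δ) := fun z hz => if_pos hz
  have hwU : ∀ z, U z ≤ w z := fun z => by
    by_cases hz : ‖z - y0‖ < R'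
    · rw [hwin z hz]; exact le_max_left _ _
    · rw [hw]; simp only [if_neg hz]; exact le_refl _
  -- where the lift is active, it is given by the test function near `y0`
  have hdich : ∀ x ∈ closure Ω, w x = U x ∨ (‖x - y0‖ < r ∧ w x = ψ x + δ) := fun x hx => by
    by_cases hz : ‖x - y0‖ < R'
    · rw [hwin x hz]
      rcases le_total (ψ x + δ) (U x) with h1 | h1
      · left; exact max_eq_left h1
      · by_cases hzr : ‖x - y0‖ < r
        · right; exact ⟨hzr, max_eq_right h1⟩
        · exfalso
          have := hgap x hx (not_lt.1 hzr) hz.le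
          linarith
    · left; rw [hw]; simp only [if_neg hz]
  have hwS : w ∈ PerronFam Ω nv H c h L u0 v := by
    refine ⟨fun x hx => (hU.1 x hx).trans (hwU x), fun x hx => ?_, fun x hx y hy => ?_,
      fun x hx => ?_, fun x hx => ?_⟩
    · rcases hdich x hx with h1 | ⟨h1, h2⟩
      · rw [h1]; exact hU.2.1 x hx
      · rw [h2]
        have k1 := hv2 (show x ∈ ball y0 t2 ∩ closure Ω from
          ⟨by rw [mem_ball, dist_eq_norm]; linarith, hx⟩)
        have k2 := hψ3 (show dist x y0 < t3 by rw [dist_eq_norm]; linarith)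
        rw [Real.dist_eq, abs_lt] at k2
        simp only [mem_ofPred_eq] at k1
        linarith
    · rcases hdich x hx with h1 | ⟨h1, h2⟩
      · rw [h1]
        have := hU.2.2.1 x hx y hy
        linarith [hwU y]
      · rw [h2]
        by_cases hyR : ‖y - y0‖ < R'
        · have k1 : ψ y + δ ≤ w y := by rw [hwin y hyR]; exact le_max_right _ _
          rcases eq_or_ne x y with rfl | hxy
          · rw [omg_self]; linarith
          have k2 := hlip.dist_le_mul x (hlip1 (by rw [mem_ball, dist_eq_norm]; linarith)) y
            (hlip1 (by rw [mem_ball, dist_eq_norm]; linarith))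
          rw [Real.dist_eq, dist_eq_norm] at k2
          have k3 : ‖x - y‖ ≤ ‖x - y0‖ + ‖y - y0‖ := by
            rw [norm_sub_rev y y0]; exact norm_sub_le_norm_sub_add_norm_sub _ _ _
          have k4 := hs1 _ (norm_pos_iff.2 (sub_ne_zero.2 hxy)) (by linarith)
          have k5 := omg_nonneg hW hL.le hx hy
          have k6 := le_abs_self (ψ x - ψ y)
          have k7 : (B.1 : ℝ) * ‖x - y‖ = B * ‖x - y‖ := rfl
          linarith
        · have k1 := hfar' (y := (x, δ)) (by
            rw [Prod.dist_eq, dist_eq_norm, Real.dist_eq, sub_zero, abs_of_pos hδ0]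
            exact max_lt (by simp only; linarith) c2) y
            ⟨hy, not_lt.1 hyR⟩ hx hy
          have k2 := hwU y
          simp only at k1
          linarith
    · rcases hdich x hx with h1 | ⟨h1, h2⟩
      · exact SubTest.of_le (Eventually.of_forall hwU) h1.symm (hU.2.2.2.1 x hx)
      · refine SubTest.of_le ?_ h2.symm (hψs δ hδ0 c3 x hx (by linarith)).1
        have : ball y0 R' ∈ 𝓝 x := isOpen_ball.mem_nhds (by
          rw [mem_ball, dist_eq_norm]; linarith)
        filter_upwards [mem_nhdsWithin_of_mem_nhds this] with z hz
        rw [mem_ball, dist_eq_norm] at hz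
        rw [hwin z hz]; exact le_max_right _ _
    · rcases hdich x hx with h1 | ⟨h1, h2⟩
      · exact SubConst.of_le (Eventually.of_forall hwU) h1.symm (hU.2.2.2.2 x hx)
      · refine SubConst.of_le ?_ h2.symm (hψs δ hδ0 c3 x hx (by linarith)).2
        have : ball y0 R' ∈ 𝓝 x := isOpen_ball.mem_nhds (by
          rw [mem_ball, dist_eq_norm]; linarith)
        filter_upwards [mem_nhdsWithin_of_mem_nhds this] with z hz
        rw [mem_ball, dist_eq_norm] at hz
        rw [hwin z hz]; exact le_max_right _ _
  have k1 := hmax w hwS y0 hy0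
  rw [hwin y0 (by simpa using hR'0), hψ0] at k1
  have := le_max_right (U y0) (U y0 + δ)
  linarith
end Perron

section PerronSuper
variable {N : ℕ} {Ω : Set (EN N)} {nv : EN N → EN N} {h : EN N → ℝ} {Dh : EN N → EN N}
  {h0 C L α : ℝ} {u0 v U ρ : EN N → ℝ} {H : EN N → EN N → Mat N → ℝ} {c : EN N → ℝ → ℝ}
  {y0 : EN N}

/-- At an unsaturated point the maximal element of the Perron family is a supersolution for tests
with nonvanishing gradient. -/
lemma perron_superTest (hW : Weight Ω nv h Dh h0 C) (hL : 0 < L) (hΩ : IsOpen Ω)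
    (hΩb : Bornology.IsBounded Ω) (hρ : IsC2DefiningFun Ω nv ρ) (hH : Oper Ω α H)
    (hc : ContinuousOn (fun z : EN N × ℝ => c z.1 z.2) (closure Ω ×ˢ univ))
    (hv : LowerSemicontinuousOn v (closure Ω)) (hvT : ∀ x ∈ closure Ω, SuperTest Ω nv H c v x)
    (hU : U ∈ PerronFam Ω nv H c h L u0 v)
    (hmax : ∀ f ∈ PerronFam Ω nv H c h L u0 v, ∀ x ∈ closure Ω, f x ≤ U x)
    (hy0 : y0 ∈ closure Ω) (hun : Unsat Ω h L U y0) : SuperTest Ω nv H c U y0 := by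
  rcases (hU.2.1 y0 hy0).eq_or_lt with heq | hlt
  · refine SuperTest.of_le ?_ heq.symm (hvT y0 hy0)
    filter_upwards [self_mem_nhdsWithin] with z hz using hU.2.1 z hz
  intro φ hφ hm hg hb
  by_contra hneg
  push Not at hneg
  set ψ : EN N → ℝ := fun z => φ z + (U y0 - φ y0) - radFun 1 2 y0 z with hψdef
  have hφ' : ContDiff ℝ 2 (fun z => φ z + (U y0 - φ y0)) := hφ.add contDiff_const
  have hr2 := contDiff_radFun 1 2 y0
  have hψ : ContDiff ℝ 2 ψ := hφ'.sub hr2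
  have hψ0 : ψ y0 = U y0 := by simp [hψdef, radFun]
  have hgr : gradient ψ y0 = gradient φ y0 := by
    rw [hψdef, gradient_sub' hφ' hr2, gradient_const_add', (hasGradientAt_radFun 1 1 y0 y0).gradient]
    simp
  have hhs : ∀ k, qf (hess ψ y0) k = qf (hess φ y0) k := fun k => by
    have := abs_qf_hess_radFun 1 zero_le_one 0 y0 y0 k
    simp only [sub_self, norm_zero, zero_add] at this
    rw [hψdef, hess_sub' hφ' hr2, hess_const_add', qf_sub]
    have h0 : qf (hess (radFun 1 2 y0) y0) k = 0 := by
      rw [← abs_nonpos_iff]; refine this.trans (le_of_eq ?_); norm_num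
    rw [h0, sub_zero]
  obtain ⟨δ0, hδ0, hnear⟩ := oper_near hH hc hψ hy0 (hess_isSymm hφ y0) hgr hhs hg (U y0) hneg
  have hbd := bdry_near (x0 := y0) (continuousOn_normal hρ) (G := fun x => - gradient ψ x)
    (continuous_gradient' hψ).neg (fun hx => by
      rw [hgr, inner_neg_left]; linarith [hb hx])
  obtain ⟨t1, ht1, hbd1⟩ := Metric.eventually_nhds_iff.1 hbd
  obtain ⟨t2, ht2, hm2⟩ := Metric.mem_nhdsWithin_iff.1 hm
  obtain ⟨t3, ht3, hψ3⟩ := (Metric.continuousAt_iff (f := ψ)).1 (hψ.continuous.continuousAt (x := y0))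
    (δ0 / 2) (half_pos hδ0)
  set R := min (min (δ0 / 2) (t1 / 2)) (min (t2 / 2) (t3 / 2)) with hR
  have hR0 : 0 < R := by positivity
  have a1 : R ≤ δ0 / 2 := (min_le_left _ _).trans (min_le_left _ _)
  have a2 : R ≤ t1 / 2 := (min_le_left _ _).trans (min_le_right _ _)
  have a3 : R ≤ t2 / 2 := (min_le_right _ _).trans (min_le_left _ _)
  have a4 : R ≤ t3 / 2 := (min_le_right _ _).trans (min_le_right _ _)
  refine no_bump hW hL hΩb hv hU hmax hy0 hun hlt hψ hψ0 hR0 (fun z hz hne hzR => ?_)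
    (fun δ hδ hδR x hx hxR => ?_)
  · have k1 := hm2 (show z ∈ ball y0 t2 ∩ closure Ω from
      ⟨by rw [mem_ball, dist_eq_norm]; linarith, hz⟩)
    simp only [mem_ofPred_eq] at k1
    have : 0 < ‖z - y0‖ := norm_pos_iff.2 (sub_ne_zero.2 hne)
    have k2 : 0 < radFun 1 2 y0 z := by unfold radFun; positivity
    simp only [hψdef]
    linarith
  · obtain ⟨n1, n2⟩ := hnear x hx (by linarith)
    have k2 := hψ3 (show dist x y0 < t3 by rw [dist_eq_norm]; linarith)
    rw [Real.dist_eq, hψ0] at k2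
    have k3 : |ψ x + δ - U y0| ≤ δ0 := by
      rw [abs_lt] at k2
      rw [abs_le]; constructor <;> linarith [k2.1, k2.2]
    have k4 := (abs_le.1 (n2 _ k3)).1
    constructor
    · refine subTest_of_classical hΩ hρ hH (hψ.add contDiff_const) (fun _ _ => ?_) (fun hxf => ?_) hx
      · rw [gradient_const_add', hess_const_add']
        linarith
      · rw [gradient_const_add']
        have := hbd1 (show dist x y0 < t1 by rw [dist_eq_norm]; linarith) hxf
        rw [inner_neg_left] at this
        linarith
    · refine subConst_of_classical hΩ (fun _ hz => ?_)
      rw [gradient_const_add'] at hz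
      exact absurd hz n1

/-- At an unsaturated point the maximal element of the Perron family satisfies the condition for
constant tests from below. The bump is a flat radial function, whose order makes the degenerate or
singular operator bounded along it. -/
lemma perron_superConst (hα : -1 < α) (hW : Weight Ω nv h Dh h0 C) (hL : 0 < L) (hΩ : IsOpen Ω)
    (hΩb : Bornology.IsBounded Ω) (hρ : IsC2DefiningFun Ω nv ρ) (hH : Oper Ω α H)
    (hc : ContinuousOn (fun z : EN N × ℝ => c z.1 z.2) (closure Ω ×ˢ univ))
    (hv : LowerSemicontinuousOn v (closure Ω)) (hvC : ∀ x ∈ closure Ω, SuperConst Ω c v x)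
    (hU : U ∈ PerronFam Ω nv H c h L u0 v)
    (hmax : ∀ f ∈ PerronFam Ω nv H c h L u0 v, ∀ x ∈ closure Ω, f x ≤ U x)
    (hy0 : y0 ∈ closure Ω) (hun : Unsat Ω h L U y0) : SuperConst Ω c U y0 := by
  rcases (hU.2.1 y0 hy0).eq_or_lt with heq | hlt
  · refine SuperConst.of_le ?_ heq.symm (hvC y0 hy0)
    filter_upwards [self_mem_nhdsWithin] with z hz using hU.2.1 z hz
  intro hyΩ hm
  by_contra hneg
  push Not at hneg
  obtain ⟨n, K, hK, hrad⟩ := exists_radial_bound hα hH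
  have hα1 : 0 < α + 1 := by linarith
  set m := c y0 (U y0) with hmdef
  -- amplitude for which the operator along the bump is at most `m / 2`
  obtain ⟨A, hA, hAK⟩ : ∃ A > 0, K * A ^ (α + 1) ≤ m / 2 := by
    refine ⟨(m / (2 * (K + 1))) ^ (1 / (α + 1)), by positivity, ?_⟩
    rw [← Real.rpow_mul (by positivity), one_div, inv_mul_cancel₀ hα1.ne', Real.rpow_one]
    rw [mul_div_assoc', div_le_iff₀ (by positivity)]
    nlinarith
  obtain ⟨δ0, hδ0, hcn⟩ := c_near hc hy0 (U y0) (half_pos hneg)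
  have hr2 := contDiff_radFun A (n + 2) y0
  set ψ : EN N → ℝ := fun z => -radFun A (n + 2) y0 z + U y0 with hψdef
  have hψ : ContDiff ℝ 2 ψ := hr2.neg.add contDiff_const
  have hψ0 : ψ y0 = U y0 := by simp [hψdef, radFun]
  have hgr : ∀ x, gradient ψ x = -gradient (radFun A (n + 2) y0) x := fun x => by
    rw [hψdef, gradient_const_add', gradient_neg']
  have hhs : ∀ x, hess ψ x = -hess (radFun A (n + 2) y0) x := fun x => by
    rw [hψdef, hess_const_add', hess_neg']
  obtain ⟨t1, ht1, hb1⟩ := Metric.isOpen_iff.1 hΩ y0 hyΩ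
  obtain ⟨t2, ht2, hm2⟩ := Metric.mem_nhdsWithin_iff.1 hm
  obtain ⟨t3, ht3, hψ3⟩ := (Metric.continuousAt_iff (f := ψ)).1 (hψ.continuous.continuousAt (x := y0))
    (δ0 / 2) (half_pos hδ0)
  set R := min (min (min (δ0 / 2) 1) (t1 / 2)) (min (t2 / 2) (t3 / 2)) with hR
  have hR0 : 0 < R := by positivity
  have a1 : R ≤ δ0 / 2 := (min_le_left _ _).trans ((min_le_left _ _).trans (min_le_left _ _))
  have a0 : R ≤ 1 := (min_le_left _ _).trans ((min_le_left _ _).trans (min_le_right _ _))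
  have a2 : R ≤ t1 / 2 := (min_le_left _ _).trans (min_le_right _ _)
  have a3 : R ≤ t2 / 2 := (min_le_right _ _).trans (min_le_left _ _)
  have a4 : R ≤ t3 / 2 := (min_le_right _ _).trans (min_le_right _ _)
  refine no_bump hW hL hΩb hv hU hmax hy0 hun hlt hψ hψ0 hR0 (fun z hz hne hzR => ?_)
    (fun δ hδ hδR x hx hxR => ?_)
  · have k1 := hm2 (show z ∈ ball y0 t2 ∩ closure Ω from
      ⟨by rw [mem_ball, dist_eq_norm]; linarith, hz⟩)
    simp only [mem_ofPred_eq] at k1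
    have : 0 < ‖z - y0‖ := norm_pos_iff.2 (sub_ne_zero.2 hne)
    have k2 : 0 < radFun A (n + 2) y0 z := by unfold radFun; positivity
    simp only [hψdef]
    linarith
  · have hxΩ : x ∈ Ω := hb1 (by rw [mem_ball, dist_eq_norm]; linarith)
    have k2 := hψ3 (show dist x y0 < t3 by rw [dist_eq_norm]; linarith)
    rw [Real.dist_eq, hψ0] at k2
    have k3 : |ψ x + δ - U y0| ≤ δ0 := by
      rw [abs_lt] at k2
      rw [abs_le]; constructor <;> linarith [k2.1, k2.2]
    have k4 := (abs_le.1 (hcn x hx _ (by linarith) k3)).1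
    constructor
    · refine subTest_of_classical hΩ hρ hH (hψ.add contDiff_const) (fun _ hg => ?_) (fun hxf => ?_) hx
      · rw [gradient_const_add'] at hg
        have hxy : x ≠ y0 := by
          rintro rfl
          rw [hgr, (hasGradientAt_radFun A (n + 1) x x).gradient] at hg
          simp at hg
        rw [gradient_const_add', hess_const_add', hgr, hhs]
        have k5 := (abs_le.1 (hrad A hA x hx y0 hxy (by linarith)).2.2).1
        linarith
      · rw [hΩ.frontier_eq] at hxf
        exact absurd hxΩ hxf.2
    · refine subConst_of_classical hΩ (fun _ _ => ?_)
      linarith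

end PerronSuper

/-! ### Perron's method in a Hölder class -/

section PerronThm
variable {N : ℕ} {Ω : Set (EN N)} {nv : EN N → EN N}

/-- Existence by Perron's method within a Hölder class: between a `1/2`-Hölder subsolution and a
bounded supersolution lies a `1/2`-Hölder solution. -/
theorem perron_holder {α a A C₁ θ C₂ ν : ℝ} {F : EN N → EN N → Mat N → ℝ} {b : EN N → EN N}
    {c₀ : EN N → ℝ → ℝ} {g u0 v : EN N → ℝ} (hΩ : IsC2Domain Ω nv) (hα : -1 < α)
    (hF0 : ∀ x ∈ closure Ω, ∀ p, p ≠ 0 → F x p 0 = 0) (hF2 : CondF2 Ω α a A F)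
    (hF3 : CondF3 Ω α C₁ θ F) (hF4 : CondF4 Ω α C₂ ν F) (hb : ContinuousOn b (closure Ω))
    (hc : ContinuousOn (fun z : EN N × ℝ => c₀ z.1 z.2) (closure Ω ×ˢ univ))
    (hg : ContinuousOn g (closure Ω))
    (hv : LowerSemicontinuousOn v (closure Ω)) (hvb : ∃ M, ∀ x ∈ closure Ω, v x ≤ M)
    (hvs : IsSuperSol Ω F b α c₀ g (BNeu nv) v)
    (hus : IsSubSol Ω F b α c₀ g (BNeu nv) u0) {L0 : ℝ}
    (huh : ∀ x ∈ closure Ω, ∀ y ∈ closure Ω, u0 x - u0 y ≤ L0 * √‖x - y‖)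
    (huv : ∀ x ∈ closure Ω, u0 x ≤ v x) :
    ∃ u : EN N → ℝ, ContinuousOn u (closure Ω) ∧
      (∃ L, ∀ x ∈ closure Ω, ∀ y ∈ closure Ω, u x - u y ≤ L * √‖x - y‖) ∧
      (∀ x ∈ closure Ω, u0 x ≤ u x) ∧ (∀ x ∈ closure Ω, u x ≤ v x) ∧
      IsSubSol Ω F b α c₀ g (BNeu nv) u ∧ IsSuperSol Ω F b α c₀ g (BNeu nv) u := by
  obtain ⟨h, Dh, h0, C, hW⟩ := exists_weight hΩ
  obtain ⟨hΩo, hΩc, hΩb, ρ, hρ⟩ := hΩ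
  have hK := hΩb.isCompact_closure
  have hh0 := hW.pos
  have hnv := continuousOn_normal hρ
  have hH := oper_Hop hΩb hF0 hF2 hF3 hF4 hb
  set c : EN N → ℝ → ℝ := fun x r => c₀ x r - g x with hcdef
  have hcc : ContinuousOn (fun z : EN N × ℝ => c z.1 z.2) (closure Ω ×ˢ univ) :=
    hc.sub (hg.comp continuousOn_fst fun z hz => hz.1)
  -- bounds for the data
  obtain ⟨Mb, hMb⟩ := hK.exists_bound_of_continuousOn hb
  obtain ⟨M2, hM2⟩ := hvb
  have hu0c : ContinuousOn u0 (closure Ω) := by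
    intro x hx
    have ht : Tendsto (fun y : EN N => L0 * √‖x - y‖) (𝓝[closure Ω] x) (𝓝 0) := by
      have : Tendsto (fun y : EN N => L0 * √‖x - y‖) (𝓝 x) (𝓝 (L0 * √‖x - x‖)) :=
        (by fun_prop : Continuous fun y : EN N => L0 * √‖x - y‖).tendsto x
      simp only [sub_self, norm_zero, Real.sqrt_zero, mul_zero] at this
      exact this.mono_left nhdsWithin_le_nhds
    rw [ContinuousWithinAt, tendsto_iff_norm_sub_tendsto_zero]
    refine squeeze_zero' (Eventually.of_forall fun y => norm_nonneg _) ?_ ht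
    filter_upwards [self_mem_nhdsWithin] with y hy
    have k1 := huh x hx y hy
    have k2 := huh y hy x hx
    rw [norm_sub_rev y x] at k2
    rw [Real.norm_eq_abs, abs_le]
    constructor <;> linarith
  obtain ⟨M1, hM1⟩ := hK.exists_bound_of_continuousOn hu0c
  set M := max M1 M2 with hM
  obtain ⟨C0, hC0⟩ := (hK.prod (isCompact_Icc (a := -M) (b := M))).exists_bound_of_continuousOn
    (hcc.mono (prod_mono_right (subset_univ _)))
  obtain ⟨r0, hr0, hns⟩ := no_saturation (nv := nv) hα hF2 hF3 hF4
    (Mb := max Mb 0) (fun x hx => (hMb x hx).trans (le_max_left _ _)) (le_max_right _ _) hW hΩb hnv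
    (c := c) (M := M) (C0 := max C0 0) (le_max_right _ _)
    (fun x hx s hs => (hC0 (x, s) ⟨hx, abs_le.1 hs⟩).trans (le_max_left _ _))
  have hsr : 0 < √r0 := Real.sqrt_pos.2 hr0
  set L := (max (2 * |M| / √r0) (max 4 |L0|) + 1) / h0 ^ 2 with hLdef
  have hLh : L * h0 ^ 2 = max (2 * |M| / √r0) (max 4 |L0|) + 1 := by
    rw [hLdef, div_mul_cancel₀ _ (by positivity)]
  have hL : 0 < L := by rw [hLdef]; positivity
  have l1 : 2 * M < L * h0 ^ 2 * √r0 := by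
    have : 2 * |M| / √r0 < L * h0 ^ 2 := by
      rw [hLh]; linarith [le_max_left (2 * |M| / √r0) (max 4 |L0|)]
    rw [div_lt_iff₀ hsr] at this
    linarith [le_abs_self M]
  have l23 := le_max_right (2 * |M| / √r0) (max 4 |L0|)
  have l2 : 4 ≤ L * h0 ^ 2 := by rw [hLh]; linarith [le_max_left 4 |L0|]
  have l3 : L0 ≤ L * h0 ^ 2 := by rw [hLh]; linarith [le_max_right 4 |L0|, le_abs_self L0]
  -- the Perron family
  obtain ⟨t1, t2⟩ := tests_of_isSubSol hΩo hus
  obtain ⟨s1, s2⟩ := tests_of_isSuperSol hΩo hvs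
  have hfc : ContinuousOn (fun z : EN N × ℝ => flipC c z.1 z.2) (closure Ω ×ˢ univ) := by
    refine ContinuousOn.neg ?_
    exact hcc.comp (f := fun z : EN N × ℝ => (z.1, -z.2)) (by fun_prop)
      (fun z hz => ⟨hz.1, mem_univ _⟩)
  have s3 : ∀ x ∈ closure Ω, SuperConst Ω c v x := fun x hx =>
    superConst_of_flip (subConst_of_weak (nv := nv) hα hH.flip hΩo hfc hv.neg
      (fun x hx => flip_of_superTest (s1 x hx)) s2 x)
  have hu0 : u0 ∈ PerronFam Ω nv (Hop F b α) c h L u0 v := by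
    refine ⟨fun x _ => le_refl _, huv, fun x hx y hy => ?_, t1, fun x hx =>
      subConst_of_weak hα hH hΩo hcc hu0c.upperSemicontinuousOn t1 t2 x⟩
    refine (huh x hx y hy).trans (le_trans ?_ (omg_nonneg hW hL.le hx hy))
    exact mul_le_mul_of_nonneg_right l3 (Real.sqrt_nonneg _)
  obtain ⟨U, hU, hmax⟩ := exists_perron_max hα hW hL.le hΩo hH hnv hcc hu0
  have hUc := continuousOn_of_omg hW hL.le hU.2.2.1
  have hsT : ∀ y ∈ closure Ω, Unsat Ω h L U y → SuperTest Ω nv (Hop F b α) c U y :=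
    fun y hy hun => perron_superTest hW hL hΩo hΩb hρ hH hcc hv s1 hU hmax hy hun
  have hall := hns L hL l1 l2 U hUc (fun x hx => by
      have k1 := hU.1 x hx
      have k2 := (hU.2.1 x hx).trans (hM2 x hx)
      have k3 := (abs_le.1 (hM1 x hx)).1
      have k4 := le_max_left M1 M2
      have k5 := le_max_right M1 M2
      rw [abs_le]; constructor <;> linarith) hU.2.2.1 hU.2.2.2.1 hsT
  refine ⟨U, hUc, ⟨L, fun x hx y hy => (hU.2.2.1 x hx y hy).trans (omg_le hW hL.le hx hy)⟩,
    hU.1, hU.2.1, isSubSol_of_tests hΩo hU.2.2.2.1 hU.2.2.2.2,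
    isSuperSol_of_tests hΩo (fun y hy => hsT y hy (hall y hy)) fun y hy =>
      perron_superConst hα hW hL hΩo hΩb hρ hH hcc hv s3 hU hmax hy (hall y hy)⟩

end PerronThm

/-! ### Symmetry, constants and scaling -/

section Symmetry
variable {N : ℕ} {Ω : Set (EN N)} {nv : EN N → EN N} {α a A C₁ θ C₂ ν : ℝ}
  {F : EN N → EN N → Mat N → ℝ} {b : EN N → EN N} {c₀ : EN N → ℝ → ℝ} {g u : EN N → ℝ}

lemma matNorm_neg (X : Mat N) : matNorm (-X) = matNorm X := by
  simp only [matNorm, map_neg, norm_neg]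

lemma CondF1.flip (h : CondF1 Ω α F) : CondF1 Ω α (flipOp F) := by
  intro x hx t ht μ hμ p hp X hX
  have := h x hx t ht μ hμ (-p) (neg_ne_zero.2 hp) (-X) (isSymm_neg' hX)
  simp only [flipOp]
  rw [← smul_neg, ← smul_neg, this]; ring

lemma CondF2.flip (h : CondF2 Ω α a A F) : CondF2 Ω α a A (flipOp F) := by
  refine ⟨h.1, h.2.1, fun x hx p hp M P hM hP => ?_⟩
  have hPs : P.IsSymm := by
    have := hP.1
    rwa [Matrix.IsHermitian, Matrix.conjTranspose_eq_transpose_of_trivial] at this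
  have := h.2.2 x hx (-p) (neg_ne_zero.2 hp) (-(M + P)) P (isSymm_neg' (isSymm_add' hM hPs)) hP
  rw [norm_neg, show -(M + P) + P = -M by abel] at this
  simp only [flipOp]
  constructor <;> linarith [this.1, this.2]

lemma CondF3.flip (h : CondF3 Ω α C₁ θ F) : CondF3 Ω α C₁ θ (flipOp F) := by
  refine ⟨h.1, h.2.1, fun x hx y hy p hp X hX => ?_⟩
  have := h.2.2 x hx y hy (-p) (neg_ne_zero.2 hp) (-X) (isSymm_neg' hX)
  rw [norm_neg, matNorm_neg, abs_sub_comm] at this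
  simp only [flipOp]
  rwa [neg_sub_neg]

lemma CondF4.flip (h : CondF4 Ω α C₂ ν F) : CondF4 Ω α C₂ ν (flipOp F) := by
  refine ⟨h.1, h.2.1, fun x hx p hp q hq X hX => ?_⟩
  have := h.2.2 x hx (-p) (neg_ne_zero.2 hp) (-q) (by rwa [norm_neg, norm_neg]) (-X)
    (isSymm_neg' hX)
  rw [norm_neg, norm_neg, matNorm_neg, abs_sub_comm, ← neg_add] at this
  simp only [flipOp]
  rwa [neg_sub_neg]

lemma flipOp_flipOp (F : EN N → EN N → Mat N → ℝ) : flipOp (flipOp F) = F := by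
  funext x p X; simp [flipOp]

/-- If `u` is a subsolution, then `-u` is a supersolution of the flipped problem. -/
lemma IsSubSol.flip (h : IsSubSol Ω F b α c₀ g (BNeu nv) u) :
    IsSuperSol Ω (flipOp F) b α (flipC c₀) (fun x => -g x) (BNeu nv) (fun x => -u x) := by
  have hneg : ∀ {φ : EN N → ℝ} {x : EN N},
      IsLocalMinOn (fun z => -u z - φ z) (closure Ω) x →
      IsLocalMaxOn (fun z => u z - (fun y => -φ y) z) (closure Ω) x := fun hm => by
    filter_upwards [hm] with z hz; linarith
  have hk' : ∀ {x : EN N} {k : ℝ}, (∀ᶠ z in 𝓝[closure Ω] x, -u z = k) →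
      ∀ᶠ z in 𝓝[closure Ω] x, u z = -k := fun hk => by
    filter_upwards [hk] with z hz; linarith
  refine ⟨fun x hx φ hφ hm hg => ?_, fun x hx k hk => ?_, fun x hx φ hφ hm hg => ?_,
    fun x hx k hk => ?_⟩
  · have := h.1 x hx (fun z => -φ z) hφ.neg (hneg hm) (by rw [gradient_neg']; simpa using hg)
    rw [gradient_neg', hess_neg', norm_neg, inner_neg_right] at this
    simp only [flipOp, flipC, neg_neg]
    linarith
  · have := h.2.1 x hx (-k) (hk' hk)
    simp only [flipC]; linarith
  · have := h.2.2.1 x hx (fun z => -φ z) hφ.neg (hneg hm) (by rw [gradient_neg']; simpa using hg)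
    rw [gradient_neg', hess_neg', norm_neg, inner_neg_right] at this
    simp only [BNeu, inner_neg_left, flipOp, flipC, neg_neg] at this ⊢
    rcases min_le_iff.1 this with h1 | h1
    · exact le_max_of_le_left (by linarith)
    · exact le_max_of_le_right (by linarith)
  · exact le_max_of_le_right (by simp [BNeu])

/-- If `u` is a supersolution, then `-u` is a subsolution of the flipped problem. -/
lemma IsSuperSol.flip (h : IsSuperSol Ω F b α c₀ g (BNeu nv) u) :
    IsSubSol Ω (flipOp F) b α (flipC c₀) (fun x => -g x) (BNeu nv) (fun x => -u x) := by
  have hneg : ∀ {φ : EN N → ℝ} {x : EN N},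
      IsLocalMaxOn (fun z => -u z - φ z) (closure Ω) x →
      IsLocalMinOn (fun z => u z - (fun y => -φ y) z) (closure Ω) x := fun hm => by
    filter_upwards [hm] with z hz; linarith
  have hk' : ∀ {x : EN N} {k : ℝ}, (∀ᶠ z in 𝓝[closure Ω] x, -u z = k) →
      ∀ᶠ z in 𝓝[closure Ω] x, u z = -k := fun hk => by
    filter_upwards [hk] with z hz; linarith
  refine ⟨fun x hx φ hφ hm hg => ?_, fun x hx k hk => ?_, fun x hx φ hφ hm hg => ?_,
    fun x hx k hk => ?_⟩
  · have := h.1 x hx (fun z => -φ z) hφ.neg (hneg hm) (by rw [gradient_neg']; simpa using hg)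
    rw [gradient_neg', hess_neg', norm_neg, inner_neg_right] at this
    simp only [flipOp, flipC, neg_neg]
    linarith
  · have := h.2.1 x hx (-k) (hk' hk)
    simp only [flipC]; linarith
  · have := h.2.2.1 x hx (fun z => -φ z) hφ.neg (hneg hm) (by rw [gradient_neg']; simpa using hg)
    rw [gradient_neg', hess_neg', norm_neg, inner_neg_right] at this
    simp only [BNeu, inner_neg_left, flipOp, flipC, neg_neg] at this ⊢
    rcases le_max_iff.1 this with h1 | h1
    · exact min_le_of_left_le (by linarith)
    · exact min_le_of_right_le (by linarith)
  · exact min_le_of_right_le (by simp [BNeu])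

lemma IsSubSol.mono_rhs {g' : EN N → ℝ}
    (hle : ∀ x ∈ closure Ω, g' x ≤ g x) (h : IsSubSol Ω F b α c₀ g (BNeu nv) u) :
    IsSubSol Ω F b α c₀ g' (BNeu nv) u := by
  refine ⟨fun x hx φ hφ hm hg => (hle x (subset_closure hx)).trans (h.1 x hx φ hφ hm hg),
    fun x hx k hk => (hle x (subset_closure hx)).trans (h.2.1 x hx k hk),
    fun x hx φ hφ hm hg => ?_, fun x hx k hk => min_le_of_right_le (by simp [BNeu])⟩
  refine le_trans (min_le_min_right _ ?_) (h.2.2.1 x hx φ hφ hm hg)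
  linarith [hle x (frontier_subset_closure hx)]

/-- A constant is a subsolution as soon as the zeroth order inequality holds. -/
lemma isSubSol_const {ρ : EN N → ℝ} (hΩ : IsOpen Ω) (hρ : IsC2DefiningFun Ω nv ρ)
    (hH : Oper Ω α (Hop F b α)) {k : ℝ} (hk : ∀ x ∈ Ω, g x ≤ c₀ x k) :
    IsSubSol Ω F b α c₀ g (BNeu nv) (fun _ => k) := by
  have h0 : ∀ x : EN N, gradient (fun _ : EN N => k) x = 0 := fun x => gradient_const x k
  refine isSubSol_of_tests hΩ (fun x hx => ?_) (fun x _ hx _ => ?_)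
  · refine subTest_of_classical hΩ hρ hH contDiff_const (fun _ hg => absurd (h0 x) hg)
      (fun _ => ?_) hx
    rw [h0, inner_zero_left]
  · have := hk x hx
    simp only; linarith

end Symmetry

section Power
variable {α : ℝ}

lemma continuous_abs_rpow_mul (hα : -1 < α) : Continuous fun r : ℝ => |r| ^ α * r := by
  have hα1 : 0 < α + 1 := by linarith
  rw [continuous_iff_continuousAt]
  intro r
  rcases eq_or_ne r 0 with rfl | hr
  · rw [ContinuousAt, mul_zero]
    have ht : Tendsto (fun r : ℝ => |r| ^ (α + 1)) (𝓝 0) (𝓝 0) := by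
      have : Tendsto (fun r : ℝ => |r| ^ (α + 1)) (𝓝 0) (𝓝 (|0| ^ (α + 1))) :=
        ((continuous_abs.rpow_const fun _ => Or.inr hα1.le).tendsto 0)
      rwa [abs_zero, Real.zero_rpow hα1.ne'] at this
    refine squeeze_zero_norm (fun r => ?_) ht
    rw [Real.norm_eq_abs, abs_mul, abs_of_nonneg (by positivity)]
    rcases eq_or_ne r 0 with rfl | hr
    · simp [Real.zero_rpow hα1.ne']
    · rw [Real.rpow_add_one (abs_ne_zero.2 hr)]
  · exact (continuous_abs.continuousAt.rpow_const (Or.inl (abs_ne_zero.2 hr))).mul continuousAt_id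

/-- A multiple `t` for which the zeroth-order gain `κ |t r| ^ α (t r)` exceeds `G` when `r ≥ m`. -/
lemma exists_scale (hα : -1 < α) {κ m G : ℝ} (hκ : 0 < κ) (hm : 0 < m) (hG : 0 ≤ G) :
    ∃ t > 0, ∀ r, m ≤ r → G ≤ κ * (|t * r| ^ α * (t * r)) := by
  have hα1 : 0 < α + 1 := by linarith
  set s := ((G + 1) / κ) ^ (1 / (α + 1)) with hs
  have hs0 : 0 < s := by positivity
  refine ⟨s / m, by positivity, fun r hr => ?_⟩
  have hr0 : 0 < r := by linarith
  have h1 : s ≤ s / m * r := by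
    rw [div_mul_eq_mul_div, le_div_iff₀ hm]
    exact mul_le_mul_of_nonneg_left hr hs0.le
  have h2 : 0 < s / m * r := by positivity
  rw [abs_of_pos h2, ← Real.rpow_add_one h2.ne']
  have h3 : s ^ (α + 1) ≤ (s / m * r) ^ (α + 1) := Real.rpow_le_rpow hs0.le h1 hα1.le
  have h4 : s ^ (α + 1) = (G + 1) / κ := by
    rw [hs, ← Real.rpow_mul (by positivity), one_div, inv_mul_cancel₀ hα1.ne', Real.rpow_one]
  rw [h4, div_le_iff₀ hκ] at h3
  linarith

lemma abs_rpow_mul_scale (t r : ℝ) :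
    |t⁻¹| ^ α * t⁻¹ * (|r| ^ α * r) = |t⁻¹ * r| ^ α * (t⁻¹ * r) := by
  rw [abs_mul, Real.mul_rpow (abs_nonneg _) (abs_nonneg _)]; ring

end Power

section Scaling
variable {N : ℕ} {Ω : Set (EN N)} {nv : EN N → EN N} {α : ℝ}
  {F : EN N → EN N → Mat N → ℝ} {b : EN N → EN N} {c : EN N → ℝ} {g v : EN N → ℝ}

/-- By homogeneity a large multiple of a positive supersolution for a larger `lam'` is a
supersolution of the problem with parameter `lam` and right-hand side `g`. -/
lemma IsSuperSol.scale (hF1 : CondF1 Ω α F) {lam lam' t : ℝ} (ht : 0 < t)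
    (h : IsSuperSol Ω F b α (fun x r => (c x + lam') * |r| ^ α * r) (fun _ => 0) (BNeu nv) v)
    (hbig : ∀ x ∈ closure Ω, -g x ≤ (lam' - lam) * (|t * v x| ^ α * (t * v x))) :
    IsSuperSol Ω F b α (fun x r => (c x + lam) * |r| ^ α * r) g (BNeu nv) (fun x => t * v x) := by
  have hti : 0 < t⁻¹ := inv_pos.2 ht
  have hs : 0 < |t⁻¹| ^ α * t⁻¹ := by positivity
  have hmin : ∀ {φ : EN N → ℝ} {x : EN N},
      IsLocalMinOn (fun z => t * v z - φ z) (closure Ω) x →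
      IsLocalMinOn (fun z => v z - (fun y => t⁻¹ * φ y) z) (closure Ω) x := fun {φ x} hm => by
    filter_upwards [hm] with z hz
    have h1 : ∀ y, v y - t⁻¹ * φ y = t⁻¹ * (t * v y - φ y) := fun y => by field_simp
    simp only [h1]
    exact mul_le_mul_of_nonneg_left hz hti.le
  have hop : ∀ x ∈ closure Ω, ∀ p : EN N, p ≠ 0 → ∀ X : Mat N, X.IsSymm →
      F x (t⁻¹ • p) (t⁻¹ • X) + ⟪b x, t⁻¹ • p⟫ * ‖t⁻¹ • p‖ ^ α + (c x + lam') * |v x| ^ α * v x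
        = |t⁻¹| ^ α * t⁻¹ * (F x p X + ⟪b x, p⟫ * ‖p‖ ^ α
            + (c x + lam') * (|t * v x| ^ α * (t * v x))) := fun x hx p hp X hX => by
    rw [hF1 x hx _ hti.ne' _ hti.le p hp X hX, inner_smul_right, norm_smul, Real.norm_eq_abs,
      Real.mul_rpow (abs_nonneg _) (norm_nonneg _)]
    have h2 := abs_rpow_mul_scale (α := α) t (t * v x)
    rw [inv_mul_cancel_left₀ ht.ne'] at h2
    rw [mul_add _ _ ((c x + lam') * _), mul_left_comm _ (c x + lam'), h2]
    ring
  refine ⟨fun x hx φ hφ hm hg => ?_, fun x hx k hk => ?_, fun x hx φ hφ hm hg => ?_,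
    fun x hx k hk => le_max_of_le_right (by simp [BNeu])⟩
  · have hxc := subset_closure hx
    have h1 := h.1 x hx (fun z => t⁻¹ * φ z) (contDiff_const.mul hφ) (hmin hm) (by
      rw [gradient_const_mul' hφ]; exact smul_ne_zero hti.ne' hg)
    rw [gradient_const_mul' hφ, hess_const_mul' hφ, hop x hxc _ hg _ (hess_isSymm hφ x)] at h1
    have h2 := nonpos_of_mul_nonpos_right h1 hs
    have h3 := hbig x hxc
    simp only
    rw [mul_assoc]
    linarith
  · have hxc := subset_closure hx
    have hkx : t * v x = k := hk.self_of_nhdsWithin hxc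
    have h1 := h.2.1 x hx (t⁻¹ * k) (by
      filter_upwards [hk] with z hz
      rw [← hz, inv_mul_cancel_left₀ ht.ne'])
    simp only at h1 ⊢
    rw [mul_assoc, ← abs_rpow_mul_scale, mul_left_comm] at h1
    have h2 := nonpos_of_mul_nonpos_right h1 hs
    have h3 := hbig x hxc
    rw [hkx] at h3
    rw [mul_assoc]
    linarith
  · have hxc := frontier_subset_closure hx
    have h1 := h.2.2.1 x hx (fun z => t⁻¹ * φ z) (contDiff_const.mul hφ) (hmin hm) (by
      rw [gradient_const_mul' hφ]; exact smul_ne_zero hti.ne' hg)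
    rw [gradient_const_mul' hφ, hess_const_mul' hφ, hop x hxc _ hg _ (hess_isSymm hφ x)] at h1
    have h3 := hbig x hxc
    rcases le_max_iff.1 h1 with h1 | h1
    · refine le_max_of_le_left ?_
      have h2 := nonpos_of_mul_nonpos_right (sub_nonneg.1 h1) hs
      simp only
      rw [mul_assoc (c x + lam)]
      linarith
    · refine le_max_of_le_right ?_
      simp only [BNeu, real_inner_smul_left] at h1 ⊢
      exact nonneg_of_mul_nonneg_right h1 hti

end Scaling

/-! ### Existence for the Neumann problem -/

lemma flipC_odd {N : ℕ} (k : EN N → ℝ) (α : ℝ) :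
    flipC (fun x r => k x * |r| ^ α * r) = fun x r => k x * |r| ^ α * r := by
  funext x r
  simp only [flipC, abs_neg]; ring

lemma lowerSemicontinuousOn_const_mul {N : ℕ} {s : Set (EN N)} {f : EN N → ℝ} {t : ℝ} (ht : 0 < t)
    (hf : LowerSemicontinuousOn f s) : LowerSemicontinuousOn (fun x => t * f x) s := by
  intro x hx y hy
  have : t⁻¹ * y < f x := by rwa [inv_mul_lt_iff₀ ht]
  filter_upwards [hf x hx _ this] with z hz
  exact (inv_mul_lt_iff₀ ht).1 hz

/-- final Theorem: existence of a viscosity solution of the Neumann problem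
for any continuous right-hand side, when `λ < min{λ̄, λ̲}`. -/
theorem stmt18 {N : ℕ} (Ω : Set (EN N)) (nv : EN N → EN N) (hΩ : IsC2Domain Ω nv)
    (α a A C₁ θ C₂ ν : ℝ) (hα : -1 < α)
    (F : EN N → EN N → Mat N → ℝ)
    (hF1 : CondF1 Ω α F) (hF2 : CondF2 Ω α a A F)
    (hF3 : CondF3 Ω α C₁ θ F) (hF4 : CondF4 Ω α C₂ ν F)
    (b : EN N → EN N) (c : EN N → ℝ)
    (hbc : ContinuousOn b (closure Ω)) (hcc : ContinuousOn c (closure Ω))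
    (lam : ℝ)
    (hlam : lam < min (sSup (lamBarSet Ω nv F b c α)) (sSup (lamLowSet Ω nv F b c α)))
    (g : EN N → ℝ) (hgc : ContinuousOn g (closure Ω)) :
    ∃ u : EN N → ℝ, ContinuousOn u (closure Ω) ∧
      IsSubSol Ω F b α (fun x r => (c x + lam) * |r| ^ α * r) g (BNeu nv) u ∧
      IsSuperSol Ω F b α (fun x r => (c x + lam) * |r| ^ α * r) g (BNeu nv) u := by
  have hΩ' := hΩ
  obtain ⟨hΩo, hΩc, hΩb, ρ, hρ⟩ := hΩ'
  have hK := hΩb.isCompact_closure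
  have hKne : (closure Ω).Nonempty := hΩc.nonempty.mono subset_closure
  have hF0 : ∀ {F : EN N → EN N → Mat N → ℝ}, CondF1 Ω α F →
      ∀ x ∈ closure Ω, ∀ p, p ≠ 0 → F x p 0 = 0 := fun {F} hF x hx p hp => by
    have := hF x hx 1 one_ne_zero 0 le_rfl p hp 0 Matrix.isSymm_zero
    simpa using this
  have hH := oper_Hop hΩb (hF0 hF1) hF2 hF3 hF4 hbc
  have hH' := oper_Hop hΩb (hF0 hF1.flip) hF2.flip hF3.flip hF4.flip hbc
  obtain ⟨Kc, hKc⟩ := hK.exists_bound_of_continuousOn hcc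
  obtain ⟨G, hG⟩ := hK.exists_bound_of_continuousOn hgc
  have hG0 : 0 ≤ G := (norm_nonneg _).trans (hG _ hKne.some_mem)
  -- the constants `1` and `-1` show that both admissible sets are nonempty
  have hm1 : ∀ {F : EN N → EN N → Mat N → ℝ}, Oper Ω α (Hop F b α) →
      IsSubSol Ω F b α (fun x r => (c x + -Kc) * |r| ^ α * r) (fun _ => 0) (BNeu nv)
        (fun _ => -1) := fun {F} h => isSubSol_const hΩo hρ h fun x hx => by
    have := (abs_le.1 (hKc x (subset_closure hx))).2
    simp only [abs_neg, abs_one, Real.one_rpow]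
    linarith
  have hne1 : (lamBarSet Ω nv F b c α).Nonempty := by
    refine ⟨-Kc, fun _ => 1, continuousOn_const.lowerSemicontinuousOn, fun _ _ => one_pos,
      ⟨1, fun _ _ => le_rfl⟩, ?_⟩
    have := (hm1 hH').flip
    simpa only [flipOp_flipOp, flipC_odd (fun x => c x + -Kc) α, neg_zero, neg_neg] using this
  have hne2 : (lamLowSet Ω nv F b c α).Nonempty :=
    ⟨-Kc, fun _ => -1, continuousOn_const.upperSemicontinuousOn, fun _ _ => by norm_num,
      ⟨-1, fun _ _ => le_rfl⟩, hm1 hH⟩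
  obtain ⟨lam1, ⟨v, hvl, hv0, ⟨Mv, hMv⟩, hvs⟩, hlam1⟩ :=
    exists_lt_of_lt_csSup hne1 (lt_min_iff.1 hlam).1
  obtain ⟨lam2, ⟨w, hwl, hw0, ⟨Mw, hMw⟩, hws⟩, hlam2⟩ :=
    exists_lt_of_lt_csSup hne2 (lt_min_iff.1 hlam).2
  have hcont : ContinuousOn (fun z : EN N × ℝ => (c z.1 + lam) * |z.2| ^ α * z.2)
      (closure Ω ×ˢ univ) := by
    simp only [mul_assoc]
    exact ((hcc.comp continuousOn_fst fun z hz => hz.1).add continuousOn_const).mul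
      ((continuous_abs_rpow_mul hα).comp continuous_snd).continuousOn
  -- a nonpositive Hölder subsolution, from the flipped problem with right-hand side `-G`
  obtain ⟨u1, hu1n, ⟨L1, hu1h⟩, hu1s⟩ : ∃ u1 : EN N → ℝ, (∀ x ∈ closure Ω, u1 x ≤ 0) ∧
      (∃ L, ∀ x ∈ closure Ω, ∀ y ∈ closure Ω, u1 x - u1 y ≤ L * √‖x - y‖) ∧
      IsSubSol Ω F b α (fun x r => (c x + lam) * |r| ^ α * r) g (BNeu nv) u1 := by
    have hwl' : LowerSemicontinuousOn (fun x => -w x) (closure Ω) := hwl.neg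
    obtain ⟨x0, hx0, hmin⟩ := hwl'.exists_isMinOn hKne hK
    obtain ⟨t, ht, hbig⟩ := exists_scale hα (sub_pos.2 hlam2) (neg_pos.2 (hw0 x0 hx0)) hG0
    have hws' := hws.flip
    simp only [flipC_odd (fun x => c x + lam2) α, neg_zero] at hws'
    have hsup := hws'.scale (g := fun _ => -G) (lam := lam) hF1.flip ht (fun x hx => by
      rw [neg_neg]; exact hbig _ (hmin hx))
    obtain ⟨u, -, ⟨L, hL⟩, hu0, -, -, hus⟩ := perron_holder (u0 := fun _ => 0) (L0 := 0)
      hΩ hα (hF0 hF1.flip) hF2.flip hF3.flip hF4.flip hbc hcont continuousOn_const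
      (lowerSemicontinuousOn_const_mul ht hwl') ⟨t * -Mw, fun x hx =>
        mul_le_mul_of_nonneg_left (neg_le_neg (hMw x hx)) ht.le⟩ hsup
      (isSubSol_const hΩo hρ hH' fun x _ => by simpa using hG0)
      (fun x _ y _ => by simp)
      (fun x hx => (mul_pos ht (neg_pos.2 (hw0 x hx))).le)
    have hus' := hus.flip
    simp only [flipC_odd (fun x => c x + lam) α, flipOp_flipOp, neg_neg] at hus'
    refine ⟨fun x => -u x, fun x hx => neg_nonpos.2 (hu0 x hx), ⟨L, fun x hx y hy => ?_⟩,
      hus'.mono_rhs fun x hx => (le_abs_self _).trans (hG x hx)⟩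
    have := hL y hy x hx
    rw [norm_sub_rev] at this
    linarith
  -- a positive supersolution above it
  obtain ⟨x0, hx0, hmin⟩ := hvl.exists_isMinOn hKne hK
  obtain ⟨t, ht, hbig⟩ := exists_scale hα (sub_pos.2 hlam1) (hv0 x0 hx0) hG0
  have hsup := hvs.scale (g := g) (lam := lam) hF1 ht (fun x hx =>
    ((neg_le_abs _).trans (hG x hx)).trans (hbig _ (hmin hx)))
  obtain ⟨u, huc, -, -, -, h1, h2⟩ := perron_holder hΩ hα (hF0 hF1) hF2 hF3 hF4 hbc hcont hgc
    (lowerSemicontinuousOn_const_mul ht hvl) ⟨t * Mv, fun x hx =>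
      mul_le_mul_of_nonneg_left (hMv x hx) ht.le⟩ hsup hu1s hu1h
    (fun x hx => (hu1n x hx).trans (mul_pos ht (hv0 x hx)).le)
  exact ⟨u, huc, h1, h2⟩
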